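/- arXiv:2209.14726 — 13 statements merged into one kernel-verified Lean document; each statement's English description precedes it below -/
import Mathlib

section
/- Let f be a continuous probability density on ℝ with ∫_ℝ e^x f(x) dx = 1, and let σ : (0,∞) → (0,∞) be twice differentiable with C(K) = C_BS(K, σ(K)) for all K > 0 and σ'(1) = 0. Then σ''(1) = √(2π)·e^{σ(1)²/8}·( f(0) − (2π)^{-1/2} σ(1)^{-1} e^{-σ(1)²/8} ). In particular, if f(0) < (2π)^{-1/2} σ(1)^{-1} e^{-σ(1)²/8}, then σ''(1) < 0 and, since σ'(1) = 0, the function σ has a strict local maximum at K = 1. -/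
open MeasureTheory Filter

/-- Standard normal cumulative distribution function. -/
noncomputable def stdNormalCDF (x : ℝ) : ℝ :=
  (Real.sqrt (2 * Real.pi))⁻¹ * ∫ t in Set.Iic x, Real.exp (-t ^ 2 / 2)

/-- Black–Scholes call price with `S₀ = 1` and total volatility `σ`. -/
noncomputable def callBS (K σ : ℝ) : ℝ :=
  stdNormalCDF (-Real.log K / σ + σ / 2) - K * stdNormalCDF (-Real.log K / σ - σ / 2)

/-- Call price associated to a log-price density `f` (with `S₀ = 1`). -/
noncomputable def callPrice (f : ℝ → ℝ) (K : ℝ) : ℝ :=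
  ∫ x in Set.Ioi (Real.log K), (Real.exp x - K) * f x

theorem hasDerivAt_Iic_aux (g : ℝ → ℝ) (hc : Continuous g) (hi : Integrable g) (y : ℝ) :
    HasDerivAt (fun y => ∫ x in Set.Iic y, g x) (g y) y := by
  have h : (fun y => ∫ x in Set.Iic y, g x)
      = fun y => (∫ x in Set.Iic (0:ℝ), g x) + ∫ x in (0:ℝ)..y, g x := by
    funext y
    rw [← intervalIntegral.integral_Iic_sub_Iic hi.integrableOn hi.integrableOn]
    ring
  rw [h]
  exact (hc.integral_hasStrictDerivAt 0 y).hasDerivAt.const_add _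

theorem hasDerivAt_Ioi_aux (g : ℝ → ℝ) (hc : Continuous g) (hi : Integrable g) (y : ℝ) :
    HasDerivAt (fun y => ∫ x in Set.Ioi y, g x) (-g y) y := by
  have h : (fun y => ∫ x in Set.Ioi y, g x)
      = fun y => (∫ x, g x) - ∫ x in Set.Iic y, g x := by
    funext y
    rw [← intervalIntegral.integral_Iic_add_Ioi (b := y) hi.integrableOn hi.integrableOn]
    ring
  rw [h]
  exact (hasDerivAt_Iic_aux g hc hi y).const_sub _

theorem hasDerivAt_cdf_aux (y : ℝ) :
    HasDerivAt stdNormalCDF ((Real.sqrt (2 * Real.pi))⁻¹ * Real.exp (-y ^ 2 / 2)) y := by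
  have hi : Integrable (fun t : ℝ => Real.exp (-t ^ 2 / 2)) := by
    have := integrable_exp_neg_mul_sq (b := 1/2) (by norm_num)
    refine this.congr (Eventually.of_forall fun t => ?_)
    simp only
    congr 1; ring
  exact (hasDerivAt_Iic_aux _ (by fun_prop) hi y).const_mul _

theorem hasDerivAt_callPrice_aux (f : ℝ → ℝ) (hc : Continuous f) (hi : Integrable f)
    (hr : Integrable (fun x => Real.exp x * f x)) (K : ℝ) (hK : 0 < K) :
    HasDerivAt (callPrice f) (-∫ x in Set.Ioi (Real.log K), f x) K := by
  have h : callPrice f = fun K => (∫ x in Set.Ioi (Real.log K), Real.exp x * f x)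
      - K * ∫ x in Set.Ioi (Real.log K), f x := by
    funext K
    unfold callPrice
    rw [← integral_const_mul, ← integral_sub hr.integrableOn (hi.const_mul K).integrableOn]
    congr 1; funext x; ring
  rw [h]
  have hl := Real.hasDerivAt_log hK.ne'
  have h1 := (hasDerivAt_Ioi_aux _ (by fun_prop) hr (Real.log K)).comp K hl
  have h2 := (hasDerivAt_Ioi_aux _ hc hi (Real.log K)).comp K hl
  refine (h1.sub ((hasDerivAt_id K).mul h2)).congr_deriv ?_
  simp only [id, Function.comp, Real.exp_log hK]
  field_simp
  ring

theorem hasDerivAt_callBS_aux (σ : ℝ → ℝ) (K s : ℝ) (hK : 0 < K) (hs : 0 < σ K)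
    (hd : HasDerivAt σ s K) :
    HasDerivAt (fun K => callBS K (σ K))
      (-stdNormalCDF (-Real.log K / σ K - σ K / 2) +
        (Real.sqrt (2 * Real.pi))⁻¹ * Real.exp (-(-Real.log K / σ K + σ K / 2) ^ 2 / 2) * s) K := by
  have hl := (Real.hasDerivAt_log hK.ne').neg.div hd hs.ne'
  have h1 := (hasDerivAt_cdf_aux _).comp K (hl.add (hd.div_const 2))
  have h2 := (hasDerivAt_cdf_aux _).comp K (hl.sub (hd.div_const 2))
  refine (h1.sub ((hasDerivAt_id K).mul h2)).congr_deriv ?_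
  have e : Real.exp (-(-Real.log K / σ K + σ K / 2) ^ 2 / 2)
      = K * Real.exp (-(-Real.log K / σ K - σ K / 2) ^ 2 / 2) := by
    conv_rhs => enter [1]; rw [← Real.exp_log hK]
    rw [← Real.exp_add]
    congr 1
    field_simp
    ring
  simp only [id, Function.comp, Pi.add_apply, Pi.sub_apply, Pi.neg_apply, Pi.div_apply] 
  rw [e]
  field_simp
  ring

theorem strict_max_aux (σ : ℝ → ℝ) (hd : ∀ K, 0 < K → DifferentiableAt ℝ σ K)
    (hd2 : DifferentiableAt ℝ (deriv σ) 1) (h1 : deriv σ 1 = 0) (hn : deriv (deriv σ) 1 < 0) :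
    ∃ ε > (0 : ℝ), ∀ K : ℝ, K ≠ 1 → |K - 1| < ε → σ K < σ 1 := by
  have hs := hd2.hasDerivAt.tendsto_slope
  have he := hs.eventually_lt_const hn
  rw [eventually_nhdsWithin_iff, Metric.eventually_nhds_iff] at he
  obtain ⟨ε, hε, he⟩ := he
  have key : ∀ x, x ≠ 1 → |x - 1| < ε → deriv σ x / (x - 1) < 0 := by
    intro x hx hxe
    have := he (y := x) (by rwa [Real.dist_eq]) hx
    rwa [slope_def_field, h1, sub_zero] at this
  refine ⟨min ε 1, lt_min hε one_pos, fun K hK hKe => ?_⟩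
  have hKε := hKe.trans_le (min_le_left _ _)
  have hK1 := hKe.trans_le (min_le_right _ _)
  rw [abs_lt] at hKε hK1
  have hK0 : 0 < K := by linarith
  rcases lt_or_gt_of_ne hK with h | h
  · have : StrictMonoOn σ (Set.Icc K 1) := by
      apply strictMonoOn_of_deriv_pos (convex_Icc _ _)
      · intro x hx
        exact (hd x (hK0.trans_le hx.1)).continuousAt.continuousWithinAt
      · intro x hx
        rw [interior_Icc] at hx
        have := key x hx.2.ne (by rw [abs_lt]; constructor <;> linarith [hx.1, hx.2])
        rcases div_neg_iff.1 this with h | h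
        · exact h.1
        · linarith [h.2, hx.2]
    exact this ⟨le_rfl, h.le⟩ ⟨h.le, le_rfl⟩ h
  · have : StrictAntiOn σ (Set.Icc 1 K) := by
      apply strictAntiOn_of_deriv_neg (convex_Icc _ _)
      · intro x hx
        exact (hd x (one_pos.trans_le hx.1)).continuousAt.continuousWithinAt
      · intro x hx
        rw [interior_Icc] at hx
        have := key x hx.1.ne' (by rw [abs_lt]; constructor <;> linarith [hx.1, hx.2])
        rcases div_neg_iff.1 this with h | h
        · linarith [h.2, hx.1]
        · exact h.1
    exact this ⟨le_rfl, h.le⟩ ⟨h.le, le_rfl⟩ h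

/-- **ATM curvature formula.** If `σ'(1) = 0`, then
`σ''(1) = √(2π)·e^{σ(1)²/8}·(f(0) − (2π)^{-1/2}σ(1)^{-1}e^{-σ(1)²/8})`; in particular the
dip-at-zero condition implies `σ''(1) < 0` and a strict local maximum of `σ` at `K = 1`. -/
theorem atm_second_derivative_formula
    (f : ℝ → ℝ) (σ : ℝ → ℝ)
    (hf_cont : Continuous f) (hf_nonneg : ∀ x, 0 ≤ f x)
    (hf_int : Integrable f) (hf_prob : ∫ x, f x = 1)
    (hf_rn : Integrable (fun x => Real.exp x * f x))
    (hf_mart : ∫ x, Real.exp x * f x = 1)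
    (hσ_pos : ∀ K, 0 < K → 0 < σ K)
    (hσ_diff : ∀ K, 0 < K → DifferentiableAt ℝ σ K)
    (hσ_diff2 : ∀ K, 0 < K → DifferentiableAt ℝ (deriv σ) K)
    (hIV : ∀ K, 0 < K → callPrice f K = callBS K (σ K))
    (hσ'1 : deriv σ 1 = 0) :
    deriv (deriv σ) 1 =
      Real.sqrt (2 * Real.pi) * Real.exp ((σ 1) ^ 2 / 8) *
        (f 0 - (Real.sqrt (2 * Real.pi) * σ 1)⁻¹ * Real.exp (-(σ 1) ^ 2 / 8)) ∧
    (f 0 < (Real.sqrt (2 * Real.pi) * σ 1)⁻¹ * Real.exp (-(σ 1) ^ 2 / 8) →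
      deriv (deriv σ) 1 < 0 ∧
      ∃ ε > (0 : ℝ), ∀ K : ℝ, K ≠ 1 → |K - 1| < ε → σ K < σ 1) := by
  have hs1 := hσ_pos 1 one_pos
  have hd1 : HasDerivAt σ 0 1 := hσ'1 ▸ (hσ_diff 1 one_pos).hasDerivAt
  have hd2 := (hσ_diff2 1 one_pos).hasDerivAt
  have hpos : ∀ᶠ K in nhds (1:ℝ), 0 < K := lt_mem_nhds one_pos
  have hfirst : ∀ K : ℝ, 0 < K → -(∫ x in Set.Ioi (Real.log K), f x) =
      -stdNormalCDF (-Real.log K / σ K - σ K / 2) +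
        (Real.sqrt (2 * Real.pi))⁻¹ * Real.exp (-(-Real.log K / σ K + σ K / 2) ^ 2 / 2)
          * deriv σ K := by
    intro K hK
    have a := hasDerivAt_callPrice_aux f hf_cont hf_int hf_rn K hK
    have b := hasDerivAt_callBS_aux σ K _ hK (hσ_pos K hK) (hσ_diff K hK).hasDerivAt
    refine a.unique (b.congr_of_eventuallyEq ?_)
    filter_upwards [lt_mem_nhds hK] with x hx using hIV x hx
  have hl := Real.hasDerivAt_log (one_ne_zero (α := ℝ))
  have L := ((hasDerivAt_Ioi_aux f hf_cont hf_int (Real.log 1)).comp 1 hl).neg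
  have hq := hl.neg.div hd1 hs1.ne'
  have R1 := ((hasDerivAt_cdf_aux _).comp 1 (hq.sub (hd1.div_const 2))).neg
  have R2 := ((((hq.add (hd1.div_const 2)).pow 2).neg.div_const 2).exp.const_mul
    (Real.sqrt (2 * Real.pi))⁻¹).mul hd2
  have R := R1.add R2
  have hEq := L.unique (R.congr_of_eventuallyEq (by
    filter_upwards [hpos] with x hx using hfirst x hx))
  have hform : deriv (deriv σ) 1 =
      Real.sqrt (2 * Real.pi) * Real.exp ((σ 1) ^ 2 / 8) *
        (f 0 - (Real.sqrt (2 * Real.pi) * σ 1)⁻¹ * Real.exp (-(σ 1) ^ 2 / 8)) := by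
    have e1 : -(-(σ 1 / 2)) ^ 2 / 2 = -(σ 1 ^ 2 / 8) := by ring
    have e2 : -(σ 1 / 2) ^ 2 / 2 = -(σ 1 ^ 2 / 8) := by ring
    have e3 : -(σ 1) ^ 2 / 8 = -(σ 1 ^ 2 / 8) := by ring
    simp [hσ'1, e1, e2] at hEq
    rw [e3, hEq, Real.exp_neg]
    have hE := (Real.exp_pos (σ 1 ^ 2 / 8)).ne'
    have hP : Real.sqrt (2 * Real.pi) ≠ 0 := by positivity
    generalize Real.exp (σ 1 ^ 2 / 8) = E at *
    rw [Real.sqrt_mul (by norm_num)] at *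
    field_simp
    ring
  refine ⟨hform, fun hlt => ?_⟩
  have hneg : deriv (deriv σ) 1 < 0 := by
    rw [hform]
    exact mul_neg_of_pos_of_neg (by positivity) (by linarith)
  exact ⟨hneg, strict_max_aux σ hσ_diff (hσ_diff2 1 one_pos) hσ'1 hneg⟩
end

section
/- Let f be an integrable probability density on ℝ satisfying the geometric symmetry condition e^{x/2} f(x) = e^{-x/2} f(-x) for all x ∈ ℝ, and define the call price C(K) = ∫_{log K}^∞ (e^x − K) f(x) dx and the put price P(K) = ∫_{-∞}^{log K} (K − e^x) f(x) dx for K > 0. Then the put–call symmetry C(K) = K · P(1/K) holds for all K > 0. -/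
open MeasureTheory

/-- Put price associated to a log-price density `f` (with `S₀ = 1`). -/
noncomputable def putPrice (f : ℝ → ℝ) (K : ℝ) : ℝ :=
  ∫ x in Set.Iio (Real.log K), (K - Real.exp x) * f x

/-- **Put–call symmetry.** Under geometric symmetry of the density,
`C(K) = K · P(1/K)` for all `K > 0`. -/
theorem put_call_symmetry_of_geometric_symmetry
    (f : ℝ → ℝ)
    (hf_meas : Measurable f) (hf_nonneg : ∀ x, 0 ≤ f x)
    (hf_int : Integrable f) (hf_prob : ∫ x, f x = 1)
    (hsym : ∀ x : ℝ, Real.exp (x / 2) * f x = Real.exp (-x / 2) * f (-x)) :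
    ∀ K : ℝ, 0 < K → callPrice f K = K * putPrice f (1 / K) := by
  intro K hK
  have hf : ∀ x, f (-x) = Real.exp x * f x := by
    intro x
    have h := hsym x
    have h1 : Real.exp (x / 2) * Real.exp (-x / 2) = 1 := by
      rw [← Real.exp_add, show x / 2 + -x / 2 = 0 by ring, Real.exp_zero]
    have h2 : Real.exp x = Real.exp (x / 2) * Real.exp (x / 2) := by
      rw [← Real.exp_add, add_halves]
    rw [h2, mul_assoc, h, ← mul_assoc, h1, one_mul]
  unfold callPrice putPrice
  rw [← integral_const_mul, ← integral_Iic_eq_integral_Iio, one_div, Real.log_inv]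
  rw [← integral_comp_neg_Ioi (Real.log K) (fun x => K * ((K⁻¹ - Real.exp x) * f x))]
  congr 1
  funext x
  rw [hf, Real.exp_neg]
  have := (Real.exp_pos x).ne'
  field_simp
end

section
/- Let f be an integrable probability density on ℝ satisfying the geometric symmetry condition e^{x/2} f(x) = e^{-x/2} f(-x) for all x ∈ ℝ, with cumulative distribution function F(y) = ∫_{-∞}^y f(x) dx. Then for every K > 0 the call price satisfies C(K) = ∫_{log K}^∞ (e^x − K) f(x) dx = F(−log K) − K·(1 − F(log K)). -/
open MeasureTheory

/-- Cumulative distribution function of the density `f`. -/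
noncomputable def cdfOf (f : ℝ → ℝ) (y : ℝ) : ℝ :=
  ∫ x in Set.Iic y, f x

/-- **Call price formula under geometric symmetry:**
`C(K) = F(−log K) − K·(1 − F(log K))` for all `K > 0`. -/
theorem call_price_formula_of_geometric_symmetry
    (f : ℝ → ℝ)
    (hf_meas : Measurable f) (hf_nonneg : ∀ x, 0 ≤ f x)
    (hf_int : Integrable f) (hf_prob : ∫ x, f x = 1)
    (hsym : ∀ x : ℝ, Real.exp (x / 2) * f x = Real.exp (-x / 2) * f (-x)) :
    ∀ K : ℝ, 0 < K →
      callPrice f K = cdfOf f (-Real.log K) - K * (1 - cdfOf f (Real.log K)) := by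
  intro K _
  have key : ∀ x : ℝ, Real.exp x * f x = f (-x) := by
    intro x
    have h1 : Real.exp x = Real.exp (x / 2) * Real.exp (x / 2) := by
      rw [← Real.exp_add]; congr 1; ring
    have h2 : Real.exp (x / 2) * Real.exp (-x / 2) = 1 := by
      rw [← Real.exp_add, ← Real.exp_zero]; congr 1; ring
    rw [h1, mul_assoc, hsym x, ← mul_assoc, h2, one_mul]
  have hneg : Integrable (fun x => f (-x)) := hf_int.comp_neg
  have hcompl : 1 - cdfOf f (Real.log K) = ∫ x in Set.Ioi (Real.log K), f x := by
    have h := integral_add_compl (μ := volume) (measurableSet_Iic (a := Real.log K)) hf_int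
    rw [Set.compl_Iic, hf_prob] at h
    unfold cdfOf
    linarith
  have hE : (fun x => (Real.exp x - K) * f x) = fun x => f (-x) - K * f x := by
    funext x
    rw [sub_mul, key]
  rw [hcompl]
  unfold callPrice cdfOf
  rw [hE, integral_sub hneg.integrableOn (hf_int.const_mul K).integrableOn,
    integral_const_mul, integral_comp_neg_Ioi]
end

section
/- With f_{v,+}, f_{v,−}, a, b and f_v as defined, the following identities hold for all x ∈ ℝ: b·e^{x/2}·f_{v,+}(x) = a·e^{-x/2}·f_{v,−}(−x) and a·e^{x/2}·f_{v,−}(x) = b·e^{-x/2}·f_{v,+}(−x). Consequently the mixture density f_v satisfies the geometric symmetry condition e^{x/2} f_v(x) = e^{-x/2} f_v(−x) for all x ∈ ℝ. -/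
open MeasureTheory

/-- Density of the variance-gamma component `X^+_T` (Gaussian mixed over a
`Γ(cT, λ+μ/2)` time change). -/
noncomputable def vgPlus (c lam mu T v x : ℝ) : ℝ :=
  ∫ l in Set.Ioi (0 : ℝ),
    (Real.sqrt (2 * Real.pi * v ^ 2 * l))⁻¹ *
      Real.exp (-(x - (mu - v ^ 2 / 2) * l) ^ 2 / (2 * v ^ 2 * l)) *
      ((lam + mu / 2) ^ (c * T) / Real.Gamma (c * T)) * l ^ (c * T - 1) *
      Real.exp (-(lam + mu / 2) * l)

/-- Density of the variance-gamma component `X^-_T` (Gaussian mixed over a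
`Γ(cT, λ-μ/2)` time change). -/
noncomputable def vgMinus (c lam mu T v x : ℝ) : ℝ :=
  ∫ l in Set.Ioi (0 : ℝ),
    (Real.sqrt (2 * Real.pi * v ^ 2 * l))⁻¹ *
      Real.exp (-(x - (-mu - v ^ 2 / 2) * l) ^ 2 / (2 * v ^ 2 * l)) *
      ((lam - mu / 2) ^ (c * T) / Real.Gamma (c * T)) * l ^ (c * T - 1) *
      Real.exp (-(lam - mu / 2) * l)

/-- Mixture weight `a = (1 + μ/(2λ))^{cT}`. -/
noncomputable def mixA (c lam mu T : ℝ) : ℝ := (1 + mu / (2 * lam)) ^ (c * T)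

/-- Mixture weight `b = (1 - μ/(2λ))^{cT}`. -/
noncomputable def mixB (c lam mu T : ℝ) : ℝ := (1 - mu / (2 * lam)) ^ (c * T)

/-- Density of the variance-gamma mixture model. -/
noncomputable def vgMix (c lam mu T v x : ℝ) : ℝ :=
  (mixA c lam mu T * vgMinus c lam mu T v x + mixB c lam mu T * vgPlus c lam mu T v x) /
    (mixA c lam mu T + mixB c lam mu T)

/-- **Geometric symmetry of the variance-gamma mixture.** The component densities satisfy
`b e^{x/2} f_+(x) = a e^{-x/2} f_-(-x)` and `a e^{x/2} f_-(x) = b e^{-x/2} f_+(-x)`,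
and consequently the mixture density satisfies `e^{x/2} f_v(x) = e^{-x/2} f_v(-x)`. -/
theorem vg_mixture_geometric_symmetry
    (c lam mu T v : ℝ)
    (hc : 0 < c) (hlam : 0 < lam) (hmu : 0 < mu) (hT : 0 < T) (hv : 0 < v)
    (hmu2lam : mu < 2 * lam) :
    (∀ x : ℝ, mixB c lam mu T * Real.exp (x / 2) * vgPlus c lam mu T v x =
        mixA c lam mu T * Real.exp (-x / 2) * vgMinus c lam mu T v (-x)) ∧
    (∀ x : ℝ, mixA c lam mu T * Real.exp (x / 2) * vgMinus c lam mu T v x =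
        mixB c lam mu T * Real.exp (-x / 2) * vgPlus c lam mu T v (-x)) ∧
    (∀ x : ℝ, Real.exp (x / 2) * vgMix c lam mu T v x =
        Real.exp (-x / 2) * vgMix c lam mu T v (-x)) := by
  have hb : 0 ≤ 1 - mu / (2 * lam) := by
    rw [sub_nonneg, div_le_one (by positivity)]; exact hmu2lam.le
  have hw : mixB c lam mu T * (lam + mu / 2) ^ (c * T)
      = mixA c lam mu T * (lam - mu / 2) ^ (c * T) := by
    unfold mixA mixB
    rw [← Real.mul_rpow hb (by positivity), ← Real.mul_rpow (by positivity) (by linarith)]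
    congr 1
    field_simp
  have h1 : ∀ x : ℝ, mixB c lam mu T * Real.exp (x / 2) * vgPlus c lam mu T v x =
        mixA c lam mu T * Real.exp (-x / 2) * vgMinus c lam mu T v (-x) := by
    intro x
    unfold vgPlus vgMinus
    rw [← integral_const_mul, ← integral_const_mul]
    refine setIntegral_congr_fun measurableSet_Ioi ?_
    intro l hl
    have hl0 : (0 : ℝ) < l := hl
    have he : Real.exp (x / 2) * Real.exp (-(x - (mu - v ^ 2 / 2) * l) ^ 2 / (2 * v ^ 2 * l))
          * Real.exp (-(lam + mu / 2) * l)
        = Real.exp (-x / 2) * Real.exp (-(-x - (-mu - v ^ 2 / 2) * l) ^ 2 / (2 * v ^ 2 * l))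
          * Real.exp (-(lam - mu / 2) * l) := by
      rw [← Real.exp_add, ← Real.exp_add, ← Real.exp_add, ← Real.exp_add]
      congr 1
      field_simp
      ring
    dsimp only
    generalize Real.exp (-(x - (mu - v ^ 2 / 2) * l) ^ 2 / (2 * v ^ 2 * l)) = e1 at *
    generalize Real.exp (-(-x - (-mu - v ^ 2 / 2) * l) ^ 2 / (2 * v ^ 2 * l)) = e2 at *
    generalize Real.exp (-(lam + mu / 2) * l) = e3 at *
    generalize Real.exp (-(lam - mu / 2) * l) = e4 at *
    generalize (lam + mu / 2) ^ (c * T) = p at *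
    generalize (lam - mu / 2) ^ (c * T) = q at *
    generalize l ^ (c * T - 1) = r
    generalize (Real.sqrt (2 * Real.pi * v ^ 2 * l))⁻¹ = s
    calc _ = (mixB c lam mu T * p) * (Real.exp (x / 2) * e1 * e3) *
              (s * r / Real.Gamma (c * T)) := by ring
      _ = (mixA c lam mu T * q) * (Real.exp (-x / 2) * e2 * e4) *
              (s * r / Real.Gamma (c * T)) := by rw [hw, he]
      _ = _ := by ring
  have h2 : ∀ x : ℝ, mixA c lam mu T * Real.exp (x / 2) * vgMinus c lam mu T v x =
        mixB c lam mu T * Real.exp (-x / 2) * vgPlus c lam mu T v (-x) := by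
    intro x
    have h := h1 (-x)
    rw [neg_neg] at h
    exact h.symm
  refine ⟨h1, h2, fun x => ?_⟩
  unfold vgMix
  rw [← mul_div_assoc, ← mul_div_assoc]
  congr 1
  linear_combination h1 x + h2 x
end

section
/- With f_v, a, b as defined, let m_v(u) = ∫_ℝ e^{u x} f_v(x) dx ∈ [0,∞]. Then for every u ∈ ℝ with v²(u² − u)/2 − μu + μ/2 < λ and v²(u² − u)/2 + μu − μ/2 < λ, one has m_v(u) = (ab/(a+b)) · [ (1 − (v²(u² − u)/2 − μu + μ/2)/λ)^{−cT} + (1 − (v²(u² − u)/2 + μu − μ/2)/λ)^{−cT} ]. Moreover m_v(u) = m_v(1 − u) for all u ∈ ℝ (as an equality in [0,∞]), and sup{ r ∈ ℝ : m_v(r) < ∞ } is finite. -/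
open MeasureTheory

/-- Moment generating function of the mixture density, valued in `[0,∞]`. -/
noncomputable def vgMixMgf (c lam mu T v u : ℝ) : ENNReal :=
  ∫⁻ x, ENNReal.ofReal (Real.exp (u * x) * vgMix c lam mu T v x)

/-- Joint integrand of a variance-gamma component. -/
noncomputable def vgK (s th be v x l : ℝ) : ℝ :=
  (Real.sqrt (2 * Real.pi * v ^ 2 * l))⁻¹ *
      Real.exp (-(x - th * l) ^ 2 / (2 * v ^ 2 * l)) *
      (be ^ s / Real.Gamma s) * l ^ (s - 1) *
      Real.exp (-be * l)

/-- Exponent of the component after integrating out the Gaussian. -/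
noncomputable def vgI (s r : ℝ) : ENNReal :=
  ∫⁻ l in Set.Ioi (0 : ℝ), ENNReal.ofReal (l ^ (s - 1) * Real.exp (-(r * l)))

lemma vgK_meas (s th be v : ℝ) : Measurable (fun p : ℝ × ℝ => vgK s th be v p.1 p.2) := by
  unfold vgK
  fun_prop

lemma vgK_nonneg (s th be v x l : ℝ) (hs : 0 < s) (hbe : 0 < be) (hl : 0 < l) :
    0 ≤ vgK s th be v x l := by
  have := Real.Gamma_pos_of_pos hs
  unfold vgK
  positivity

lemma vgK_gauss (s th be v u l : ℝ) (hs : 0 < s) (hbe : 0 < be) (hv : 0 < v) (hl : 0 < l) :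
    ∫⁻ x, ENNReal.ofReal (Real.exp (u * x) * vgK s th be v x l) =
      ENNReal.ofReal (be ^ s / Real.Gamma s) * ENNReal.ofReal
        (l ^ (s - 1) * Real.exp (-((be - th * u - u ^ 2 * v ^ 2 / 2) * l))) := by
  have hG := Real.Gamma_pos_of_pos hs
  have hV : 0 < v ^ 2 * l := by positivity
  let V : NNReal := ⟨v ^ 2 * l, hV.le⟩
  have hVc : (V : ℝ) = v ^ 2 * l := rfl
  have hV0 : V ≠ 0 := by
    intro h
    have : (V : ℝ) = 0 := by rw [h]; rfl
    rw [hVc] at this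
    exact hV.ne' this
  have key : ∀ x, Real.exp (u * x) * vgK s th be v x l =
      (be ^ s / Real.Gamma s) *
        (l ^ (s - 1) * Real.exp (-((be - th * u - u ^ 2 * v ^ 2 / 2) * l))) *
        ProbabilityTheory.gaussianPDFReal (th * l + u * (v ^ 2 * l)) V x := by
    intro x
    unfold vgK ProbabilityTheory.gaussianPDFReal
    rw [hVc]
    have e : Real.exp (u * x) * (Real.exp (-(x - th * l) ^ 2 / (2 * v ^ 2 * l)) *
        Real.exp (-be * l)) =
        Real.exp (-((be - th * u - u ^ 2 * v ^ 2 / 2) * l)) *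
        Real.exp (-(x - (th * l + u * (v ^ 2 * l))) ^ 2 / (2 * (v ^ 2 * l))) := by
      rw [← Real.exp_add, ← Real.exp_add, ← Real.exp_add]
      congr 1
      field_simp
      ring
    rw [show 2 * Real.pi * v ^ 2 * l = 2 * Real.pi * (v ^ 2 * l) by ring]
    linear_combination ((√(2 * Real.pi * (v ^ 2 * l)))⁻¹ * (be ^ s / Real.Gamma s) *
      l ^ (s - 1)) * e
  have hp : 0 ≤ be ^ s / Real.Gamma s := by positivity
  have hp2 : 0 ≤ (be ^ s / Real.Gamma s) *
        (l ^ (s - 1) * Real.exp (-((be - th * u - u ^ 2 * v ^ 2 / 2) * l))) := by positivity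
  simp_rw [key, ENNReal.ofReal_mul hp2]
  rw [lintegral_const_mul _
    (ProbabilityTheory.measurable_gaussianPDFReal _ _).ennreal_ofReal,
    ProbabilityTheory.lintegral_gaussianPDFReal_eq_one _ hV0, mul_one, ENNReal.ofReal_mul hp]

lemma vgK_tonelli (s th be v u : ℝ) (hs : 0 < s) (hbe : 0 < be) (hv : 0 < v) :
    ∫⁻ x, ∫⁻ l in Set.Ioi (0 : ℝ), ENNReal.ofReal (Real.exp (u * x) * vgK s th be v x l) =
      ENNReal.ofReal (be ^ s / Real.Gamma s) * vgI s (be - th * u - u ^ 2 * v ^ 2 / 2) := by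
  rw [lintegral_lintegral_swap]
  · unfold vgI
    rw [← lintegral_const_mul _ (by fun_prop)]
    apply setLIntegral_congr_fun measurableSet_Ioi
    intro l hl
    exact vgK_gauss s th be v u l hs hbe hv hl
  · have := vgK_meas s th be v
    apply Measurable.aemeasurable
    unfold Function.uncurry
    apply Measurable.ennreal_ofReal
    apply Measurable.mul _ this
    fun_prop

lemma vgI_eq (s r : ℝ) (hs : 0 < s) (hr : 0 < r) :
    vgI s r = ENNReal.ofReal (r ^ (-s) * Real.Gamma s) := by
  unfold vgI
  rw [← ofReal_integral_eq_lintegral_ofReal]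
  · rw [Real.integral_rpow_mul_exp_neg_mul_Ioi hs hr, one_div, Real.inv_rpow hr.le,
      Real.rpow_neg hr.le]
  · have := integrableOn_rpow_mul_exp_neg_mul_rpow (s := s - 1) (p := 1) (b := r)
      (by linarith) one_pos hr
    simpa [IntegrableOn] using this
  · filter_upwards [ae_restrict_mem measurableSet_Ioi] with l hl
    have : (0:ℝ) < l := hl
    simp only [Pi.zero_apply]
    positivity

lemma vgI_top (s r : ℝ) (hr : r ≤ 0) : vgI s r = ⊤ := by
  by_contra h
  apply not_integrableOn_Ioi_rpow (s - 1)
  have hm : Measurable (fun l : ℝ => l ^ (s - 1)) := by fun_prop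
  refine ⟨hm.aestronglyMeasurable, ?_⟩
  rw [hasFiniteIntegral_iff_ofReal]
  · refine lt_of_le_of_lt ?_ (lt_top_iff_ne_top.2 h)
    apply setLIntegral_mono' measurableSet_Ioi
    intro l hl
    have hl' : (0:ℝ) < l := hl
    apply ENNReal.ofReal_le_ofReal
    apply le_mul_of_one_le_right (by positivity)
    apply Real.one_le_exp
    nlinarith
  · filter_upwards [ae_restrict_mem measurableSet_Ioi] with l hl
    have : (0:ℝ) < l := hl
    simp only [Pi.zero_apply]
    positivity

lemma vgK_ae (s th be v : ℝ) (hs : 0 < s) (hbe : 0 < be) (hv : 0 < v) :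
    ∀ᵐ x : ℝ, ENNReal.ofReal (∫ l in Set.Ioi (0 : ℝ), vgK s th be v x l) =
      ∫⁻ l in Set.Ioi (0 : ℝ), ENNReal.ofReal (vgK s th be v x l) := by
  have h0 := vgK_tonelli s th be v 0 hs hbe hv
  simp only [zero_mul, Real.exp_zero, one_mul] at h0
  have hK := vgK_meas s th be v
  have hfin := ae_lt_top (μ := volume) (f := fun x => ∫⁻ l in Set.Ioi (0 : ℝ),
      ENNReal.ofReal (vgK s th be v x l))
    (Measurable.lintegral_prod_right' (f := fun p : ℝ × ℝ => ENNReal.ofReal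
      (vgK s th be v p.1 p.2)) hK.ennreal_ofReal) (by
      rw [h0, vgI_eq _ _ hs (by linarith)]
      exact ENNReal.mul_ne_top ENNReal.ofReal_ne_top ENNReal.ofReal_ne_top)
  filter_upwards [hfin] with x hx
  have hnn : 0 ≤ᵐ[volume.restrict (Set.Ioi (0:ℝ))] (fun l => vgK s th be v x l) := by
    filter_upwards [ae_restrict_mem measurableSet_Ioi] with l hl
    exact vgK_nonneg s th be v x l hs hbe hl
  apply ofReal_integral_eq_lintegral_ofReal _ hnn
  refine ⟨(hK.comp (measurable_prodMk_left (x := x))).aestronglyMeasurable, ?_⟩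
  rw [hasFiniteIntegral_iff_ofReal hnn]
  exact hx

lemma vgComp (s th be v u : ℝ) (hs : 0 < s) (hbe : 0 < be) (hv : 0 < v) :
    ∫⁻ x, ENNReal.ofReal (Real.exp (u * x)) *
        ENNReal.ofReal (∫ l in Set.Ioi (0 : ℝ), vgK s th be v x l) =
      ENNReal.ofReal (be ^ s / Real.Gamma s) * vgI s (be - th * u - u ^ 2 * v ^ 2 / 2) := by
  rw [← vgK_tonelli s th be v u hs hbe hv]
  apply lintegral_congr_ae
  filter_upwards [vgK_ae s th be v hs hbe hv] with x hx
  have hK := vgK_meas s th be v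
  have hKx : Measurable (fun l => vgK s th be v x l) :=
    hK.comp (measurable_prodMk_left (x := x))
  rw [hx, ← lintegral_const_mul _ hKx.ennreal_ofReal]
  simp_rw [ENNReal.ofReal_mul (Real.exp_nonneg _)]

lemma vgMgf_eq (c lam mu T v : ℝ)
    (hc : 0 < c) (hlam : 0 < lam) (hmu : 0 < mu) (hT : 0 < T) (hv : 0 < v)
    (hmu2lam : mu < 2 * lam) (u : ℝ) :
    vgMixMgf c lam mu T v u =
      ENNReal.ofReal (lam ^ (c * T) * (mixA c lam mu T * mixB c lam mu T /
        (mixA c lam mu T + mixB c lam mu T)) / Real.Gamma (c * T)) *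
      (vgI (c * T) (lam - (v ^ 2 * (u ^ 2 - u) / 2 - mu * u + mu / 2)) +
       vgI (c * T) (lam - (v ^ 2 * (u ^ 2 - u) / 2 + mu * u - mu / 2))) := by
  have hs : 0 < c * T := by positivity
  have hG := Real.Gamma_pos_of_pos hs
  have hp : 0 < lam + mu / 2 := by positivity
  have hm : 0 < lam - mu / 2 := by linarith
  have hp1 : 0 < 1 + mu / (2 * lam) := by positivity
  have hm1 : 0 < 1 - mu / (2 * lam) := by
    rw [sub_pos, div_lt_one (by positivity)]; exact hmu2lam
  have hA : 0 < mixA c lam mu T := Real.rpow_pos_of_pos hp1 _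
  have hB : 0 < mixB c lam mu T := Real.rpow_pos_of_pos hm1 _
  have hpA : (lam + mu / 2) ^ (c * T) = lam ^ (c * T) * mixA c lam mu T := by
    unfold mixA
    rw [← Real.mul_rpow hlam.le hp1.le]; congr 1; field_simp
  have hmB : (lam - mu / 2) ^ (c * T) = lam ^ (c * T) * mixB c lam mu T := by
    unfold mixB
    rw [← Real.mul_rpow hlam.le hm1.le]; congr 1; field_simp
  have cp := vgComp (c * T) (mu - v ^ 2 / 2) (lam + mu / 2) v u hs hp hv
  have cm := vgComp (c * T) (-mu - v ^ 2 / 2) (lam - mu / 2) v u hs hm hv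
  set A := mixA c lam mu T with hAdef
  set B := mixB c lam mu T with hBdef
  have mI : ∀ th be : ℝ, Measurable (fun x => ∫ l in Set.Ioi (0 : ℝ), vgK (c * T) th be v x l) := by
    intro th be
    have := (vgK_meas (c * T) th be v).stronglyMeasurable
    exact (StronglyMeasurable.integral_prod_right (f := fun x l => vgK (c * T) th be v x l)
      (ν := volume.restrict (Set.Ioi (0:ℝ))) this).measurable
  have nnI : ∀ th be x : ℝ, 0 < be → 0 ≤ ∫ l in Set.Ioi (0 : ℝ), vgK (c * T) th be v x l := by
    intro th be x hbe
    exact setIntegral_nonneg measurableSet_Ioi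
      (fun l hl => vgK_nonneg (c * T) th be v x l hs hbe hl)
  have split : ∀ x, ENNReal.ofReal (Real.exp (u * x) * vgMix c lam mu T v x) =
      ENNReal.ofReal (A / (A + B)) * (ENNReal.ofReal (Real.exp (u * x)) *
        ENNReal.ofReal (∫ l in Set.Ioi (0 : ℝ),
          vgK (c * T) (-mu - v ^ 2 / 2) (lam - mu / 2) v x l)) +
      ENNReal.ofReal (B / (A + B)) * (ENNReal.ofReal (Real.exp (u * x)) *
        ENNReal.ofReal (∫ l in Set.Ioi (0 : ℝ),
          vgK (c * T) (mu - v ^ 2 / 2) (lam + mu / 2) v x l)) := by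
    intro x
    have n1 := nnI (-mu - v ^ 2 / 2) (lam - mu / 2) x hm
    have n2 := nnI (mu - v ^ 2 / 2) (lam + mu / 2) x hp
    have e1 : vgMinus c lam mu T v x = ∫ l in Set.Ioi (0 : ℝ),
          vgK (c * T) (-mu - v ^ 2 / 2) (lam - mu / 2) v x l := rfl
    have e2 : vgPlus c lam mu T v x = ∫ l in Set.Ioi (0 : ℝ),
          vgK (c * T) (mu - v ^ 2 / 2) (lam + mu / 2) v x l := rfl
    rw [vgMix, e1, e2, ← hAdef, ← hBdef, ← ENNReal.ofReal_mul (by positivity),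
      ← ENNReal.ofReal_mul (by positivity), ← ENNReal.ofReal_mul (by positivity),
      ← ENNReal.ofReal_mul (by positivity), ← ENNReal.ofReal_add (by positivity) (by positivity)]
    congr 1
    field_simp
  have mE : ∀ th be : ℝ, Measurable (fun x => ENNReal.ofReal (Real.exp (u * x)) *
        ENNReal.ofReal (∫ l in Set.Ioi (0 : ℝ), vgK (c * T) th be v x l)) := by
    intro th be
    exact Measurable.mul (by fun_prop) (mI th be).ennreal_ofReal
  unfold vgMixMgf
  simp_rw [split]
  rw [lintegral_add_left ((mE _ _).const_mul _), lintegral_const_mul _ (mE _ _),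
    lintegral_const_mul _ (mE _ _), cp, cm, mul_add, ← mul_assoc, ← mul_assoc,
    ← ENNReal.ofReal_mul (by positivity), ← ENNReal.ofReal_mul (by positivity), hpA, hmB]
  congr 3
  · field_simp
  · ring
  · field_simp
  · ring

/-- **MGF of the variance-gamma mixture.** Explicit formula on the strip of finiteness,
symmetry `m(u) = m(1-u)`, and semi-heavy tails (the set of exponents with finite
exponential moment is bounded above). -/
theorem vg_mixture_mgf
    (c lam mu T v : ℝ)
    (hc : 0 < c) (hlam : 0 < lam) (hmu : 0 < mu) (hT : 0 < T) (hv : 0 < v)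
    (hmu2lam : mu < 2 * lam) :
    (∀ u : ℝ, v ^ 2 * (u ^ 2 - u) / 2 - mu * u + mu / 2 < lam →
      v ^ 2 * (u ^ 2 - u) / 2 + mu * u - mu / 2 < lam →
      vgMixMgf c lam mu T v u = ENNReal.ofReal
        ((mixA c lam mu T * mixB c lam mu T / (mixA c lam mu T + mixB c lam mu T)) *
          ((1 - (v ^ 2 * (u ^ 2 - u) / 2 - mu * u + mu / 2) / lam) ^ (-(c * T)) +
           (1 - (v ^ 2 * (u ^ 2 - u) / 2 + mu * u - mu / 2) / lam) ^ (-(c * T))))) ∧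
    (∀ u : ℝ, vgMixMgf c lam mu T v u = vgMixMgf c lam mu T v (1 - u)) ∧
    BddAbove {r : ℝ | vgMixMgf c lam mu T v r < ⊤} := by
  have main := vgMgf_eq c lam mu T v hc hlam hmu hT hv hmu2lam
  have hs : 0 < c * T := by positivity
  have hG := Real.Gamma_pos_of_pos hs
  have hm1 : 0 < 1 - mu / (2 * lam) := by
    rw [sub_pos, div_lt_one (by positivity)]; exact hmu2lam
  have hA : 0 < mixA c lam mu T := Real.rpow_pos_of_pos (by positivity) _
  have hB : 0 < mixB c lam mu T := Real.rpow_pos_of_pos hm1 _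
  refine ⟨?_, ?_, ?_⟩
  · intro u h1 h2
    have g : ∀ y, y < lam → (lam - y) ^ (-(c * T)) =
        (lam ^ (c * T))⁻¹ * (1 - y / lam) ^ (-(c * T)) := by
      intro y hy
      have hy1 : 0 < 1 - y / lam := by rw [sub_pos, div_lt_one hlam]; exact hy
      rw [← Real.rpow_neg hlam.le, ← Real.mul_rpow hlam.le hy1.le]
      congr 1
      field_simp
    have pos : ∀ y, y < lam → 0 < (1 - y / lam) ^ (-(c * T)) := by
      intro y hy
      have hy1 : 0 < 1 - y / lam := by rw [sub_pos, div_lt_one hlam]; exact hy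
      positivity
    have p1 := pos _ h1
    have p2 := pos _ h2
    rw [main u, vgI_eq _ _ hs (by linarith), vgI_eq _ _ hs (by linarith), g _ h1, g _ h2,
      ← ENNReal.ofReal_add (by positivity) (by positivity), ← ENNReal.ofReal_mul (by positivity)]
    congr 1
    have : 0 < lam ^ (c * T) := by positivity
    field_simp
  · intro u
    rw [main u, main (1 - u), add_comm (vgI _ _)]
    congr 3 <;> ring
  · refine ⟨1 + 2 * lam / v ^ 2 + 1 + 2 * lam / mu, ?_⟩
    intro r hr
    by_contra hcon
    push Not at hcon
    simp only [Set.mem_ofPred_eq] at hr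
    have q1 : 0 < 2 * lam / v ^ 2 := by positivity
    have q2 : 2 * lam / mu * mu = 2 * lam := by field_simp
    have q3 : 0 < 2 * lam / mu := by positivity
    rw [main r, vgI_top _ (lam - (v ^ 2 * (r ^ 2 - r) / 2 + mu * r - mu / 2)), add_top,
      ENNReal.mul_top] at hr
    · exact lt_irrefl _ hr
    · have : 0 < lam ^ (c * T) := by positivity
      rw [Ne, ENNReal.ofReal_eq_zero, not_le]
      positivity
    · have h3 : 0 ≤ v ^ 2 * (r ^ 2 - r) / 2 := by
        have : 0 ≤ r ^ 2 - r := by nlinarith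
        positivity
      have h4 : mu * (2 + 2 * lam / mu) ≤ mu * r := by
        apply mul_le_mul_of_nonneg_left _ hmu.le
        linarith
      nlinarith
end

section
/- The double gamma density f_0 satisfies the geometric symmetry condition e^{x/2} f_0(x) = e^{-x/2} f_0(−x) for all x ∈ ℝ. -/
open MeasureTheory

/-- `λ₊ = λ/μ + 1/2`. -/
noncomputable def lamPlus (lam mu : ℝ) : ℝ := lam / mu + 1 / 2

/-- `λ₋ = λ/μ - 1/2`. -/
noncomputable def lamMinus (lam mu : ℝ) : ℝ := lam / mu - 1 / 2

/-- The asymmetric double gamma density. -/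
noncomputable def doubleGamma (c lam mu T x : ℝ) : ℝ :=
  if x < 0 then
    (mixA c lam mu T / (mixA c lam mu T + mixB c lam mu T)) *
      (lamMinus lam mu ^ (c * T) / Real.Gamma (c * T)) * (-x) ^ (c * T - 1) *
      Real.exp (lamMinus lam mu * x)
  else if 0 < x then
    (mixB c lam mu T / (mixA c lam mu T + mixB c lam mu T)) *
      (lamPlus lam mu ^ (c * T) / Real.Gamma (c * T)) * x ^ (c * T - 1) *
      Real.exp (-lamPlus lam mu * x)
  else 0

theorem mix_mul_eq (c lam mu T : ℝ) (hlam : 0 < lam) (hmu : 0 < mu) (hmu2lam : mu < 2 * lam) :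
    mixA c lam mu T * lamMinus lam mu ^ (c * T) = mixB c lam mu T * lamPlus lam mu ^ (c * T) := by
  have h1 : mu / (2 * lam) < 1 := by rw [div_lt_one (by positivity)]; exact hmu2lam
  have h2 : 1 / 2 < lam / mu := by rw [div_lt_div_iff₀ (by norm_num) hmu]; linarith
  unfold mixA mixB lamPlus lamMinus
  rw [← Real.mul_rpow (by positivity) (by linarith), ← Real.mul_rpow (by linarith) (by positivity)]
  congr 1
  field_simp

theorem doubleGamma_symm_pos (c lam mu T : ℝ) (hlam : 0 < lam) (hmu : 0 < mu)
    (hmu2lam : mu < 2 * lam) (x : ℝ) (hx : 0 < x) :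
    Real.exp (x / 2) * doubleGamma c lam mu T x =
      Real.exp (-x / 2) * doubleGamma c lam mu T (-x) := by
  have h := mix_mul_eq c lam mu T hlam hmu hmu2lam
  have e : Real.exp (x / 2) * Real.exp (-lamPlus lam mu * x) =
      Real.exp (-x / 2) * Real.exp (lamMinus lam mu * -x) := by
    rw [← Real.exp_add, ← Real.exp_add]
    congr 1
    unfold lamPlus lamMinus
    ring
  unfold doubleGamma
  rw [if_neg (not_lt.mpr hx.le), if_pos hx, if_pos (neg_lt_zero.mpr hx), neg_neg]
  generalize mixA c lam mu T + mixB c lam mu T = s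
  generalize x ^ (c * T - 1) = p
  generalize Real.Gamma (c * T) = g
  calc _ = (mixB c lam mu T * lamPlus lam mu ^ (c * T)) * (s⁻¹ * g⁻¹ * p) *
        (Real.exp (x / 2) * Real.exp (-lamPlus lam mu * x)) := by ring
    _ = _ := by rw [← h, e]; ring

/-- **Geometric symmetry of the double gamma density:**
`e^{x/2} f₀(x) = e^{-x/2} f₀(-x)` for all `x`. -/
theorem doubleGamma_geometric_symmetry
    (c lam mu T : ℝ)
    (hc : 0 < c) (hlam : 0 < lam) (hmu : 0 < mu) (hT : 0 < T)
    (hmu2lam : mu < 2 * lam) :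
    ∀ x : ℝ, Real.exp (x / 2) * doubleGamma c lam mu T x =
      Real.exp (-x / 2) * doubleGamma c lam mu T (-x) := by
  intro x
  rcases lt_trichotomy x 0 with hx | hx | hx
  · have h := doubleGamma_symm_pos c lam mu T hlam hmu hmu2lam (-x) (neg_pos.mpr hx)
    rw [neg_neg] at h
    exact h.symm
  · subst hx
    simp
  · exact doubleGamma_symm_pos c lam mu T hlam hmu hmu2lam x hx
end

section
/- For the double gamma density f_0, the moment generating function m_0(u) = ∫_ℝ e^{u x} f_0(x) dx ∈ [0,∞] is finite if and only if −λ_- < u < λ_+, in which case m_0(u) = (a/(a+b))·(λ_- /(λ_- + u))^{cT} + (b/(a+b))·(λ_+/(λ_+ − u))^{cT}. In particular, sup{ r ∈ ℝ : m_0(r) < ∞ } = λ_+ < ∞, and m_0(u) = m_0(1 − u) for all u ∈ ℝ (as an equality in [0,∞]). -/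
open MeasureTheory

/-- Moment generating function of the double gamma density, valued in `[0,∞]`. -/
noncomputable def doubleGammaMgf (c lam mu T u : ℝ) : ENNReal :=
  ∫⁻ x, ENNReal.ofReal (Real.exp (u * x) * doubleGamma c lam mu T x)

open MeasureTheory Set

/-- The unnormalised gamma integral, valued in `[0,∞]`. -/
noncomputable def gammaLInt (s r : ℝ) : ENNReal :=
  ∫⁻ x in Ioi (0 : ℝ), ENNReal.ofReal (x ^ (s - 1) * Real.exp (-(r * x)))

theorem gammaLInt_of_pos {s r : ℝ} (hs : 0 < s) (hr : 0 < r) :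
    gammaLInt s r = ENNReal.ofReal ((1 / r) ^ s * Real.Gamma s) := by
  have h := Real.integral_rpow_mul_exp_neg_mul_Ioi hs hr
  have hne : (1 / r) ^ s * Real.Gamma s ≠ 0 := by
    have := Real.Gamma_pos_of_pos hs
    positivity
  have hi : IntegrableOn (fun x : ℝ => x ^ (s - 1) * Real.exp (-(r * x))) (Ioi 0) :=
    Integrable.of_integral_ne_zero (by rw [h]; exact hne)
  unfold gammaLInt
  rw [← ofReal_integral_eq_lintegral_ofReal hi, h]
  filter_upwards [ae_restrict_mem measurableSet_Ioi] with x hx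
  have hx' : (0 : ℝ) < x := hx
  show (0 : ℝ) ≤ x ^ (s - 1) * Real.exp (-(r * x))
  positivity

theorem gammaLInt_of_nonpos {s r : ℝ} (hr : r ≤ 0) : gammaLInt s r = ⊤ := by
  by_contra hfin
  apply not_integrableOn_Ioi_rpow (s - 1)
  have hm : Measurable (fun x : ℝ => x ^ (s - 1)) := by fun_prop
  refine ⟨hm.aestronglyMeasurable, ?_⟩
  rw [hasFiniteIntegral_iff_ofReal]
  · refine lt_of_le_of_lt ?_ (lt_top_iff_ne_top.2 hfin)
    refine setLIntegral_mono' measurableSet_Ioi ?_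
    intro x hx
    have hx' : (0 : ℝ) < x := hx
    apply ENNReal.ofReal_le_ofReal
    have h1 : 1 ≤ Real.exp (-(r * x)) := Real.one_le_exp (by nlinarith)
    have h2 : 0 ≤ x ^ (s - 1) := by positivity
    nlinarith
  · filter_upwards [ae_restrict_mem measurableSet_Ioi] with x hx
    exact Real.rpow_nonneg (le_of_lt hx) _

theorem doubleGammaMgf_eq (c lam mu T u A B : ℝ) (hA : 0 ≤ A) (hB : 0 ≤ B)
    (hAe : A = (mixA c lam mu T / (mixA c lam mu T + mixB c lam mu T)) *
      (lamMinus lam mu ^ (c * T) / Real.Gamma (c * T)))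
    (hBe : B = (mixB c lam mu T / (mixA c lam mu T + mixB c lam mu T)) *
      (lamPlus lam mu ^ (c * T) / Real.Gamma (c * T))) :
    doubleGammaMgf c lam mu T u =
      ENNReal.ofReal A * gammaLInt (c * T) (lamMinus lam mu + u) +
      ENNReal.ofReal B * gammaLInt (c * T) (lamPlus lam mu - u) := by
  unfold doubleGammaMgf gammaLInt
  rw [← lintegral_add_compl _ (measurableSet_Iio (a := (0 : ℝ))), compl_Iio,
    setLIntegral_congr (Ioi_ae_eq_Ici (a := (0 : ℝ))).symm]
  congr 1
  · rw [← lintegral_const_mul' _ _ ENNReal.ofReal_ne_top]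
    have hp := (Measure.measurePreserving_neg (volume : Measure ℝ)).setLIntegral_comp_preimage_emb
      (MeasurableEquiv.neg ℝ).measurableEmbedding
      (fun x => ENNReal.ofReal (Real.exp (u * x) * doubleGamma c lam mu T x)) (Iio 0)
    rw [← hp]
    have hpre : (Neg.neg ⁻¹' (Iio (0 : ℝ)) : Set ℝ) = Ioi 0 := by ext x; simp
    rw [hpre]
    refine setLIntegral_congr_fun measurableSet_Ioi ?_
    intro x hx
    have hx' : (0 : ℝ) < x := hx
    simp only
    rw [← ENNReal.ofReal_mul hA]
    congr 1
    unfold doubleGamma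
    rw [if_pos (by linarith), ← hAe, neg_neg]
    have : Real.exp (-((lamMinus lam mu + u) * x)) =
        Real.exp (u * -x) * Real.exp (lamMinus lam mu * -x) := by
      rw [← Real.exp_add]; congr 1; ring
    rw [this]; ring
  · rw [← lintegral_const_mul' _ _ ENNReal.ofReal_ne_top]
    refine setLIntegral_congr_fun measurableSet_Ioi ?_
    intro x hx
    have hx' : (0 : ℝ) < x := hx
    simp only
    rw [← ENNReal.ofReal_mul hB]
    congr 1
    unfold doubleGamma
    rw [if_neg (by linarith), if_pos hx', ← hBe]
    have : Real.exp (-((lamPlus lam mu - u) * x)) =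
        Real.exp (u * x) * Real.exp (-lamPlus lam mu * x) := by
      rw [← Real.exp_add]; congr 1; ring
    rw [this]; ring

/-- **MGF of the double gamma density:** finiteness exactly on `(−λ₋, λ₊)`, the explicit
formula there, `sup{r : m₀(r) < ∞} = λ₊ < ∞`, and the symmetry `m₀(u) = m₀(1−u)`. -/
theorem doubleGamma_mgf
    (c lam mu T : ℝ)
    (hc : 0 < c) (hlam : 0 < lam) (hmu : 0 < mu) (hT : 0 < T)
    (hmu2lam : mu < 2 * lam) :
    (∀ u : ℝ, doubleGammaMgf c lam mu T u < ⊤ ↔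
        -lamMinus lam mu < u ∧ u < lamPlus lam mu) ∧
    (∀ u : ℝ, -lamMinus lam mu < u → u < lamPlus lam mu →
      doubleGammaMgf c lam mu T u = ENNReal.ofReal
        ((mixA c lam mu T / (mixA c lam mu T + mixB c lam mu T)) *
            (lamMinus lam mu / (lamMinus lam mu + u)) ^ (c * T) +
         (mixB c lam mu T / (mixA c lam mu T + mixB c lam mu T)) *
            (lamPlus lam mu / (lamPlus lam mu - u)) ^ (c * T))) ∧
    sSup {r : ℝ | doubleGammaMgf c lam mu T r < ⊤} = lamPlus lam mu ∧
    (∀ u : ℝ, doubleGammaMgf c lam mu T u = doubleGammaMgf c lam mu T (1 - u)) := by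
  have hs : 0 < c * T := mul_pos hc hT
  have hG := Real.Gamma_pos_of_pos hs
  have hq : 1 / 2 < lam / mu := by rw [lt_div_iff₀ hmu]; linarith
  have hm : 0 < lamMinus lam mu := by unfold lamMinus; linarith
  have hp : 0 < lamPlus lam mu := by unfold lamPlus; linarith
  have hq' : mu / (2 * lam) < 1 := by rw [div_lt_one (by positivity)]; exact hmu2lam
  have ha : 0 < mixA c lam mu T := by unfold mixA; positivity
  have hb : 0 < mixB c lam mu T := Real.rpow_pos_of_pos (by linarith) _
  have hab : mixA c lam mu T * lamMinus lam mu ^ (c * T) =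
      mixB c lam mu T * lamPlus lam mu ^ (c * T) := by
    unfold mixA mixB
    rw [← Real.mul_rpow (by positivity) hm.le, ← Real.mul_rpow (by linarith) hp.le]
    congr 1
    unfold lamMinus lamPlus
    field_simp
  obtain ⟨A, hAe⟩ : ∃ A, A = (mixA c lam mu T / (mixA c lam mu T + mixB c lam mu T)) *
      (lamMinus lam mu ^ (c * T) / Real.Gamma (c * T)) := ⟨_, rfl⟩
  have hA : 0 < A := by rw [hAe]; positivity
  have hBe : A = (mixB c lam mu T / (mixA c lam mu T + mixB c lam mu T)) *
      (lamPlus lam mu ^ (c * T) / Real.Gamma (c * T)) := by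
    rw [hAe, div_mul_div_comm, div_mul_div_comm, hab]
  have key := fun u => doubleGammaMgf_eq c lam mu T u A A hA.le hA.le hAe hBe
  have hA0 : ENNReal.ofReal A ≠ 0 := by simpa using hA
  have hfin : ∀ u : ℝ, doubleGammaMgf c lam mu T u < ⊤ ↔
        -lamMinus lam mu < u ∧ u < lamPlus lam mu := by
    intro u
    rw [key]
    constructor
    · intro h
      constructor
      · by_contra hu
        rw [gammaLInt_of_nonpos (r := lamMinus lam mu + u) (by linarith),
          ENNReal.mul_top hA0, top_add] at h
        exact lt_irrefl _ h
      · by_contra hu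
        rw [gammaLInt_of_nonpos (r := lamPlus lam mu - u) (by linarith),
          ENNReal.mul_top hA0, add_top] at h
        exact lt_irrefl _ h
    · rintro ⟨h1, h2⟩
      rw [gammaLInt_of_pos hs (by linarith), gammaLInt_of_pos hs (by linarith)]
      exact ENNReal.add_lt_top.2 ⟨ENNReal.mul_lt_top ENNReal.ofReal_lt_top ENNReal.ofReal_lt_top,
        ENNReal.mul_lt_top ENNReal.ofReal_lt_top ENNReal.ofReal_lt_top⟩
  refine ⟨hfin, ?_, ?_, ?_⟩
  · intro u h1 h2
    have h1' : 0 < lamMinus lam mu + u := by linarith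
    have h2' : 0 < lamPlus lam mu - u := by linarith
    rw [key, gammaLInt_of_pos hs h1', gammaLInt_of_pos hs h2', ← ENNReal.ofReal_mul hA.le,
      ← ENNReal.ofReal_mul hA.le, ← ENNReal.ofReal_add (by positivity) (by positivity)]
    congr 2
    · rw [hAe, div_eq_mul_one_div (lamMinus lam mu), Real.mul_rpow hm.le (by positivity)]
      field_simp
    · rw [hBe, div_eq_mul_one_div (lamPlus lam mu), Real.mul_rpow hp.le (by positivity)]
      field_simp
  · have : {r : ℝ | doubleGammaMgf c lam mu T r < ⊤} =
        Ioo (-lamMinus lam mu) (lamPlus lam mu) := by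
      ext r; exact hfin r
    rw [this, csSup_Ioo (by linarith)]
  · intro u
    have e1 : lamMinus lam mu + (1 - u) = lamPlus lam mu - u := by
      unfold lamMinus lamPlus; ring
    have e2 : lamPlus lam mu - (1 - u) = lamMinus lam mu + u := by
      unfold lamMinus lamPlus; ring
    rw [key, key, e1, e2, add_comm]
end

section
/- With f_v and f_0 as defined (with the same parameters c, λ, μ, T), for every x ∈ ℝ with x ≠ 0 one has the pointwise convergence lim_{v → 0+} f_v(x) = f_0(x). -/
open MeasureTheory

/-- The (approximate identity) peak kernel. -/
noncomputable def peakK (y m v l : ℝ) : ℝ :=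
  m * ((Real.sqrt (2 * Real.pi * v ^ 2 * l))⁻¹ *
    Real.exp (-(y - m * l) ^ 2 / (2 * v ^ 2 * l)) * Real.exp (-(v ^ 2 / 8) * l))

lemma peakK_nonneg {m : ℝ} (hm : 0 < m) (y v l : ℝ) : 0 ≤ peakK y m v l := by
  unfold peakK; positivity

lemma measurable_peakK (y m v : ℝ) : Measurable (peakK y m v) := by
  unfold peakK; fun_prop

lemma peakK_bound {y m δ v l : ℝ} (hy : 0 < y) (hm : 0 < m) (hδ : 0 < δ) (hv : 0 < v)
    (hl : 0 < l) (hd : δ ≤ |y - m * l|) :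
    peakK y m v l ≤ v * (m * (1 / δ ^ 2 + 2 * (y / δ ^ 2 + 1 / δ) / m)) := by
  set d := |y - m * l| with hdd
  have hd0 : 0 < d := lt_of_lt_of_le hδ hd
  have hsq : (y - m * l) ^ 2 = d ^ 2 := by rw [hdd, sq_abs]
  set r := Real.sqrt (2 * Real.pi * v ^ 2 * l) with hr
  have hr0 : 0 < r := by rw [hr]; have := Real.pi_pos; positivity
  have hr2 : r ^ 2 = 2 * Real.pi * v ^ 2 * l := by
    rw [hr, Real.sq_sqrt]; have := Real.pi_pos; positivity
  have hpi := Real.pi_pos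
  have hpi3 := Real.pi_gt_three
  have hE : Real.exp (-(y - m * l) ^ 2 / (2 * v ^ 2 * l)) ≤ 2 * v ^ 2 * l / d ^ 2 := by
    rw [hsq, neg_div, Real.exp_neg]
    have h1 : d ^ 2 / (2 * v ^ 2 * l) ≤ Real.exp (d ^ 2 / (2 * v ^ 2 * l)) := by
      have := Real.add_one_le_exp (d ^ 2 / (2 * v ^ 2 * l)); linarith
    have h2 : 0 < d ^ 2 / (2 * v ^ 2 * l) := by positivity
    have h3 := inv_anti₀ h2 h1
    rwa [inv_div] at h3
  have hE2 : Real.exp (-(v ^ 2 / 8) * l) ≤ 1 := by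
    apply Real.exp_le_one_iff.mpr
    have : 0 ≤ v ^ 2 / 8 * l := by positivity
    linarith
  have hrle : r ≤ v * (Real.pi * (1 + 2 * l)) := by
    have h0 : 0 ≤ v * (Real.pi * (1 + 2 * l)) := by positivity
    rw [hr]
    apply Real.sqrt_le_iff.mpr ⟨h0, ?_⟩
    have e : (v * (Real.pi * (1 + 2 * l))) ^ 2 - 2 * Real.pi * v ^ 2 * l
      = v ^ 2 * Real.pi * (Real.pi * (1 + 2 * l) ^ 2 - 2 * l) := by ring
    have : 0 ≤ Real.pi * (1 + 2 * l) ^ 2 - 2 * l := by nlinarith [sq_nonneg l]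
    have : 0 ≤ v ^ 2 * Real.pi * (Real.pi * (1 + 2 * l) ^ 2 - 2 * l) := by positivity
    linarith
  have hlA : 1 + 2 * l ≤ (1 / δ ^ 2 + 2 * (y / δ ^ 2 + 1 / δ) / m) * d ^ 2 := by
    have hl1 : l ≤ (y + d) / m := by
      rw [le_div_iff₀ hm]
      have := neg_abs_le (y - m * l)
      rw [← hdd] at this; linarith
    have ha : 1 ≤ 1 / δ ^ 2 * d ^ 2 := by
      rw [one_div_mul_eq_div, one_le_div (by positivity)]; gcongr
    have hb : d ≤ 1 / δ * d ^ 2 := by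
      rw [one_div_mul_eq_div, le_div_iff₀ hδ]; nlinarith
    calc 1 + 2 * l ≤ 1 + 2 * ((y + d) / m) := by linarith
      _ ≤ 1 / δ ^ 2 * d ^ 2 + 2 * ((y * (1 / δ ^ 2 * d ^ 2) + 1 / δ * d ^ 2) / m) := by
        gcongr
        nlinarith
      _ = _ := by ring
  unfold peakK
  calc m * (r⁻¹ * Real.exp (-(y - m * l) ^ 2 / (2 * v ^ 2 * l)) * Real.exp (-(v ^ 2 / 8) * l))
      ≤ m * (r⁻¹ * (2 * v ^ 2 * l / d ^ 2) * 1) := by gcongr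
    _ = m * (r / Real.pi / d ^ 2) := by
        have : 2 * v ^ 2 * l = r ^ 2 / Real.pi := by rw [hr2]; field_simp
        rw [this]; field_simp
    _ ≤ m * (v * (Real.pi * ((1 / δ ^ 2 + 2 * (y / δ ^ 2 + 1 / δ) / m) * d ^ 2))
          / Real.pi / d ^ 2) := by
        gcongr
        exact hrle.trans (by gcongr)
    _ = _ := by field_simp

lemma peakK_norm {y m : ℝ} (hy : 0 < y) (hm : 0 < m) :
    Filter.Tendsto (fun v => ∫ l in Set.Ioo (y / m / 2) (2 * (y / m)), peakK y m v l)
      (nhdsWithin 0 (Set.Ioi 0)) (nhds 1) := by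
  set x0 := y / m with hx0
  have hx : 0 < x0 := by positivity
  have hpi := Real.pi_pos
  set t := Set.Ioo (x0 / 2) (2 * x0) with ht
  let H : ℝ → ℝ → ℝ := fun v z => t.indicator (fun l => (Real.sqrt (2 * Real.pi * l))⁻¹ *
    Real.exp (-z ^ 2 / (2 * l)) * Real.exp (-(v ^ 2 / 8) * l)) (x0 + v / m * z)
  have hsub : ∀ v, 0 < v → ∫ l in t, peakK y m v l = ∫ z, H v z := by
    intro v hv
    rw [← integral_indicator measurableSet_Ioo]
    rw [← integral_add_left_eq_self _ x0]
    have h := Measure.integral_comp_mul_left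
      (fun z => t.indicator (peakK y m v) (x0 + z)) (v / m)
    have hvm : 0 < v / m := by positivity
    rw [abs_of_pos (by positivity), smul_eq_mul] at h
    have h' : ∫ z, t.indicator (peakK y m v) (x0 + z) =
        v / m * ∫ z, t.indicator (peakK y m v) (x0 + v / m * z) := by
      rw [h, ← mul_assoc, mul_inv_cancel₀ hvm.ne', one_mul]
    rw [h', ← integral_const_mul]
    congr 1
    ext z
    simp only [H, Set.indicator]
    split_ifs with hz
    · have hl : 0 < x0 + v / m * z := lt_trans (by positivity) hz.1
      have hyl : y - m * (x0 + v / m * z) = - (v * z) := by rw [hx0]; field_simp; ring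
      unfold peakK
      rw [hyl]
      generalize x0 + v / m * z = l at hl
      have e1 : Real.sqrt (2 * Real.pi * v ^ 2 * l) = v * Real.sqrt (2 * Real.pi * l) := by
        rw [show 2 * Real.pi * v ^ 2 * l = v ^ 2 * (2 * Real.pi * l) by ring,
          Real.sqrt_mul (by positivity), Real.sqrt_sq hv.le]
      have e2 : -(-(v * z)) ^ 2 / (2 * v ^ 2 * l) = -z ^ 2 / (2 * l) := by
        field_simp
      rw [e1, e2]
      field_simp
    · simp
  have hlim : ∫ z, (Real.sqrt (2 * Real.pi * x0))⁻¹ * Real.exp (-z ^ 2 / (2 * x0)) = 1 := by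
    have : ∀ z : ℝ, -z ^ 2 / (2 * x0) = -(1 / (2 * x0)) * z ^ 2 := by intro z; ring
    simp_rw [this]
    rw [integral_const_mul, integral_gaussian]
    have : Real.pi / (1 / (2 * x0)) = 2 * Real.pi * x0 := by field_simp
    rw [this, inv_mul_cancel₀]
    positivity
  have key : Filter.Tendsto (fun v => ∫ z, H v z) (nhdsWithin 0 (Set.Ioi 0))
      (nhds (∫ z, (Real.sqrt (2 * Real.pi * x0))⁻¹ * Real.exp (-z ^ 2 / (2 * x0)))) := by
    apply tendsto_integral_filter_of_dominated_convergence
      (fun z => (Real.sqrt (2 * Real.pi * (x0 / 2)))⁻¹ * Real.exp (-(1 / (4 * x0)) * z ^ 2))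
    · refine Filter.Eventually.of_forall fun v => Measurable.aestronglyMeasurable ?_
      simp only [H, Set.indicator]
      refine Measurable.ite ?_ (by fun_prop) (by fun_prop)
      exact (show Measurable fun z : ℝ => x0 + v / m * z by fun_prop) measurableSet_Ioo
    · refine Filter.Eventually.of_forall fun v => Filter.Eventually.of_forall fun z => ?_
      simp only [H, Set.indicator]
      split_ifs with hz
      · have hl : 0 < x0 + v / m * z := lt_trans (by positivity) hz.1
        obtain ⟨h1, h2⟩ := hz
        generalize x0 + v / m * z = l at *
        rw [Real.norm_of_nonneg (by positivity)]
        have a1 : (Real.sqrt (2 * Real.pi * l))⁻¹ ≤ (Real.sqrt (2 * Real.pi * (x0 / 2)))⁻¹ := by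
          gcongr
        have a2 : Real.exp (-z ^ 2 / (2 * l)) ≤ Real.exp (-(1 / (4 * x0)) * z ^ 2) := by
          apply Real.exp_le_exp.mpr
          rw [neg_div, neg_mul, neg_le_neg_iff, one_div_mul_eq_div]
          exact div_le_div_of_nonneg_left (sq_nonneg z) (by positivity) (by linarith)
        have a3 : Real.exp (-(v ^ 2 / 8) * l) ≤ 1 := by
          apply Real.exp_le_one_iff.mpr
          have : 0 ≤ v ^ 2 / 8 * l := by positivity
          linarith
        calc _ ≤ (Real.sqrt (2 * Real.pi * (x0 / 2)))⁻¹ *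
              Real.exp (-(1 / (4 * x0)) * z ^ 2) * 1 := by gcongr
          _ = _ := mul_one _
      · rw [norm_zero]; positivity
    · exact (integrable_exp_neg_mul_sq (by positivity)).const_mul _
    · refine Filter.Eventually.of_forall fun z => ?_
      have c1 : Filter.Tendsto (fun v : ℝ => x0 + v / m * z) (nhdsWithin 0 (Set.Ioi 0))
          (nhds x0) := by
        have : ContinuousAt (fun v : ℝ => x0 + v / m * z) 0 := by fun_prop
        have := this.tendsto
        simp only [zero_div, zero_mul, add_zero] at this
        exact this.mono_left nhdsWithin_le_nhds
      have cv : Filter.Tendsto (fun v : ℝ => v) (nhdsWithin 0 (Set.Ioi 0)) (nhds 0) :=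
        nhdsWithin_le_nhds
      have mem : ∀ᶠ v in nhdsWithin (0:ℝ) (Set.Ioi 0), x0 + v / m * z ∈ t :=
        c1 (Ioo_mem_nhds (by linarith) (by linarith))
      have c2 : Filter.Tendsto (fun v : ℝ => (Real.sqrt (2 * Real.pi * (x0 + v / m * z)))⁻¹ *
          Real.exp (-z ^ 2 / (2 * (x0 + v / m * z))) * Real.exp (-(v ^ 2 / 8) * (x0 + v / m * z)))
          (nhdsWithin 0 (Set.Ioi 0))
          (nhds ((Real.sqrt (2 * Real.pi * x0))⁻¹ *
          Real.exp (-z ^ 2 / (2 * x0)) * Real.exp (-((0:ℝ) ^ 2 / 8) * x0))) := by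
        refine ((Filter.Tendsto.inv₀ ?_ (by positivity)).mul ?_).mul ?_
        · exact (Real.continuous_sqrt.tendsto _).comp (c1.const_mul _)
        · exact (Real.continuous_exp.tendsto _).comp
            (tendsto_const_nhds.div (c1.const_mul _) (by positivity))
        · exact (Real.continuous_exp.tendsto _).comp ((((cv.pow 2).div_const _).neg).mul c1)
      simp only [ne_eq, OfNat.ofNat_ne_zero, not_false_eq_true, zero_pow, zero_div, neg_zero,
        zero_mul, Real.exp_zero, mul_one] at c2
      refine c2.congr' ?_
      filter_upwards [mem] with v hv
      simp only [H, Set.indicator, hv, if_true]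
  rw [hlim] at key
  refine key.congr' ?_
  filter_upwards [self_mem_nhdsWithin] with v hv
  exact (hsub v hv).symm

/-- The common integral. -/
noncomputable def vgF (p lam v y m : ℝ) : ℝ :=
  ∫ l in Set.Ioi (0 : ℝ), (Real.sqrt (2 * Real.pi * v ^ 2 * l))⁻¹ *
    Real.exp (-(y - m * l) ^ 2 / (2 * v ^ 2 * l)) * Real.exp (-(v ^ 2 / 8) * l) *
    (l ^ (p - 1) * Real.exp (-lam * l))

lemma vgF_tendsto {p lam y m : ℝ} (hp : 0 < p) (hlam : 0 < lam) (hy : 0 < y) (hm : 0 < m) :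
    Filter.Tendsto (fun v => vgF p lam v y m) (nhdsWithin 0 (Set.Ioi 0))
      (nhds (m⁻¹ * ((y / m) ^ (p - 1) * Real.exp (-lam * (y / m))))) := by
  have hx : 0 < y / m := by positivity
  have peak := tendsto_setIntegral_peak_smul_of_integrableOn_of_tendsto
    (μ := (volume : Measure ℝ)) (s := Set.Ioi (0:ℝ)) (x₀ := y / m)
    (l := nhdsWithin (0:ℝ) (Set.Ioi 0)) (φ := peakK y m)
    (g := fun l => l ^ (p - 1) * Real.exp (-lam * l))
    (a := (y / m) ^ (p - 1) * Real.exp (-lam * (y / m)))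
    measurableSet_Ioi (t := Set.Ioo (y / m / 2) (2 * (y / m))) measurableSet_Ioo
    (fun l hl => lt_trans (by positivity) hl.1)
    (mem_nhdsWithin_of_mem_nhds (Ioo_mem_nhds (by linarith) (by linarith)))
    (by simp)
    (Filter.Eventually.of_forall fun v l _ => peakK_nonneg hm y v l)
    ?_ (peakK_norm hy hm)
    (Filter.Eventually.of_forall fun v => (measurable_peakK y m v).aestronglyMeasurable)
    ?_ ?_
  · refine (peak.const_mul m⁻¹).congr fun v => ?_
    rw [vgF, ← integral_const_mul]
    congr 1
    ext l
    rw [peakK, smul_eq_mul]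
    field_simp
  · intro u hu hxu
    obtain ⟨ε, hε, hball⟩ := Metric.isOpen_iff.mp hu _ hxu
    set C := m * (1 / (m * ε) ^ 2 + 2 * (y / (m * ε) ^ 2 + 1 / (m * ε)) / m) with hC
    have hlim : Filter.Tendsto (fun v : ℝ => v * C) (nhdsWithin 0 (Set.Ioi 0)) (nhds 0) := by
      have : ContinuousAt (fun v : ℝ => v * C) 0 := by fun_prop
      have := this.tendsto
      rw [zero_mul] at this
      exact this.mono_left nhdsWithin_le_nhds
    rw [Metric.tendstoUniformlyOn_iff]
    intro η hη
    filter_upwards [hlim.eventually (gt_mem_nhds hη), self_mem_nhdsWithin] with v hv hv0 l hl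
    have hd : m * ε ≤ |y - m * l| := by
      have h1 : l ∉ Metric.ball (y / m) ε := fun h => hl.2 (hball h)
      rw [Metric.mem_ball, not_lt, Real.dist_eq] at h1
      have : y - m * l = m * -(l - y / m) := by field_simp; ring
      rw [this, abs_mul, abs_neg, abs_of_pos hm]
      gcongr
    have := peakK_bound hy hm (by positivity) hv0 hl.1 hd
    simp only [Pi.zero_apply, dist_zero_left]
    rw [Real.norm_of_nonneg (peakK_nonneg hm y v l)]
    exact lt_of_le_of_lt this hv
  · have := integrableOn_rpow_mul_exp_neg_mul_rpow (p := 1) (s := p - 1) (b := lam)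
      (by linarith) one_pos hlam
    simpa using this
  · have : ContinuousAt (fun l : ℝ => l ^ (p - 1) * Real.exp (-lam * l)) (y / m) := by
      apply ContinuousAt.mul
      · exact Real.continuousAt_rpow_const _ _ (Or.inl hx.ne')
      · fun_prop
    exact this.tendsto.mono_left nhdsWithin_le_nhds

lemma vgF_neg_tendsto {p lam y m : ℝ} (hp : 0 < p) (hlam : 0 < lam) (hy : 0 < y) (hm : 0 < m) :
    Filter.Tendsto (fun v => vgF p lam v y (-m)) (nhdsWithin 0 (Set.Ioi 0)) (nhds 0) := by
  have hF := vgF_tendsto hp hlam hy hm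
  have hE : Filter.Tendsto (fun v : ℝ => Real.exp (-(2 * y * m * (v⁻¹) ^ 2)))
      (nhdsWithin 0 (Set.Ioi 0)) (nhds 0) := by
    apply Real.tendsto_exp_neg_atTop_nhds_zero.comp
    apply Filter.Tendsto.const_mul_atTop (by positivity)
    exact (Filter.tendsto_pow_atTop two_ne_zero).comp tendsto_inv_nhdsGT_zero
  have := hE.mul hF
  rw [zero_mul] at this
  refine this.congr' ?_
  filter_upwards [self_mem_nhdsWithin] with v hv
  have hv : 0 < v := hv
  rw [vgF, vgF, ← integral_const_mul]
  apply setIntegral_congr_fun measurableSet_Ioi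
  intro l hl
  have hl : 0 < l := hl
  have : -(y - -m * l) ^ 2 / (2 * v ^ 2 * l) =
      -(2 * y * m * (v⁻¹) ^ 2) + -(y - m * l) ^ 2 / (2 * v ^ 2 * l) := by
    field_simp; ring
  simp only [this, Real.exp_add]
  ring

lemma vgF_neg_neg (p lam v y m : ℝ) : vgF p lam v (-y) (-m) = vgF p lam v y m := by
  unfold vgF
  congr 1
  ext l
  rw [show (-y - -m * l) ^ 2 = (y - m * l) ^ 2 by ring]

lemma vgPlus_eq (c lam mu T x : ℝ) {v : ℝ} (hv : 0 < v) :
    vgPlus c lam mu T v x = ((lam + mu / 2) ^ (c * T) / Real.Gamma (c * T)) *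
      Real.exp (-x / 2) * vgF (c * T) lam v x mu := by
  rw [vgPlus, vgF, ← integral_const_mul]
  apply setIntegral_congr_fun measurableSet_Ioi
  intro l hl
  have hl : 0 < l := hl
  have : Real.exp (-(x - (mu - v ^ 2 / 2) * l) ^ 2 / (2 * v ^ 2 * l)) *
      Real.exp (-(lam + mu / 2) * l) = Real.exp (-x / 2) *
      (Real.exp (-(x - mu * l) ^ 2 / (2 * v ^ 2 * l)) * Real.exp (-(v ^ 2 / 8) * l) *
        Real.exp (-lam * l)) := by
    simp only [← Real.exp_add]
    congr 1
    field_simp; ring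
  linear_combination ((Real.sqrt (2 * Real.pi * v ^ 2 * l))⁻¹ *
      ((lam + mu / 2) ^ (c * T) / Real.Gamma (c * T)) * l ^ (c * T - 1)) * this

lemma vgMinus_eq (c lam mu T x : ℝ) {v : ℝ} (hv : 0 < v) :
    vgMinus c lam mu T v x = ((lam - mu / 2) ^ (c * T) / Real.Gamma (c * T)) *
      Real.exp (-x / 2) * vgF (c * T) lam v x (-mu) := by
  have := vgPlus_eq c lam (-mu) T x hv
  rw [show lam + -mu / 2 = lam - mu / 2 by ring] at this
  rw [← this, vgMinus, vgPlus]
  simp only [show lam + -mu / 2 = lam - mu / 2 by ring]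


/-- **Pointwise convergence of the variance-gamma mixture densities to the double gamma
density as `v → 0⁺`**, at every `x ≠ 0`. -/
theorem vgMix_tendsto_doubleGamma_pointwise
    (c lam mu T : ℝ)
    (hc : 0 < c) (hlam : 0 < lam) (hmu : 0 < mu) (hT : 0 < T)
    (hmu2lam : mu < 2 * lam) :
    ∀ x : ℝ, x ≠ 0 →
      Filter.Tendsto (fun v => vgMix c lam mu T v x) (nhdsWithin 0 (Set.Ioi 0))
        (nhds (doubleGamma c lam mu T x)) := by
  intro x hx
  have hp : 0 < c * T := by positivity
  set A := mixA c lam mu T with hA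
  set B := mixB c lam mu T with hB
  have hred : ∀ P M : ℝ,
      Filter.Tendsto (fun v => vgF (c * T) lam v x mu) (nhdsWithin 0 (Set.Ioi 0)) (nhds P) →
      Filter.Tendsto (fun v => vgF (c * T) lam v x (-mu)) (nhdsWithin 0 (Set.Ioi 0)) (nhds M) →
      Filter.Tendsto (fun v => vgMix c lam mu T v x) (nhdsWithin 0 (Set.Ioi 0))
        (nhds ((A * (((lam - mu / 2) ^ (c * T) / Real.Gamma (c * T)) * Real.exp (-x / 2) * M) +
          B * (((lam + mu / 2) ^ (c * T) / Real.Gamma (c * T)) * Real.exp (-x / 2) * P)) /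
          (A + B))) := by
    intro P M hP hM
    refine (((((hM.const_mul _).const_mul A).add ((hP.const_mul _).const_mul B)).div_const
      (A + B))).congr' ?_
    filter_upwards [self_mem_nhdsWithin] with v hv
    rw [vgMix, vgPlus_eq c lam mu T x hv, vgMinus_eq c lam mu T x hv]
  rcases lt_or_gt_of_ne hx with h | h
  · have hP : Filter.Tendsto (fun v => vgF (c * T) lam v x mu) (nhdsWithin 0 (Set.Ioi 0))
        (nhds 0) := by
      refine (vgF_neg_tendsto hp hlam (neg_pos.mpr h) hmu).congr fun v => ?_
      exact vgF_neg_neg _ _ _ _ _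
    have hM := vgF_tendsto hp hlam (neg_pos.mpr h) hmu
    have hM' := hM.congr fun v => (vgF_neg_neg (c * T) lam v (-x) mu).symm
    rw [neg_neg] at hM'
    convert hred _ _ hP hM' using 2
    have e1 : lam - mu / 2 = lamMinus lam mu * mu := by rw [lamMinus]; field_simp
    have hpos : 0 < lamMinus lam mu := by
      have : 0 < lamMinus lam mu * mu := by rw [← e1]; linarith
      exact pos_of_mul_pos_left this hmu.le
    have e2 : Real.exp (lamMinus lam mu * x) =
        Real.exp (-x / 2) * Real.exp (-lam * (-x / mu)) := by
      rw [← Real.exp_add]; congr 1; rw [lamMinus]; field_simp; ring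
    rw [doubleGamma, if_pos h, ← hA, ← hB, e1, e2, Real.mul_rpow hpos.le hmu.le,
      Real.div_rpow (neg_pos.mpr h).le hmu.le, Real.rpow_sub_one hmu.ne']
    have := (Real.rpow_pos_of_pos hmu (c * T)).ne'
    field_simp
    ring
  · have hM := vgF_neg_tendsto hp hlam h hmu
    have hP := vgF_tendsto hp hlam h hmu
    convert hred _ _ hP hM using 2
    have e1 : lam + mu / 2 = lamPlus lam mu * mu := by rw [lamPlus]; field_simp
    have hpos : 0 < lamPlus lam mu := by rw [lamPlus]; positivity
    have e2 : Real.exp (-lamPlus lam mu * x) =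
        Real.exp (-x / 2) * Real.exp (-lam * (x / mu)) := by
      rw [← Real.exp_add]; congr 1; rw [lamPlus]; field_simp; ring
    rw [doubleGamma, if_neg h.not_gt, if_pos h, ← hA, ← hB, e1, e2,
      Real.mul_rpow hpos.le hmu.le,
      Real.div_rpow h.le hmu.le, Real.rpow_sub_one hmu.ne']
    have := (Real.rpow_pos_of_pos hmu (c * T)).ne'
    field_simp
    ring
end

section
/- With f_v and f_0 as defined (with the same parameters c, λ, μ, T), for every compact set A ⊂ ℝ with 0 ∉ A, one has sup_{x ∈ A} | f_v(x) − f_0(x) | → 0 as v → 0+; i.e., f_v converges to f_0 uniformly on compact subsets of ℝ \ {0}. -/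
open MeasureTheory

noncomputable def vgH (k th C m v x : ℝ) : ℝ :=
  ∫ l in Set.Ioi (0 : ℝ),
    (Real.sqrt (2 * Real.pi * v ^ 2 * l))⁻¹ *
      Real.exp (-(x - m * l) ^ 2 / (2 * v ^ 2 * l)) * C * l ^ (k - 1) *
      Real.exp (-th * l)

lemma vgH_neg (k th C m v x : ℝ) (hv : 0 < v) :
    vgH k th C m v (-x) = Real.exp (-(2 * x * m / v ^ 2)) * vgH k th C m v x := by
  unfold vgH
  rw [← integral_const_mul]
  refine setIntegral_congr_fun measurableSet_Ioi fun l hl => ?_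
  have hl : 0 < l := hl
  have : -(-x - m * l) ^ 2 / (2 * v ^ 2 * l) =
      -(2 * x * m / v ^ 2) + -(x - m * l) ^ 2 / (2 * v ^ 2 * l) := by
    field_simp
    ring
  simp only [this, Real.exp_add]
  ring

lemma vgH_neg_neg (k th C m v x : ℝ) : vgH k th C (-m) v (-x) = vgH k th C m v x := by
  unfold vgH
  refine setIntegral_congr_fun measurableSet_Ioi fun l hl => ?_
  have : (-x - -m * l) ^ 2 = (x - m * l) ^ 2 := by ring
  simp only [this]

lemma vgH_subst (k th C m v x : ℝ) (hm : 0 < m) (hv : 0 < v) (hx : 0 < x) :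
    vgH k th C m v x = ∫ u : ℝ, 2 * C / Real.sqrt (2 * Real.pi) *
      Real.exp (-(2 * x * m) * (Real.sinh (v * u) / v) ^ 2) *
      (x / m) ^ (k - 1 / 2) * Real.exp ((2 * k - 1) * (v * u)) *
      Real.exp (-th * (x / m * Real.exp (2 * (v * u)))) := by
  have himg : (fun u : ℝ => x / m * Real.exp (2 * (v * u))) '' Set.univ = Set.Ioi 0 := by
    ext l
    simp only [Set.image_univ, Set.mem_range, Set.mem_Ioi]
    constructor
    · rintro ⟨u, rfl⟩
      positivity
    · intro hl
      refine ⟨Real.log (l * m / x) / (2 * v), ?_⟩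
      have : 2 * (v * (Real.log (l * m / x) / (2 * v))) = Real.log (l * m / x) := by
        field_simp
      rw [this, Real.exp_log (by positivity)]
      field_simp
  have hder : ∀ u ∈ (Set.univ : Set ℝ),
      HasDerivWithinAt (fun u : ℝ => x / m * Real.exp (2 * (v * u)))
        (x / m * Real.exp (2 * (v * u)) * (2 * v)) Set.univ u := by
    intro u _
    have h1 : HasDerivAt (fun u : ℝ => 2 * (v * u)) (2 * v) u := by
      simpa using ((hasDerivAt_id u).const_mul v).const_mul 2
    have := (h1.exp.const_mul (x / m)).hasDerivWithinAt (s := Set.univ)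
    rw [mul_assoc]
    exact this
  have hinj : Set.InjOn (fun u : ℝ => x / m * Real.exp (2 * (v * u))) Set.univ := by
    intro a _ b _ hab
    have h1 : x / m ≠ 0 := by positivity
    have := Real.exp_injective (mul_left_cancel₀ h1 hab)
    have h2 := mul_left_cancel₀ two_ne_zero this
    exact mul_left_cancel₀ hv.ne' h2
  unfold vgH
  rw [← himg, integral_image_eq_integral_abs_deriv_smul MeasurableSet.univ hder hinj,
    setIntegral_univ]
  refine integral_congr_ae (Filter.Eventually.of_forall fun u => ?_)
  have hl : 0 < x / m * Real.exp (2 * (v * u)) := by positivity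
  have hexp : -(x - m * (x / m * Real.exp (2 * (v * u)))) ^ 2 /
      (2 * v ^ 2 * (x / m * Real.exp (2 * (v * u)))) =
      -(2 * x * m) * (Real.sinh (v * u) / v) ^ 2 := by
    rw [Real.sinh_eq, two_mul (v * u), Real.exp_add, Real.exp_neg]
    have : 0 < Real.exp (v * u) := Real.exp_pos _
    field_simp
    ring
  have hpow : (x / m) ^ (k - 1 / 2) * Real.exp ((2 * k - 1) * (v * u)) =
      (x / m * Real.exp (2 * (v * u))) ^ (k - 1 / 2) := by
    rw [Real.mul_rpow (by positivity) (by positivity), ← Real.exp_mul]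
    congr 2
    ring
  have hsq : Real.sqrt (2 * Real.pi * v ^ 2 * (x / m * Real.exp (2 * (v * u)))) =
      Real.sqrt (2 * Real.pi) * v * Real.sqrt (x / m * Real.exp (2 * (v * u))) := by
    rw [Real.sqrt_mul (by positivity), Real.sqrt_mul (by positivity), Real.sqrt_sq hv.le]
  simp only [hexp, hsq, smul_eq_mul]
  rw [mul_assoc (2 * C / Real.sqrt (2 * Real.pi) * _), hpow]
  generalize x / m * Real.exp (2 * (v * u)) = l at hl
  rw [abs_of_pos (by positivity)]
  have hk : l ^ (k - 1 / 2) = l ^ (k - 1) * Real.sqrt l := by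
    rw [Real.sqrt_eq_rpow, ← Real.rpow_add hl]
    congr 1
    ring
  rw [hk]
  have h3 : 0 < Real.sqrt l := Real.sqrt_pos.2 hl
  have h4 : 0 < Real.sqrt (2 * Real.pi) := by positivity
  have h5 : l = Real.sqrt l * Real.sqrt l := (Real.mul_self_sqrt hl.le).symm
  generalize l ^ (k - 1) = p
  generalize Real.exp (-th * l) = q
  generalize Real.exp (-(2 * x * m) * (Real.sinh (v * u) / v) ^ 2) = r
  generalize Real.sqrt l = t at *
  subst h5
  field_simp

lemma abs_le_abs_sinh (y : ℝ) : y ^ 2 ≤ Real.sinh y ^ 2 := by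
  rcases le_total 0 y with h | h
  · have := Real.self_le_sinh_iff.2 h
    nlinarith
  · have := Real.sinh_le_self_iff.2 h
    nlinarith

open Filter Topology in
lemma vgH_tendsto {ι : Type*} {F : Filter ι} [F.IsCountablyGenerated]
    (k th C mu x0 : ℝ) (hth : 0 < th) (hmu : 0 < mu) (hx0 : 0 < x0)
    (m v x : ι → ℝ) (hm : Tendsto m F (𝓝 mu)) (hv : Tendsto v F (𝓝[>] 0))
    (hx : Tendsto x F (𝓝 x0)) :
    Tendsto (fun i => vgH k th C (m i) (v i) (x i)) F
      (𝓝 (C * ((x0 / mu) ^ (k - 1) / mu) * Real.exp (-th * (x0 / mu)))) := by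
  have hv0 : Tendsto v F (𝓝 0) := hv.mono_right nhdsWithin_le_nhds
  have ev : ∀ᶠ i in F, 0 < v i := hv.eventually self_mem_nhdsWithin
  have ev1 : ∀ᶠ i in F, v i < 1 := hv0.eventually_lt_const one_pos
  have em : ∀ᶠ i in F, 0 < m i := hm.eventually_const_lt hmu
  have ex : ∀ᶠ i in F, 0 < x i := hx.eventually_const_lt hx0
  have hxm : Tendsto (fun i => 2 * x i * m i) F (𝓝 (2 * x0 * mu)) :=
    (hx.const_mul 2).mul hm
  have exm : ∀ᶠ i in F, x0 * mu < 2 * x i * m i :=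
    hxm.eventually_const_lt (by nlinarith [mul_pos hx0 hmu])
  have hdiv : Tendsto (fun i => x i / m i) F (𝓝 (x0 / mu)) := hx.div hm hmu.ne'
  have hq : 0 < x0 / mu := by positivity
  have hpw : Tendsto (fun i => (x i / m i) ^ (k - 1 / 2)) F (𝓝 ((x0 / mu) ^ (k - 1 / 2))) :=
    hdiv.rpow_const (Or.inl hq.ne')
  have epw : ∀ᶠ i in F, (x i / m i) ^ (k - 1 / 2) < (x0 / mu) ^ (k - 1 / 2) + 1 :=
    hpw.eventually_lt_const (by linarith)
  set b := x0 * mu with hb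
  have hbpos : 0 < b := mul_pos hx0 hmu
  set B := |2 * k - 1| with hB
  have hBn : 0 ≤ B := abs_nonneg _
  set P := (x0 / mu) ^ (k - 1 / 2) with hP
  have hPpos : 0 < P := Real.rpow_pos_of_pos hq _
  set D := |2 * C / Real.sqrt (2 * Real.pi)| with hD
  have hlim : C * ((x0 / mu) ^ (k - 1) / mu) * Real.exp (-th * (x0 / mu)) =
      ∫ u : ℝ, 2 * C / Real.sqrt (2 * Real.pi) * Real.exp (-(2 * x0 * mu) * u ^ 2) * P * 1 *
        Real.exp (-th * (x0 / mu * 1)) := by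
    simp only [mul_one]
    rw [integral_mul_const, integral_mul_const, integral_const_mul, integral_gaussian]
    congr 1
    have h1 : P = (x0 / mu) ^ (k - 1) * Real.sqrt (x0 / mu) := by
      rw [hP, Real.sqrt_eq_rpow, ← Real.rpow_add hq]
      congr 1
      ring
    rw [h1]
    generalize (x0 / mu) ^ (k - 1) = p
    have h2 : Real.sqrt (Real.pi / (2 * x0 * mu)) * Real.sqrt (x0 / mu) =
        Real.sqrt (2 * Real.pi) / (2 * mu) := by
      rw [← Real.sqrt_mul (by positivity)]
      have : Real.pi / (2 * x0 * mu) * (x0 / mu) = (2 * Real.pi) / (2 * mu) ^ 2 := by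
        field_simp
        try ring
      rw [this, Real.sqrt_div (by positivity), Real.sqrt_sq (by positivity)]
    have h4 : 0 < Real.sqrt (2 * Real.pi) := by positivity
    calc C * (p / mu) = 2 * C / Real.sqrt (2 * Real.pi) * p *
        (Real.sqrt (2 * Real.pi) / (2 * mu)) := by field_simp
      _ = _ := by rw [← h2]; ring
  rw [hlim]
  have hcongr : (fun i => ∫ u : ℝ, 2 * C / Real.sqrt (2 * Real.pi) *
      Real.exp (-(2 * x i * m i) * (Real.sinh (v i * u) / v i) ^ 2) *
      (x i / m i) ^ (k - 1 / 2) * Real.exp ((2 * k - 1) * (v i * u)) *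
      Real.exp (-th * (x i / m i * Real.exp (2 * (v i * u))))) =ᶠ[F]
      (fun i => vgH k th C (m i) (v i) (x i)) := by
    filter_upwards [ev, em, ex] with i h1 h2 h3
    exact (vgH_subst k th C (m i) (v i) (x i) h2 h1 h3).symm
  refine Tendsto.congr' hcongr ?_
  refine tendsto_integral_filter_of_dominated_convergence
    (fun u => D * (P + 1) * Real.exp (B ^ 2 / (2 * b)) * Real.exp (-(b / 2) * u ^ 2)) ?_ ?_ ?_ ?_
  · refine Eventually.of_forall fun i => Continuous.aestronglyMeasurable ?_
    have : Continuous Real.sinh := Real.continuous_sinh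
    fun_prop
  · filter_upwards [ev, ev1, em, ex, exm, epw] with i h1 h2 h3 h4 h5 h6
    refine Eventually.of_forall fun u => ?_
    have hr : 0 < (x i / m i) ^ (k - 1 / 2) := Real.rpow_pos_of_pos (div_pos h4 h3) _
    rw [norm_mul, norm_mul, norm_mul, norm_mul, Real.norm_eq_abs, ← hD]
    simp only [Real.norm_eq_abs, Real.abs_exp]
    rw [abs_of_pos hr]
    have e1 : Real.exp (-th * (x i / m i * Real.exp (2 * (v i * u)))) ≤ 1 := by
      rw [Real.exp_le_one_iff]
      have : 0 < th * (x i / m i * Real.exp (2 * (v i * u))) := by positivity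
      linarith
    have e2 : Real.exp ((2 * k - 1) * (v i * u)) ≤ Real.exp (B * |u|) := by
      rw [Real.exp_le_exp]
      refine (le_abs_self _).trans ?_
      rw [abs_mul, abs_mul, abs_of_pos h1]
      refine mul_le_mul_of_nonneg_left ?_ hBn
      nlinarith [abs_nonneg u]
    have e3 : Real.exp (-(2 * x i * m i) * (Real.sinh (v i * u) / v i) ^ 2) ≤
        Real.exp (-b * u ^ 2) := by
      rw [Real.exp_le_exp]
      have hs : u ^ 2 ≤ (Real.sinh (v i * u) / v i) ^ 2 := by
        rw [div_pow, le_div_iff₀ (by positivity)]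
        have := abs_le_abs_sinh (v i * u)
        nlinarith
      nlinarith [sq_nonneg u, mul_le_mul h5.le hs (sq_nonneg u) (by positivity)]
    have e4 : Real.exp (-b * u ^ 2) * Real.exp (B * |u|) ≤
        Real.exp (B ^ 2 / (2 * b)) * Real.exp (-(b / 2) * u ^ 2) := by
      rw [← Real.exp_add, ← Real.exp_add, Real.exp_le_exp]
      have : B ^ 2 / (2 * b) + -(b / 2) * u ^ 2 - (-b * u ^ 2 + B * |u|) =
          (B - b * |u|) ^ 2 / (2 * b) := by
        rw [← sq_abs u]
        field_simp
        ring
      have h7 : 0 ≤ (B - b * |u|) ^ 2 / (2 * b) := by positivity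
      linarith
    have hDn : 0 ≤ D := abs_nonneg _
    calc _ ≤ D * Real.exp (-b * u ^ 2) * (P + 1) * Real.exp (B * |u|) * 1 := by gcongr
      _ = D * (P + 1) * (Real.exp (-b * u ^ 2) * Real.exp (B * |u|)) := by ring
      _ ≤ D * (P + 1) * (Real.exp (B ^ 2 / (2 * b)) * Real.exp (-(b / 2) * u ^ 2)) := by gcongr
      _ = _ := by ring
  · exact (integrable_exp_neg_mul_sq (by positivity)).const_mul _
  · refine Eventually.of_forall fun u => ?_
    have hvu : Tendsto (fun i => v i * u) F (𝓝 0) := by simpa using hv0.mul_const u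
    have hsinh : Tendsto (fun i => Real.sinh (v i * u) / v i) F (𝓝 u) := by
      have h1 : HasDerivAt (fun w : ℝ => Real.sinh (w * u)) u 0 := by
        have h2 : HasDerivAt (fun w : ℝ => w * u) u 0 := by
          simpa using (hasDerivAt_id (0 : ℝ)).mul_const u
        simpa using h2.sinh
      have h3 := h1.tendsto_slope_zero_right.comp hv
      refine h3.congr fun i => ?_
      simp [div_eq_inv_mul]
    have t1 : Tendsto (fun i => Real.exp ((2 * k - 1) * (v i * u))) F (𝓝 1) := by
      simpa using (hvu.const_mul (2 * k - 1)).rexp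
    have t2 : Tendsto (fun i => Real.exp (2 * (v i * u))) F (𝓝 1) := by
      simpa using (hvu.const_mul 2).rexp
    exact ((((hxm.neg.mul (hsinh.pow 2)).rexp.const_mul _).mul hpw).mul t1).mul
      ((hdiv.mul t2).const_mul (-th)).rexp

open Filter Topology in
lemma vgH_tendsto_neg {ι : Type*} {F : Filter ι} [F.IsCountablyGenerated]
    (k th C mu x0 : ℝ) (hth : 0 < th) (hmu : 0 < mu) (hx0 : x0 < 0)
    (m v x : ι → ℝ) (hm : Tendsto m F (𝓝 mu)) (hv : Tendsto v F (𝓝[>] 0))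
    (hx : Tendsto x F (𝓝 x0)) :
    Tendsto (fun i => vgH k th C (m i) (v i) (x i)) F (𝓝 0) := by
  have ev : ∀ᶠ i in F, 0 < v i := hv.eventually self_mem_nhdsWithin
  have h1 := vgH_tendsto k th C mu (-x0) hth hmu (by linarith) m v (fun i => -x i) hm hv hx.neg
  have hv0 : Tendsto v F (𝓝 0) := hv.mono_right nhdsWithin_le_nhds
  have hinv : Tendsto (fun i => (v i ^ 2)⁻¹) F atTop := by
    refine tendsto_inv_nhdsGT_zero.comp ?_
    refine tendsto_nhdsWithin_iff.2 ⟨by simpa using hv0.pow 2, ?_⟩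
    filter_upwards [ev] with i hi
    exact pow_pos hi 2
  have h2 : Tendsto (fun i => Real.exp (-(2 * -x i * m i / v i ^ 2))) F (𝓝 0) := by
    refine Real.tendsto_exp_neg_atTop_nhds_zero.comp ?_
    have h3 : Tendsto (fun i => 2 * -x i * m i) F (𝓝 (2 * -x0 * mu)) :=
      (hx.neg.const_mul 2).mul hm
    exact h3.pos_mul_atTop (by nlinarith) hinv
  have h3 := h2.mul h1
  rw [zero_mul] at h3
  refine h3.congr' ?_
  filter_upwards [ev] with i hi
  rw [← vgH_neg k th C (m i) (v i) (-x i) hi, neg_neg]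

open Filter Topology in
/-- **Uniform convergence on compact subsets of `ℝ \ {0}`** of the variance-gamma mixture
densities to the double gamma density as `v → 0⁺`. -/
theorem vgMix_tendstoUniformlyOn_doubleGamma
    (c lam mu T : ℝ)
    (hc : 0 < c) (hlam : 0 < lam) (hmu : 0 < mu) (hT : 0 < T)
    (hmu2lam : mu < 2 * lam) :
    ∀ A : Set ℝ, IsCompact A → 0 ∉ A →
      TendstoUniformlyOn (fun v x => vgMix c lam mu T v x) (doubleGamma c lam mu T)
        (nhdsWithin 0 (Set.Ioi 0)) A := by
  intro A hA h0
  rw [← tendstoLocallyUniformlyOn_iff_tendstoUniformlyOn_of_compact hA,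
    tendstoLocallyUniformlyOn_iff_forall_tendsto]
  intro x0 hx0A
  have hx0 : x0 ≠ 0 := fun h => h0 (h ▸ hx0A)
  have hkpos : 0 < c * T := mul_pos hc hT
  have hthp : 0 < lam + mu / 2 := by positivity
  have hthm : 0 < lam - mu / 2 := by linarith
  have hlp : lamPlus lam mu = (lam + mu / 2) / mu := by
    unfold lamPlus
    field_simp
  have hlm : lamMinus lam mu = (lam - mu / 2) / mu := by
    unfold lamMinus
    field_simp
  have hlpp : 0 < lamPlus lam mu := by rw [hlp]; positivity
  have hlmp : 0 < lamMinus lam mu := by rw [hlm]; positivity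
  -- rescaling identity for the limits
  have resc : ∀ th y G : ℝ, 0 < th → 0 < y →
      th ^ (c * T) / G * ((y / mu) ^ (c * T - 1) / mu) * Real.exp (-th * (y / mu)) =
      (th / mu) ^ (c * T) / G * y ^ (c * T - 1) * Real.exp (-(th / mu) * y) := by
    intro th y G hth hy
    rw [Real.div_rpow hy.le hmu.le, Real.div_rpow hth.le hmu.le, Real.rpow_sub_one hmu.ne']
    have h1 : 0 < mu ^ (c * T) := Real.rpow_pos_of_pos hmu _
    have h2 : -th * (y / mu) = -(th / mu) * y := by ring
    rw [h2]
    field_simp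
  set F : Filter (ℝ × ℝ) := nhdsWithin 0 (Set.Ioi 0) ×ˢ nhdsWithin x0 A with hF
  have hv : Tendsto (fun p : ℝ × ℝ => p.1) F (𝓝[>] 0) := tendsto_fst
  have hx : Tendsto (fun p : ℝ × ℝ => p.2) F (𝓝 x0) :=
    tendsto_snd.mono_right nhdsWithin_le_nhds
  have hv0 : Tendsto (fun p : ℝ × ℝ => p.1) F (𝓝 0) := hv.mono_right nhdsWithin_le_nhds
  have hm1 : Tendsto (fun p : ℝ × ℝ => mu - p.1 ^ 2 / 2) F (𝓝 mu) := by
    simpa using ((hv0.pow 2).div_const 2).const_sub mu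
  have hm2 : Tendsto (fun p : ℝ × ℝ => mu + p.1 ^ 2 / 2) F (𝓝 mu) := by
    simpa using ((hv0.pow 2).div_const 2).const_add mu
  have hP : ∀ v x, vgPlus c lam mu T v x = vgH (c * T) (lam + mu / 2)
      ((lam + mu / 2) ^ (c * T) / Real.Gamma (c * T)) (mu - v ^ 2 / 2) v x := fun v x => rfl
  have hM : ∀ v x, vgMinus c lam mu T v x = vgH (c * T) (lam - mu / 2)
      ((lam - mu / 2) ^ (c * T) / Real.Gamma (c * T)) (mu + v ^ 2 / 2) v (-x) := by
    intro v x
    rw [← vgH_neg_neg, neg_neg, neg_add']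
    rfl
  suffices h : Tendsto (fun p : ℝ × ℝ => doubleGamma c lam mu T p.2) F
      (𝓝 (doubleGamma c lam mu T x0)) ∧
      Tendsto (fun p : ℝ × ℝ => vgMix c lam mu T p.1 p.2) F (𝓝 (doubleGamma c lam mu T x0)) from
    (h.1.prodMk_nhds h.2).mono_right (nhds_le_uniformity _)
  rcases lt_or_gt_of_ne hx0 with hneg | hpos
  · have hval : ∀ x < 0, doubleGamma c lam mu T x =
        (mixA c lam mu T / (mixA c lam mu T + mixB c lam mu T)) *
        (lamMinus lam mu ^ (c * T) / Real.Gamma (c * T)) * (-x) ^ (c * T - 1) *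
        Real.exp (lamMinus lam mu * x) := fun x h => by rw [doubleGamma, if_pos h]
    rw [hval x0 hneg]
    constructor
    · have e : ∀ᶠ p in F, p.2 < 0 := hx.eventually_lt_const hneg
      refine Tendsto.congr' (e.mono fun p hp => (hval p.2 hp).symm) ?_
      exact ((hx.neg.rpow_const (Or.inl (by simpa using hx0))).const_mul _).mul
        (hx.const_mul _).rexp
    · have t1 := vgH_tendsto (c * T) (lam - mu / 2)
        ((lam - mu / 2) ^ (c * T) / Real.Gamma (c * T)) mu (-x0) hthm hmu (by linarith)
        _ _ _ hm2 hv hx.neg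
      have t2 := vgH_tendsto_neg (c * T) (lam + mu / 2)
        ((lam + mu / 2) ^ (c * T) / Real.Gamma (c * T)) mu x0 hthp hmu hneg
        _ _ _ hm1 hv hx
      rw [resc _ _ _ hthm (by linarith), ← hlm] at t1
      have t3 := ((t1.const_mul (mixA c lam mu T)).add (t2.const_mul (mixB c lam mu T))).div_const
        (mixA c lam mu T + mixB c lam mu T)
      simp only [← hP, ← hM] at t3
      convert t3 using 2
      · rfl
      · rw [neg_mul_neg]
        ring
  · have hval : ∀ x, 0 < x → doubleGamma c lam mu T x =
        (mixB c lam mu T / (mixA c lam mu T + mixB c lam mu T)) *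
        (lamPlus lam mu ^ (c * T) / Real.Gamma (c * T)) * x ^ (c * T - 1) *
        Real.exp (-lamPlus lam mu * x) := fun x h => by
      rw [doubleGamma, if_neg (not_lt.2 h.le), if_pos h]
    rw [hval x0 hpos]
    constructor
    · have e : ∀ᶠ p in F, 0 < p.2 := hx.eventually_const_lt hpos
      refine Tendsto.congr' (e.mono fun p hp => (hval p.2 hp).symm) ?_
      exact ((hx.rpow_const (Or.inl hx0)).const_mul _).mul (hx.const_mul _).rexp
    · have t1 := vgH_tendsto_neg (c * T) (lam - mu / 2)
        ((lam - mu / 2) ^ (c * T) / Real.Gamma (c * T)) mu (-x0) hthm hmu (by linarith)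
        _ _ _ hm2 hv hx.neg
      have t2 := vgH_tendsto (c * T) (lam + mu / 2)
        ((lam + mu / 2) ^ (c * T) / Real.Gamma (c * T)) mu x0 hthp hmu hpos
        _ _ _ hm1 hv hx
      rw [resc _ _ _ hthp hpos, ← hlp] at t2
      have t3 := ((t1.const_mul (mixA c lam mu T)).add (t2.const_mul (mixB c lam mu T))).div_const
        (mixA c lam mu T + mixB c lam mu T)
      simp only [← hP, ← hM] at t3
      convert t3 using 2
      · rfl
      · ring
end

section
/- Let a_0, a_1, a_2, a_3 ∈ ℝ with a_2 < 0 and a_3 > 0, and define Δ : (0,∞) → ℝ by Δ(x) = a_0 + a_1·log(x) + a_2·x + a_3·x². If a_1 > 0, then the set { x ∈ (0,∞) : Δ(x) = 0 } has at most three elements. If a_1 ≤ 0, then this set has at most two elements. -/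
/-- A set of more than `n` reals contains an increasing `(n+1)`-tuple. -/
lemma exists_strictMono_of_lt_encard (S : Set ℝ) (n : ℕ) (h : ¬ S.encard ≤ n) :
    ∃ f : Fin (n + 1) → ℝ, StrictMono f ∧ ∀ i, f i ∈ S := by
  have h1 : ((n + 1 : ℕ) : ℕ∞) ≤ S.encard := by
    push_cast
    exact Order.add_one_le_of_lt (not_le.mp h)
  obtain ⟨t, htS, ht⟩ := Set.exists_subset_encard_eq h1
  have hfin : t.Finite := Set.finite_of_encard_eq_coe ht
  have hc : hfin.toFinset.card = n + 1 := by
    rw [hfin.encard_eq_coe_toFinset_card] at ht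
    exact_mod_cast ht
  refine ⟨hfin.toFinset.orderEmbOfFin hc, (hfin.toFinset.orderEmbOfFin hc).strictMono, ?_⟩
  intro i
  have := Finset.orderEmbOfFin_mem hfin.toFinset hc i
  exact htS (hfin.mem_toFinset.mp this)

/-- Rolle: between two zeros there is a zero of `x Δ'(x)`. -/
lemma rolle_log_quadratic (a0 a1 a2 a3 x y : ℝ) (hxy : x < y)
    (hx : x ∈ {x : ℝ | 0 < x ∧ a0 + a1 * Real.log x + a2 * x + a3 * x ^ 2 = 0})
    (hy : y ∈ {x : ℝ | 0 < x ∧ a0 + a1 * Real.log x + a2 * x + a3 * x ^ 2 = 0}) :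
    ∃ c, x < c ∧ c < y ∧ a1 + a2 * c + 2 * a3 * c ^ 2 = 0 := by
  obtain ⟨hx0, hx⟩ := hx
  obtain ⟨hy0, hy⟩ := hy
  have hd : ∀ c : ℝ, 0 < c →
      HasDerivAt (fun x : ℝ => a0 + a1 * Real.log x + a2 * x + a3 * x ^ 2)
        (a1 * c⁻¹ + a2 * 1 + a3 * (2 * c)) c := by
    intro c hc
    have h2 : HasDerivAt (fun x : ℝ => x ^ 2) (2 * c) c := by
      simpa using hasDerivAt_pow 2 c
    exact ((((Real.hasDerivAt_log hc.ne').const_mul a1).const_add a0).add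
      ((hasDerivAt_id c).const_mul a2)).add (h2.const_mul a3)
  obtain ⟨c, hc, h0⟩ := exists_hasDerivAt_eq_zero hxy
    (fun c hc => (hd c (lt_of_lt_of_le hx0 hc.1)).continuousAt.continuousWithinAt)
    (hx.trans hy.symm) (fun c hc => hd c (hx0.trans hc.1))
  have hc0 : 0 < c := hx0.trans hc.1
  refine ⟨c, hc.1, hc.2, ?_⟩
  field_simp at h0
  linarith

/-- **Variation-diminishing bound for the Descartes system `(1, log x, x, x²)`.**
If `a₂ < 0 < a₃`, then `Δ(x) = a₀ + a₁ log x + a₂ x + a₃ x²` has at most three zeros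
on `(0,∞)` when `a₁ > 0`, and at most two zeros when `a₁ ≤ 0`. -/
theorem zeros_of_log_quadratic_combination
    (a0 a1 a2 a3 : ℝ) (ha2 : a2 < 0) (ha3 : 0 < a3) :
    (0 < a1 →
      {x : ℝ | 0 < x ∧ a0 + a1 * Real.log x + a2 * x + a3 * x ^ 2 = 0}.encard ≤ 3) ∧
    (a1 ≤ 0 →
      {x : ℝ | 0 < x ∧ a0 + a1 * Real.log x + a2 * x + a3 * x ^ 2 = 0}.encard ≤ 2) := by
  constructor
  · intro _
    by_contra h
    obtain ⟨f, hf, hS⟩ := exists_strictMono_of_lt_encard _ 3 h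
    obtain ⟨c, _, hc2, hc⟩ := rolle_log_quadratic a0 a1 a2 a3 _ _
      (hf (show (0 : Fin 4) < 1 by decide)) (hS 0) (hS 1)
    obtain ⟨d, hd1, hd2, hd⟩ := rolle_log_quadratic a0 a1 a2 a3 _ _
      (hf (show (1 : Fin 4) < 2 by decide)) (hS 1) (hS 2)
    obtain ⟨e, he1, _, he⟩ := rolle_log_quadratic a0 a1 a2 a3 _ _
      (hf (show (2 : Fin 4) < 3 by decide)) (hS 2) (hS 3)
    have hcd : c < d := hc2.trans hd1
    have hde : d < e := hd2.trans he1
    have h1 : a2 + 2 * a3 * (c + d) = 0 :=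
      mul_left_cancel₀ (sub_pos.mpr hcd).ne' (by linear_combination hd - hc)
    have h2 : a2 + 2 * a3 * (d + e) = 0 :=
      mul_left_cancel₀ (sub_pos.mpr hde).ne' (by linear_combination he - hd)
    nlinarith [mul_pos ha3 (sub_pos.mpr (hcd.trans hde))]
  · intro ha1
    by_contra h
    obtain ⟨f, hf, hS⟩ := exists_strictMono_of_lt_encard _ 2 h
    obtain ⟨c, hc1, hc2, hc⟩ := rolle_log_quadratic a0 a1 a2 a3 _ _
      (hf (show (0 : Fin 3) < 1 by decide)) (hS 0) (hS 1)
    obtain ⟨d, hd1, hd2, hd⟩ := rolle_log_quadratic a0 a1 a2 a3 _ _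
      (hf (show (1 : Fin 3) < 2 by decide)) (hS 1) (hS 2)
    have hcd : c < d := hc2.trans hd1
    have hc0 : 0 < c := (hS 0).1.trans hc1
    have h1 : a2 + 2 * a3 * (c + d) = 0 :=
      mul_left_cancel₀ (sub_pos.mpr hcd).ne' (by linear_combination hd - hc)
    have h2 : a1 = 2 * a3 * (c * d) := by linear_combination hc - c * h1
    have h3 : 0 < a3 * (c * d) := mul_pos ha3 (mul_pos hc0 (hc0.trans hcd))
    linarith
end

section
/- For every choice of positive parameters c, λ, μ, T with μ < 2λ and every σ > 0, the double gamma density f_0 and the lognormal-model log-price density φ_σ cross at most six times; more precisely, the set { x ∈ ℝ : f_0(x) = φ_σ(x) } has at most six elements. -/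
open MeasureTheory

/-- Risk-neutral log-price density of the Black–Scholes model with volatility `σ`:
normal with variance `σ²` and mean `−σ²/2`. -/
noncomputable def phiBS (σ x : ℝ) : ℝ :=
  (Real.sqrt (2 * Real.pi) * σ)⁻¹ * Real.exp (-(x / σ + σ / 2) ^ 2 / 2)

lemma rolle_aux (p A B C a b : ℝ) (ha : 0 < a) (hab : a < b)
    (h1 : p * Real.log a + A * a ^ 2 + B * a + C = 0)
    (h2 : p * Real.log b + A * b ^ 2 + B * b + C = 0) :
    ∃ u, a < u ∧ u < b ∧ p + 2 * A * u ^ 2 + B * u = 0 := by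
  have hd : ∀ x : ℝ, 0 < x → HasDerivAt (fun x => p * Real.log x + A * x ^ 2 + B * x + C)
      (p * x⁻¹ + A * (2 * x) + B) x := by
    intro x hx
    have h := ((((Real.hasDerivAt_log hx.ne').const_mul p).add
      ((hasDerivAt_pow 2 x).const_mul A)).add ((hasDerivAt_id x).const_mul B)).add_const C
    refine (h.congr_deriv ?_)
    simp
  obtain ⟨u, hu, hu0⟩ := exists_hasDerivAt_eq_zero hab
    (f := fun x => p * Real.log x + A * x ^ 2 + B * x + C)
    (fun x hx => (hd x (ha.trans_le hx.1)).continuousAt.continuousWithinAt)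
    (h1.trans h2.symm) (fun x hx => hd x (ha.trans hx.1))
  have hu' : 0 < u := ha.trans hu.1
  refine ⟨u, hu.1, hu.2, ?_⟩
  field_simp at hu0
  linarith

lemma encard_aux (p A B C : ℝ) (hA : 0 < A) :
    {x : ℝ | 0 < x ∧ p * Real.log x + A * x ^ 2 + B * x + C = 0}.encard ≤ 3 := by
  by_contra hcon
  push Not at hcon
  have h4 : (4 : ℕ∞) ≤ {x : ℝ | 0 < x ∧ p * Real.log x + A * x ^ 2 + B * x + C = 0}.encard := by
    have := Order.add_one_le_of_lt hcon
    norm_num at this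
    exact this
  obtain ⟨t, ht, htc⟩ := Set.exists_subset_encard_eq h4
  have hfin : t.Finite := Set.finite_of_encard_eq_coe (k := 4) htc
  have hcard : hfin.toFinset.card = 4 := by
    rw [hfin.encard_eq_coe_toFinset_card] at htc
    exact_mod_cast htc
  have hm : ∀ i, 0 < hfin.toFinset.orderEmbOfFin hcard i ∧ _ := fun i =>
    ht (hfin.mem_toFinset.1 (Finset.orderEmbOfFin_mem hfin.toFinset hcard i))
  have hlt : ∀ i j : Fin 4, i < j → hfin.toFinset.orderEmbOfFin hcard i <
    hfin.toFinset.orderEmbOfFin hcard j := fun i j h =>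
      (hfin.toFinset.orderEmbOfFin hcard).lt_iff_lt.2 h
  obtain ⟨u, hu1, hu2, hu⟩ := rolle_aux p A B C _ _ (hm 0).1 (hlt 0 1 (by decide)) (hm 0).2 (hm 1).2
  obtain ⟨v, hv1, hv2, hv⟩ := rolle_aux p A B C _ _ (hm 1).1 (hlt 1 2 (by decide)) (hm 1).2 (hm 2).2
  obtain ⟨w, hw1, hw2, hw⟩ := rolle_aux p A B C _ _ (hm 2).1 (hlt 2 3 (by decide)) (hm 2).2 (hm 3).2
  have huv : u < v := hu2.trans hv1
  have hvw : v < w := hv2.trans hw1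
  have e1 : 2 * A * (u + v) + B = 0 := by
    apply mul_left_cancel₀ (sub_ne_zero.2 huv.ne')
    linarith
  have e2 : 2 * A * (v + w) + B = 0 := by
    apply mul_left_cancel₀ (sub_ne_zero.2 hvw.ne')
    linarith
  nlinarith [mul_pos hA (sub_pos.2 (huv.trans hvw))]

lemma log_aux (K M q y E F : ℝ) (hK : 0 < K) (hM : 0 < M) (hy : 0 < y)
    (h : K * y ^ q * Real.exp E = M * Real.exp F) :
    Real.log K + q * Real.log y + E = Real.log M + F := by
  have hyq := Real.rpow_pos_of_pos hy q
  have h' := congrArg Real.log h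
  rwa [Real.log_mul (mul_pos hK hyq).ne' (Real.exp_pos _).ne', Real.log_mul hK.ne' hyq.ne',
    Real.log_mul hM.ne' (Real.exp_pos _).ne', Real.log_exp, Real.log_exp, Real.log_rpow hy] at h'

/-- **The double gamma density crosses a lognormal-model log-price density at most six
times:** the set `{x : f₀(x) = φ_σ(x)}` has at most six elements. -/
theorem doubleGamma_normal_crossings_le_six
    (c lam mu T σ : ℝ)
    (hc : 0 < c) (hlam : 0 < lam) (hmu : 0 < mu) (hT : 0 < T)
    (hmu2lam : mu < 2 * lam) (hσ : 0 < σ) :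
    {x : ℝ | doubleGamma c lam mu T x = phiBS σ x}.encard ≤ 6 := by
  have hA : 0 < mixA c lam mu T := Real.rpow_pos_of_pos (by positivity) _
  have hB : 0 < mixB c lam mu T := by
    refine Real.rpow_pos_of_pos ?_ _
    rw [sub_pos, div_lt_one (by positivity)]
    exact hmu2lam
  have hP : 0 < lamPlus lam mu := by unfold lamPlus; positivity
  have hN : 0 < lamMinus lam mu := by
    unfold lamMinus
    rw [sub_pos, div_lt_div_iff₀ (by norm_num) hmu]
    linarith
  have hG : 0 < Real.Gamma (c * T) := Real.Gamma_pos_of_pos (by positivity)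
  have hM : 0 < (Real.sqrt (2 * Real.pi) * σ)⁻¹ := by positivity
  have hKm : 0 < (mixA c lam mu T / (mixA c lam mu T + mixB c lam mu T)) *
      (lamMinus lam mu ^ (c * T) / Real.Gamma (c * T)) := by positivity
  have hKp : 0 < (mixB c lam mu T / (mixA c lam mu T + mixB c lam mu T)) *
      (lamPlus lam mu ^ (c * T) / Real.Gamma (c * T)) := by positivity
  generalize hKm' : (mixA c lam mu T / (mixA c lam mu T + mixB c lam mu T)) *
      (lamMinus lam mu ^ (c * T) / Real.Gamma (c * T)) = Km at hKm
  generalize hKp' : (mixB c lam mu T / (mixA c lam mu T + mixB c lam mu T)) *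
      (lamPlus lam mu ^ (c * T) / Real.Gamma (c * T)) = Kp at hKp
  generalize hM' : (Real.sqrt (2 * Real.pi) * σ)⁻¹ = M at hM
  have hAq : 0 < 1 / (2 * σ ^ 2) := by positivity
  have hsub : {x : ℝ | doubleGamma c lam mu T x = phiBS σ x} ⊆
      {x : ℝ | 0 < x ∧ (c * T - 1) * Real.log x + 1 / (2 * σ ^ 2) * x ^ 2 +
        (1 / 2 - lamPlus lam mu) * x + (Real.log Kp - Real.log M + σ ^ 2 / 8) = 0} ∪
      Set.image (fun x => -x) {x : ℝ | 0 < x ∧ (c * T - 1) * Real.log x + 1 / (2 * σ ^ 2) * x ^ 2 +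
        (-1 / 2 - lamMinus lam mu) * x + (Real.log Km - Real.log M + σ ^ 2 / 8) = 0} := by
    intro x hx
    simp only [Set.mem_ofPred_eq, doubleGamma, phiBS, hKm', hKp', hM'] at hx
    have hsq : -(x / σ + σ / 2) ^ 2 / 2 = -(1 / (2 * σ ^ 2) * x ^ 2) - x / 2 - σ ^ 2 / 8 := by
      field_simp
      ring
    rcases lt_trichotomy x 0 with h | h | h
    · right
      rw [if_pos h] at hx
      have hl := log_aux _ _ _ _ _ _ hKm hM (neg_pos.2 h) hx
      refine ⟨-x, ⟨neg_pos.2 h, ?_⟩, neg_neg x⟩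
      rw [hsq] at hl
      linear_combination hl
    · subst h
      simp only [lt_irrefl, if_false] at hx
      have : 0 < M * Real.exp (-(0 / σ + σ / 2) ^ 2 / 2) := by positivity
      exact absurd hx this.ne
    · left
      rw [if_neg h.le.not_gt, if_pos h] at hx
      have hl := log_aux _ _ _ _ _ _ hKp hM h hx
      refine ⟨h, ?_⟩
      rw [hsq] at hl
      linear_combination hl
  calc _ ≤ _ := Set.encard_le_encard hsub
    _ ≤ _ := Set.encard_union_le _ _
    _ ≤ 3 + 3 := add_le_add (encard_aux _ _ _ _ hAq)
        ((Set.encard_image_le _ _).trans (encard_aux _ _ _ _ hAq))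
    _ = 6 := by norm_num
end

section
/- Let f be a continuous probability density on ℝ, let σ : (0,∞) → (0,∞) be continuous with C(K) = C_BS(K, σ(K)) for all K > 0, and let σ_* > 0. Assume there is a nonempty open interval I ⊂ ℝ with f(x) ≠ φ_{σ_*}(x) for all x ∈ I. Then for every n ≥ 0: if there exist points 0 < K_0 < K_1 < ... < K_n with (σ(K_i) − σ_*)·(σ(K_{i+1}) − σ_*) < 0 for all i (i.e., σ − σ_* has at least n sign changes), then there exist points x_0 < x_1 < ... < x_{n+2} in ℝ with (f(x_j) − φ_{σ_*}(x_j))·(f(x_{j+1}) − φ_{σ_*}(x_{j+1})) < 0 for all j (i.e., f − φ_{σ_*} has at least n + 2 sign changes). -/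
open MeasureTheory

open Filter Topology Set

namespace SmileAux

/-- `h` takes alternating strict signs at `n + 1` increasing points. -/
def Alt (h : ℝ → ℝ) (n : ℕ) : Prop :=
  ∃ x : ℕ → ℝ, (∀ i, i < n → x i < x (i + 1)) ∧
    ∃ s : ℝ, ∀ i, i ≤ n → 0 < s * (-1) ^ i * h (x i)

lemma Alt.deriv {h h' : ℝ → ℝ} {n : ℕ} (hd : ∀ x, HasDerivAt h (h' x) x)
    (hbot : Tendsto h atBot (𝓝 0)) (htop : Tendsto h atTop (𝓝 0)) (H : Alt h n) :
    Alt h' (n + 1) := by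
  obtain ⟨x, hx, s, hs⟩ := H
  obtain ⟨a, ha, ha'⟩ : ∃ a, a < x 0 ∧ s * h a < s * h (x 0) := by
    have h0 : s * 0 < s * h (x 0) := by simpa using hs 0 (Nat.zero_le _)
    have := ((hbot.const_mul s).eventually (gt_mem_nhds h0)).and (eventually_lt_atBot (x 0))
    obtain ⟨a, h1, h2⟩ := this.exists
    exact ⟨a, h2, h1⟩
  obtain ⟨b, hb, hb'⟩ : ∃ b, x n < b ∧ s * (-1) ^ n * h b < s * (-1) ^ n * h (x n) := by
    have h0 : s * (-1) ^ n * 0 < s * (-1) ^ n * h (x n) := by simpa using hs n le_rfl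
    have := ((htop.const_mul (s * (-1) ^ n)).eventually (gt_mem_nhds h0)).and
      (eventually_gt_atTop (x n))
    obtain ⟨b, h1, h2⟩ := this.exists
    exact ⟨b, h2, h1⟩
  have key : ∃ z : ℕ → ℝ, ∀ i, i ≤ n + 1 →
      z i < z (i + 1) ∧ 0 < s * (-1) ^ i * (h (z (i + 1)) - h (z i)) := by
    refine ⟨fun i => if i = 0 then a else if i ≤ n + 1 then x (i - 1) else b, ?_⟩
    intro i hi
    rcases Nat.eq_zero_or_pos i with rfl | hpos
    · simp only [if_true, zero_add, one_ne_zero, if_false, le_add_iff_nonneg_left, zero_le,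
        Nat.sub_self, pow_zero, mul_one]
      exact ⟨ha, by linarith⟩
    · obtain ⟨j, rfl⟩ : ∃ j, i = j + 1 := ⟨i - 1, by omega⟩
      have e1 : (j + 1 = 0) = False := by simp
      have e2 : (j + 1 + 1 = 0) = False := by simp
      have e3 : (j + 1 ≤ n + 1) = True := by simp; omega
      simp only [e1, e2, e3, if_true, if_false, Nat.add_sub_cancel]
      by_cases hjn : j + 1 + 1 ≤ n + 1
      · simp only [hjn, if_true]
        refine ⟨hx j (by omega), ?_⟩
        have h1 := hs j (by omega)
        have h2 := hs (j + 1) (by omega)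
        rw [pow_succ] at h2 ⊢
        nlinarith
      · simp only [hjn, if_false]
        obtain rfl : j = n := by omega
        refine ⟨hb, ?_⟩
        rw [pow_succ]
        nlinarith
  obtain ⟨z, hz⟩ := key
  have mvt : ∀ i, ∃ y, i ≤ n + 1 → y ∈ Ioo (z i) (z (i + 1)) ∧ 0 < s * (-1) ^ i * h' y := by
    intro i
    by_cases hi : i ≤ n + 1
    · obtain ⟨h1, h2⟩ := hz i hi
      obtain ⟨y, hy, hy'⟩ := exists_hasDerivAt_eq_slope h h' h1
        (fun t _ => (hd t).continuousAt.continuousWithinAt) (fun t _ => hd t)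
      refine ⟨y, fun _ => ⟨hy, ?_⟩⟩
      rw [hy', ← mul_div_assoc]
      exact div_pos h2 (sub_pos.2 h1)
    · exact ⟨0, fun h => absurd h hi⟩
  choose y hy using mvt
  refine ⟨y, fun i hi => ?_, s, fun i hi => (hy i hi).2⟩
  exact (hy i (by omega)).1.2.trans (hy (i + 1) (by omega)).1.1

lemma Alt.congr_mul {h g : ℝ → ℝ} {n : ℕ} (c : ℝ → ℝ) (hc : ∀ x, 0 < c x)
    (e : ∀ x, h x = -(c x * g x)) (H : Alt h n) : Alt g n := by
  obtain ⟨x, hx, s, hs⟩ := H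
  refine ⟨x, hx, -s, fun i hi => ?_⟩
  have h1 := hs i hi
  rw [e] at h1
  have h2 : 0 < c (x i) * (-s * (-1) ^ i * g (x i)) := by linarith
  exact (pos_iff_pos_of_mul_pos h2).1 (hc _)

/-! ### Tail integrals -/

lemma tail_eq {u : ℝ → ℝ} (hu : Integrable u) (k : ℝ) :
    ∫ x in Ioi k, u x = (∫ x in Ioi 0, u x) - ∫ x in (0:ℝ)..k, u x := by
  have := intervalIntegral.integral_Ioi_sub_Ioi' (a := 0) (b := k)
    hu.integrableOn hu.integrableOn
  linarith

lemma tail_deriv {u : ℝ → ℝ} (hu : Integrable u) (hc : Continuous u) (k : ℝ) :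
    HasDerivAt (fun k => ∫ x in Ioi k, u x) (-u k) k := by
  have : (fun k => ∫ x in Ioi k, u x) =
      fun k => (∫ x in Ioi 0, u x) - ∫ x in (0:ℝ)..k, u x := funext (tail_eq hu)
  rw [this]
  exact (intervalIntegral.integral_hasDerivAt_right (hc.intervalIntegrable _ _)
    (hc.stronglyMeasurableAtFilter _ _) hc.continuousAt).const_sub _

lemma tail_top (u : ℝ → ℝ) : Tendsto (fun k => ∫ x in Ioi k, u x) atTop (𝓝 0) :=
  tendsto_integral_Ioi_zero tendsto_id

lemma tail_bot {u : ℝ → ℝ} (hu : Integrable u) :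
    Tendsto (fun k => ∫ x in Ioi k, u x) atBot (𝓝 (∫ x, u x)) :=
  (aecover_Ioi tendsto_id).integral_tendsto_of_countably_generated hu

/-! ### The function `d(k) = ∫_k^∞ (e^x - e^k) g` -/

lemma split {g : ℝ → ℝ} (hg : Integrable g) (he : Integrable (fun x => Real.exp x * g x))
    (k K : ℝ) : ∫ x in Ioi k, (Real.exp x - K) * g x =
      (∫ x in Ioi k, Real.exp x * g x) - K * ∫ x in Ioi k, g x := by
  rw [← integral_const_mul, ← integral_sub he.integrableOn (hg.integrableOn.const_mul K)]
  simp only [sub_mul]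

lemma dd_bot {g : ℝ → ℝ} (hg : Integrable g) (he : Integrable (fun x => Real.exp x * g x)) :
    Tendsto (fun k => ∫ x in Ioi k, (Real.exp x - Real.exp k) * g x) atBot
      (𝓝 (∫ x, Real.exp x * g x)) := by
  simp only [split hg he]
  simpa using (tail_bot he).sub (Real.tendsto_exp_atBot.mul (tail_bot hg))

lemma dd_top {g : ℝ → ℝ} (hg : Integrable g) (he : Integrable (fun x => Real.exp x * g x)) :
    Tendsto (fun k => ∫ x in Ioi k, (Real.exp x - Real.exp k) * g x) atTop (𝓝 0) := by
  refine squeeze_zero_norm (fun k => ?_) (tail_top (fun x => ‖Real.exp x * g x‖))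
  refine norm_integral_le_of_norm_le he.norm.integrableOn ?_
  filter_upwards [ae_restrict_mem measurableSet_Ioi] with x hx
  rw [norm_mul, norm_mul]
  refine mul_le_mul_of_nonneg_right ?_ (norm_nonneg _)
  have := Real.exp_lt_exp.2 (mem_Ioi.1 hx)
  have := Real.exp_pos k
  rw [Real.norm_of_nonneg (by linarith), Real.norm_of_nonneg (by linarith)]
  linarith

lemma dd_deriv {g : ℝ → ℝ} (hg : Integrable g) (he : Integrable (fun x => Real.exp x * g x))
    (hc : Continuous g) (k : ℝ) :
    HasDerivAt (fun k => ∫ x in Ioi k, (Real.exp x - Real.exp k) * g x)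
      (-(Real.exp k * ∫ x in Ioi k, g x)) k := by
  simp only [split hg he]
  have h1 := tail_deriv he (by fun_prop) k
  have h2 := tail_deriv hg hc k
  refine (h1.sub ((Real.hasDerivAt_exp k).mul h2)).congr_deriv ?_
  ring

/-! ### Normal distribution -/

lemma gauss_int : Integrable (fun t : ℝ => Real.exp (-t ^ 2 / 2)) := by
  have := integrable_exp_neg_mul_sq (b := 1 / 2) (by norm_num)
  refine this.congr (Eventually.of_forall fun t => ?_)
  simp only
  congr 1
  ring

lemma gauss_total : ∫ t : ℝ, Real.exp (-t ^ 2 / 2) = Real.sqrt (2 * Real.pi) := by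
  have := integral_gaussian (1 / 2)
  rw [show Real.pi / (1 / 2) = 2 * Real.pi by ring] at this
  rw [← this]
  congr 1
  ext t
  congr 1
  ring

lemma sq_pos' : 0 < Real.sqrt (2 * Real.pi) := Real.sqrt_pos.2 (by positivity)

lemma N_eq (x : ℝ) : stdNormalCDF x =
    1 - (Real.sqrt (2 * Real.pi))⁻¹ * ∫ t in Ioi x, Real.exp (-t ^ 2 / 2) := by
  have h := intervalIntegral.integral_Iic_add_Ioi (b := x)
    gauss_int.integrableOn gauss_int.integrableOn
  rw [gauss_total] at h
  unfold stdNormalCDF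
  have := sq_pos'
  have e : (∫ t in Iic x, Real.exp (-t ^ 2 / 2)) =
      Real.sqrt (2 * Real.pi) - ∫ t in Ioi x, Real.exp (-t ^ 2 / 2) := by linarith
  rw [e, mul_sub, inv_mul_cancel₀ this.ne']

lemma N_deriv (x : ℝ) : HasDerivAt stdNormalCDF
    ((Real.sqrt (2 * Real.pi))⁻¹ * Real.exp (-x ^ 2 / 2)) x := by
  rw [show stdNormalCDF = _ from funext N_eq]
  have := ((tail_deriv gauss_int (by fun_prop) x).const_mul
    (Real.sqrt (2 * Real.pi))⁻¹).const_sub 1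
  refine this.congr_deriv ?_
  ring

lemma N_top : Tendsto stdNormalCDF atTop (𝓝 1) := by
  rw [show stdNormalCDF = _ from funext N_eq]
  simpa using ((tail_top (fun t => Real.exp (-t ^ 2 / 2))).const_mul
    (Real.sqrt (2 * Real.pi))⁻¹).const_sub 1

lemma N_bot : Tendsto stdNormalCDF atBot (𝓝 0) := by
  have h : Tendsto (fun x : ℝ => ∫ t in Iic x, Real.exp (-t ^ 2 / 2)) atBot (𝓝 0) :=
    tendsto_integral_Iic_zero tendsto_id
  have h2 := h.const_mul (Real.sqrt (2 * Real.pi))⁻¹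
  rw [mul_zero] at h2
  exact h2

lemma N_nonneg (x : ℝ) : 0 ≤ stdNormalCDF x :=
  mul_nonneg (inv_nonneg.2 sq_pos'.le)
    (integral_nonneg fun _ => (Real.exp_pos _).le)

lemma N_le_one (x : ℝ) : stdNormalCDF x ≤ 1 := by
  rw [N_eq]
  have : 0 ≤ (Real.sqrt (2 * Real.pi))⁻¹ * ∫ t in Ioi x, Real.exp (-t ^ 2 / 2) :=
    mul_nonneg (inv_nonneg.2 sq_pos'.le)
      (integral_nonneg fun _ => (Real.exp_pos _).le)
  linarith

/-- Shifted and scaled Gaussian density. -/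
noncomputable def psi (s c x : ℝ) : ℝ :=
  (Real.sqrt (2 * Real.pi) * s)⁻¹ * Real.exp (-(x / s + c) ^ 2 / 2)

lemma psi_int {s : ℝ} (hs : 0 < s) (c : ℝ) : Integrable (psi s c) :=
  ((gauss_int.comp_add_right c).comp_div hs.ne').const_mul _

lemma psi_deriv {s : ℝ} (hs : 0 < s) (c x : ℝ) :
    HasDerivAt (fun x => -stdNormalCDF (-x / s - c)) (psi s c x) x := by
  have h1 : HasDerivAt (fun x : ℝ => -x / s - c) (-1 / s) x :=
    ((hasDerivAt_id x).neg.div_const s).sub_const c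
  have := ((N_deriv (-x / s - c)).comp x h1).neg
  refine this.congr_deriv ?_
  unfold psi
  rw [show (-(x / s + c) ^ 2 / 2) = -(-x / s - c) ^ 2 / 2 by ring]
  have := sq_pos'
  field_simp

lemma psi_prim_top {s : ℝ} (hs : 0 < s) (c : ℝ) :
    Tendsto (fun x => -stdNormalCDF (-x / s - c)) atTop (𝓝 0) := by
  have h : Tendsto (fun x : ℝ => -x / s - c) atTop atBot := by
    have := tendsto_atBot_add_const_right atTop (-c)
      (tendsto_neg_atTop_atBot.atBot_div_const hs)
    simpa [sub_eq_add_neg] using this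
  simpa using (N_bot.comp h).neg

lemma psi_prim_bot {s : ℝ} (hs : 0 < s) (c : ℝ) :
    Tendsto (fun x => -stdNormalCDF (-x / s - c)) atBot (𝓝 (-1)) := by
  have h : Tendsto (fun x : ℝ => -x / s - c) atBot atTop := by
    have := tendsto_atTop_add_const_right atBot (-c)
      (tendsto_neg_atBot_atTop.atTop_div_const hs)
    simpa [sub_eq_add_neg] using this
  exact (N_top.comp h).neg

lemma psi_tail {s : ℝ} (hs : 0 < s) (c k : ℝ) :
    ∫ x in Ioi k, psi s c x = stdNormalCDF (-k / s - c) := by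
  rw [integral_Ioi_of_hasDerivAt_of_tendsto' (fun x _ => psi_deriv hs c x)
    (psi_int hs c).integrableOn (psi_prim_top hs c)]
  ring

lemma psi_total {s : ℝ} (hs : 0 < s) (c : ℝ) : ∫ x, psi s c x = 1 := by
  rw [integral_of_hasDerivAt_of_tendsto (psi_deriv hs c) (psi_int hs c)
    (psi_prim_bot hs c) (psi_prim_top hs c)]
  ring

lemma phi_eq (s : ℝ) : phiBS s = psi s (s / 2) := rfl

lemma exp_phi {s : ℝ} (hs : 0 < s) :
    (fun x => Real.exp x * phiBS s x) = psi s (-(s / 2)) := by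
  ext x
  unfold phiBS psi
  rw [mul_left_comm, ← Real.exp_add]
  congr 2
  field_simp
  ring

lemma phi_int {s : ℝ} (hs : 0 < s) : Integrable (phiBS s) := psi_int hs _

lemma exp_phi_int {s : ℝ} (hs : 0 < s) : Integrable (fun x => Real.exp x * phiBS s x) := by
  rw [exp_phi hs]; exact psi_int hs _

lemma phi_pos {s : ℝ} (hs : 0 < s) (x : ℝ) : 0 < phiBS s x := by
  have := sq_pos'
  unfold phiBS
  positivity

lemma phi_cont (s : ℝ) : Continuous (phiBS s) := by
  unfold phiBS; fun_prop

lemma call_phi {s : ℝ} (hs : 0 < s) (K : ℝ) : callPrice (phiBS s) K = callBS K s := by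
  unfold callPrice callBS
  rw [split (phi_int hs) (exp_phi_int hs), exp_phi hs, phi_eq, psi_tail hs, psi_tail hs]
  simp

lemma callBS_pos {K s : ℝ} (hK : 0 < K) (hs : 0 < s) : 0 < callBS K s := by
  rw [← call_phi hs]
  unfold callPrice
  have hi : IntegrableOn (fun x => (Real.exp x - K) * phiBS s x) (Ioi (Real.log K)) := by
    simp only [sub_mul]
    exact ((exp_phi_int hs).sub ((phi_int hs).const_mul K)).integrableOn
  have hpos : ∀ x ∈ Ioi (Real.log K), 0 < (Real.exp x - K) * phiBS s x := by
    intro x hx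
    exact mul_pos (sub_pos.2 ((Real.log_lt_iff_lt_exp hK).1 hx)) (phi_pos hs x)
  rw [setIntegral_pos_iff_support_of_nonneg_ae _ hi]
  · have : Function.support (fun x => (Real.exp x - K) * phiBS s x) ∩ Ioi (Real.log K)
        = Ioi (Real.log K) := inter_eq_right.2 fun x hx => (hpos x hx).ne'
    rw [this]
    simp
  · filter_upwards [ae_restrict_mem measurableSet_Ioi] with x hx
    exact (hpos x hx).le

lemma callBS_le_one {K : ℝ} (hK : 0 < K) (s : ℝ) : callBS K s ≤ 1 := by
  unfold callBS
  have := mul_nonneg hK.le (N_nonneg (-Real.log K / s - s / 2))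
  linarith [N_le_one (-Real.log K / s + s / 2)]

lemma callBS_ge {K s : ℝ} (hK : 0 < K) (hs : 0 < s) : 1 - K ≤ callBS K s := by
  rw [← call_phi hs]
  unfold callPrice
  have hi : Integrable (fun x => (Real.exp x - K) * phiBS s x) := by
    simp only [sub_mul]
    exact (exp_phi_int hs).sub ((phi_int hs).const_mul K)
  have h1 : ∫ x, (Real.exp x - K) * phiBS s x = 1 - K := by
    simp only [sub_mul]
    rw [integral_sub (exp_phi_int hs) ((phi_int hs).const_mul K), integral_const_mul,
      exp_phi hs, phi_eq, psi_total hs, psi_total hs, mul_one]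
  rw [← h1, ← intervalIntegral.integral_Iic_add_Ioi (b := Real.log K)
    hi.integrableOn hi.integrableOn]
  have : ∫ x in Iic (Real.log K), (Real.exp x - K) * phiBS s x ≤ 0 := by
    refine setIntegral_nonpos measurableSet_Iic fun x hx => ?_
    exact mul_nonpos_of_nonpos_of_nonneg
      (sub_nonpos.2 ((Real.le_log_iff_exp_le hK).1 hx)) (phi_pos hs x).le
  linarith

lemma callBS_deriv {K s : ℝ} (hK : 0 < K) (hs : 0 < s) :
    HasDerivAt (callBS K) ((Real.sqrt (2 * Real.pi))⁻¹ *
      Real.exp (-(-Real.log K / s + s / 2) ^ 2 / 2)) s := by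
  have hb : HasDerivAt (fun s : ℝ => -Real.log K / s) (Real.log K / s ^ 2) s := by
    have := (hasDerivAt_inv hs.ne').const_mul (-Real.log K)
    refine this.congr_deriv ?_
    field_simp
  have hh : HasDerivAt (fun s : ℝ => s / 2) (1 / 2) s := (hasDerivAt_id s).div_const 2
  have h1 := (N_deriv (-Real.log K / s + s / 2)).comp s (hb.add hh)
  have h2 := ((N_deriv (-Real.log K / s - s / 2)).comp s (hb.sub hh)).const_mul K
  have e : K * Real.exp (-(-Real.log K / s - s / 2) ^ 2 / 2) =
      Real.exp (-(-Real.log K / s + s / 2) ^ 2 / 2) := by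
    conv_lhs => rw [← Real.exp_log hK]
    rw [← Real.exp_add, Real.log_exp]
    congr 1
    field_simp
    ring
  refine (h1.sub h2).congr_deriv ?_
  linear_combination -(Real.sqrt (2 * Real.pi))⁻¹ * (Real.log K / s ^ 2 - 1 / 2) * e

lemma callBS_mono {K : ℝ} (hK : 0 < K) : StrictMonoOn (callBS K) (Ioi 0) := by
  refine strictMonoOn_of_deriv_pos (convex_Ioi 0)
    (fun s hs => (callBS_deriv hK hs).continuousAt.continuousWithinAt) fun s hs => ?_
  rw [interior_Ioi] at hs
  rw [(callBS_deriv hK hs).deriv]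
  exact mul_pos (inv_pos.2 sq_pos') (Real.exp_pos _)

lemma sign_mul {K s t : ℝ} (hK : 0 < K) (hs : 0 < s) (ht : 0 < t) :
    (0 < s - t → 0 < callBS K s - callBS K t) ∧ (s - t < 0 → callBS K s - callBS K t < 0) :=
  ⟨fun h => sub_pos.2 (callBS_mono hK ht hs (sub_pos.1 h)),
    fun h => sub_neg.2 (callBS_mono hK hs ht (sub_neg.1 h))⟩

end SmileAux

/-- **Sign changes of the smile are bounded by density crossings** (Prop. 2.1 of
Glasserman–Pirjol): if `σ − σ_*` has at least `n` sign changes, then `f − φ_{σ_*}` has at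
least `n + 2` sign changes, provided `f` and `φ_{σ_*}` differ on some nonempty open
interval. -/
theorem smile_sign_changes_le_density_crossings
    (f σ : ℝ → ℝ) (σstar : ℝ)
    (hf_cont : Continuous f) (hf_nonneg : ∀ x, 0 ≤ f x)
    (hf_int : Integrable f) (hf_prob : ∫ x, f x = 1)
    (hσ_cont : ContinuousOn σ (Set.Ioi 0))
    (hσ_pos : ∀ K, 0 < K → 0 < σ K)
    (hIV : ∀ K, 0 < K → callPrice f K = callBS K (σ K))
    (hσstar : 0 < σstar)
    (hI : ∃ x1 x2 : ℝ, x1 < x2 ∧ ∀ x ∈ Set.Ioo x1 x2, f x ≠ phiBS σstar x) :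
    ∀ n : ℕ,
      (∃ K : Fin (n + 1) → ℝ, StrictMono K ∧ 0 < K 0 ∧
        ∀ i : Fin n, (σ (K i.castSucc) - σstar) * (σ (K i.succ) - σstar) < 0) →
      (∃ x : Fin (n + 3) → ℝ, StrictMono x ∧
        ∀ j : Fin (n + 2), (f (x j.castSucc) - phiBS σstar (x j.castSucc)) *
          (f (x j.succ) - phiBS σstar (x j.succ)) < 0) := by
  intro n hK
  -- exponential moment
  have hfe : Integrable (fun x => Real.exp x * f x) := by
    have h1 : IntegrableOn (fun x => (Real.exp x - 1) * f x) (Ioi 0) := by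
      by_contra hcon
      have h := hIV 1 one_pos
      have hp := SmileAux.callBS_pos one_pos (hσ_pos 1 one_pos)
      rw [← h] at hp
      unfold callPrice at hp
      rw [Real.log_one, integral_undef hcon] at hp
      exact lt_irrefl _ hp
    have h2 : IntegrableOn (fun x => Real.exp x * f x) (Ioi 0) := by
      refine (h1.add hf_int.integrableOn).congr (Eventually.of_forall fun x => ?_)
      simp only [Pi.add_apply]
      ring
    have h3 : IntegrableOn (fun x => Real.exp x * f x) (Iic 0) := by
      refine Integrable.mono' (hf_int.integrableOn (s := Iic 0))
        (by fun_prop) ?_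
      filter_upwards [ae_restrict_mem measurableSet_Iic] with x hx
      rw [norm_mul, Real.norm_of_nonneg (Real.exp_pos x).le, Real.norm_of_nonneg (hf_nonneg x)]
      exact mul_le_of_le_one_left (hf_nonneg x) (Real.exp_le_one_iff.2 hx)
    rw [← integrableOn_univ, ← Iic_union_Ioi (a := (0 : ℝ))]
    exact h3.union h2
  have hfe1 : ∫ x, Real.exp x * f x = 1 := by
    refine tendsto_nhds_unique (SmileAux.dd_bot hf_int hfe) ?_
    have e : ∀ k, ∫ x in Ioi k, (Real.exp x - Real.exp k) * f x
        = callBS (Real.exp k) (σ (Real.exp k)) := by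
      intro k
      rw [← hIV _ (Real.exp_pos k)]
      unfold callPrice
      rw [Real.log_exp]
    simp only [e]
    refine tendsto_of_tendsto_of_tendsto_of_le_of_le
      (by simpa using Real.tendsto_exp_atBot.const_sub 1) tendsto_const_nhds
      (fun k => SmileAux.callBS_ge (Real.exp_pos k) (hσ_pos _ (Real.exp_pos k)))
      (fun k => SmileAux.callBS_le_one (Real.exp_pos k) _)
  -- the difference
  set g : ℝ → ℝ := fun x => f x - phiBS σstar x with hg_def
  have hg_cont : Continuous g := hf_cont.sub (SmileAux.phi_cont σstar)
  have hg_int : Integrable g := hf_int.sub (SmileAux.phi_int hσstar)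
  have hsplit : (fun x => Real.exp x * g x) =
      fun x => Real.exp x * f x - Real.exp x * phiBS σstar x := by
    ext x; simp only [hg_def]; ring
  have hge : Integrable (fun x => Real.exp x * g x) := by
    rw [hsplit]; exact hfe.sub (SmileAux.exp_phi_int hσstar)
  have hg0 : ∫ x, g x = 0 := by
    rw [integral_sub hf_int (SmileAux.phi_int hσstar), hf_prob, SmileAux.phi_eq,
      SmileAux.psi_total hσstar, sub_self]
  have hge0 : ∫ x, Real.exp x * g x = 0 := by
    rw [hsplit, integral_sub hfe (SmileAux.exp_phi_int hσstar), hfe1, SmileAux.exp_phi hσstar,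
      SmileAux.psi_total hσstar, sub_self]
  set d : ℝ → ℝ := fun k => ∫ x in Ioi k, (Real.exp x - Real.exp k) * g x with hd_def
  have hd_deriv := SmileAux.dd_deriv hg_int hge hg_cont
  have hd_bot := SmileAux.dd_bot hg_int hge
  rw [hge0] at hd_bot
  have hd_top := SmileAux.dd_top hg_int hge
  have hd_eq : ∀ K, 0 < K → d (Real.log K) = callBS K (σ K) - callBS K σstar := by
    intro K hK
    rw [← hIV K hK, ← SmileAux.call_phi hσstar]
    unfold callPrice
    simp only [hd_def]
    rw [SmileAux.split hg_int hge, SmileAux.split hf_int hfe,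
      SmileAux.split (SmileAux.phi_int hσstar) (SmileAux.exp_phi_int hσstar), Real.exp_log hK,
      hsplit, integral_sub hfe.integrableOn (SmileAux.exp_phi_int hσstar).integrableOn,
      integral_sub hf_int.integrableOn (SmileAux.phi_int hσstar).integrableOn]
    ring
  -- `d` alternates
  have hAlt : SmileAux.Alt d n := by
    rcases Nat.eq_zero_or_pos n with rfl | hn
    · have hne : ∃ k, d k ≠ 0 := by
        by_contra! hcon
        obtain ⟨x1, x2, h12, hx⟩ := hI
        have hG : ∀ k, ∫ x in Ioi k, g x = 0 := by
          intro k
          have h1 := hd_deriv k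
          have h2 : HasDerivAt d 0 k := by
            rw [show d = fun _ => (0 : ℝ) from funext hcon]
            exact hasDerivAt_const k 0
          have h3 := h1.unique h2
          have := Real.exp_pos k
          rcases mul_eq_zero.1 (neg_eq_zero.1 h3) with h | h
          · linarith
          · exact h
        have hgz : ∀ k, g k = 0 := by
          intro k
          have h1 := SmileAux.tail_deriv hg_int hg_cont k
          rw [show (fun k => ∫ x in Ioi k, g x) = fun _ => (0 : ℝ) from funext hG] at h1
          exact neg_eq_zero.1 (h1.unique (hasDerivAt_const k 0))
        exact hx ((x1 + x2) / 2) ⟨by linarith, by linarith⟩ (sub_eq_zero.1 (hgz _))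
      obtain ⟨k, hk⟩ := hne
      refine ⟨fun _ => k, fun i hi => absurd hi (Nat.not_lt_zero _), d k, fun i hi => ?_⟩
      obtain rfl : i = 0 := by omega
      simpa using mul_self_pos.2 hk
    · obtain ⟨K, hmono, hK0, hKs⟩ := hK
      have hKpos : ∀ i, 0 < K i := fun i => hK0.trans_le (hmono.monotone (Fin.zero_le i))
      have hprod : ∀ i : Fin n, d (Real.log (K i.castSucc)) * d (Real.log (K i.succ)) < 0 := by
        intro i
        rw [hd_eq _ (hKpos _), hd_eq _ (hKpos _)]
        have a1 := SmileAux.sign_mul (hKpos i.castSucc) (hσ_pos _ (hKpos i.castSucc)) hσstar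
        have a2 := SmileAux.sign_mul (hKpos i.succ) (hσ_pos _ (hKpos i.succ)) hσstar
        rcases mul_neg_iff.1 (hKs i) with ⟨h1, h2⟩ | ⟨h1, h2⟩
        · exact mul_neg_of_pos_of_neg (a1.1 h1) (a2.2 h2)
        · exact mul_neg_of_neg_of_pos (a1.2 h1) (a2.1 h2)
      let y : ℕ → ℝ := fun i => if h : i < n + 1 then Real.log (K ⟨i, h⟩) else 0
      have hy : ∀ i (h : i < n + 1), y i = Real.log (K ⟨i, h⟩) := fun i h => dif_pos h
      have hyp : ∀ i, i < n → d (y i) * d (y (i + 1)) < 0 := by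
        intro i hi
        rw [hy i (by omega), hy (i + 1) (by omega)]
        exact hprod ⟨i, hi⟩
      refine ⟨y, fun i hi => ?_, d (y 0), fun i => ?_⟩
      · rw [hy i (by omega), hy (i + 1) (by omega)]
        exact Real.log_lt_log (hKpos _) (hmono (by simp [Fin.lt_def]))
      · induction i with
        | zero =>
          intro _
          have h0 : d (y 0) ≠ 0 := fun h => by
            have := hyp 0 hn
            rw [h, zero_mul] at this
            exact lt_irrefl _ this
          simpa using mul_self_pos.2 h0
        | succ i ih =>
          intro hi
          have h1 := ih (by omega)
          have h2 := hyp i (by omega)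
          rw [pow_succ]
          have h3 : d (y 0) * (-1) ^ i * d (y i) * (d (y i) * d (y (i + 1))) < 0 :=
            mul_neg_of_pos_of_neg h1 h2
          have h4 : d (y i) ≠ 0 := fun h => by
            rw [h, zero_mul] at h2
            exact lt_irrefl _ h2
          have h5 : 0 < d (y i) * d (y i) := mul_self_pos.2 h4
          by_contra hcon
          push Not at hcon
          nlinarith
  have hG := (hAlt.deriv hd_deriv hd_bot hd_top).congr_mul (g := fun k => ∫ x in Ioi k, g x)
    Real.exp Real.exp_pos (fun _ => rfl)
  have hGbot := SmileAux.tail_bot hg_int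
  rw [hg0] at hGbot
  have hgA := (hG.deriv (SmileAux.tail_deriv hg_int hg_cont) hGbot
    (SmileAux.tail_top g)).congr_mul (g := g) (fun _ => 1) (fun _ => one_pos)
    (fun _ => by rw [one_mul])
  obtain ⟨x, hx, s, hs⟩ := hgA
  refine ⟨fun j => x j.val, Fin.strictMono_iff_lt_succ.2 fun i => ?_, fun j => ?_⟩
  · exact hx i.val (by omega)
  · have h1 := hs j.val (by omega)
    have h2 := hs (j.val + 1) (by omega)
    change g (x j.val) * g (x (j.val + 1)) < 0
    rw [pow_succ] at h2
    have h3 := mul_pos h1 h2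
    by_contra hcon
    push Not at hcon
    have h4 := mul_nonneg (mul_self_nonneg (s * (-1) ^ j.val)) hcon
    nlinarith
end

section
/- Assume cT < 1. Let σ_0 : (0,∞) → (0,∞) be any continuous function with C_0(K) = C_BS(K, σ_0(K)) for all K > 0, where C_0 is the call-price function of the double gamma density f_0. Then σ_0 is neither W-shaped nor (W+)-shaped: for every σ_* > 0 there do not exist points 0 < K_0 < K_1 < K_2 < K_3 < K_4 with σ_0(K_0) > σ_*, σ_0(K_1) < σ_*, σ_0(K_2) > σ_*, σ_0(K_3) < σ_*, σ_0(K_4) > σ_*. -/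
open MeasureTheory

section General

variable {g : ℝ → ℝ}

lemma callPrice_eq (hg : Integrable g) (heg : Integrable (fun x => Real.exp x * g x)) (K : ℝ) :
    callPrice g K = (∫ x in Set.Ioi (Real.log K), Real.exp x * g x)
      - K * ∫ x in Set.Ioi (Real.log K), g x := by
  unfold callPrice
  rw [← integral_const_mul, ← integral_sub heg.integrableOn (hg.const_mul K).integrableOn]
  congr 1; ext x; ring

lemma Ioi_sub_Ioi_gen (hg : Integrable g) (a b : ℝ) :
    (∫ x in Set.Ioi a, g x) - ∫ x in Set.Ioi b, g x = ∫ x in a..b, g x := by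
  rcases le_total a b with h | h
  · exact intervalIntegral.integral_Ioi_sub_Ioi hg.integrableOn h
  · rw [intervalIntegral.integral_symm, ← intervalIntegral.integral_Ioi_sub_Ioi hg.integrableOn h]
    ring

lemma callPrice_diff (hg : Integrable g) (heg : Integrable (fun x => Real.exp x * g x)) (K L : ℝ) :
    callPrice g L - callPrice g K + (L - K) * (∫ x in Set.Ioi (Real.log K), g x)
      = ∫ x in (Real.log K)..(Real.log L), (L - Real.exp x) * g x := by
  have h1 := Ioi_sub_Ioi_gen hg (Real.log K) (Real.log L)
  have h2 := Ioi_sub_Ioi_gen heg (Real.log K) (Real.log L)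
  have h3 : ∫ x in (Real.log K)..(Real.log L), (L - Real.exp x) * g x
      = L * (∫ x in (Real.log K)..(Real.log L), g x)
        - ∫ x in (Real.log K)..(Real.log L), Real.exp x * g x := by
    rw [← intervalIntegral.integral_const_mul, ← intervalIntegral.integral_sub
      (hg.const_mul L).intervalIntegrable heg.intervalIntegrable]
    congr 1; ext x; ring
  rw [h3, ← h1, ← h2, callPrice_eq hg heg, callPrice_eq hg heg]
  ring

lemma callPrice_diff_bound (hg : Integrable g) (heg : Integrable (fun x => Real.exp x * g x))
    {K L : ℝ} (hK : 0 < K) (hL : 0 < L) :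
    ‖callPrice g L - callPrice g K + (L - K) * (∫ x in Set.Ioi (Real.log K), g x)‖
      ≤ ‖(L - K) * ∫ x in (Real.log K)..(Real.log L), ‖g x‖‖ := by
  rw [callPrice_diff hg heg, intervalIntegral.norm_integral_eq_norm_integral_uIoc, norm_mul,
    intervalIntegral.norm_integral_eq_norm_integral_uIoc (f := fun x => ‖g x‖)]
  have h0 : 0 ≤ ∫ x in Set.uIoc (Real.log K) (Real.log L), ‖g x‖ :=
    integral_nonneg (fun x => norm_nonneg _)
  rw [Real.norm_of_nonneg h0, ← integral_const_mul]
  refine norm_integral_le_of_norm_le (hg.norm.const_mul _).integrableOn ?_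
  refine (ae_restrict_iff' measurableSet_uIoc).2 (Filter.Eventually.of_forall fun x hx => ?_)
  rw [norm_mul]
  refine mul_le_mul_of_nonneg_right ?_ (norm_nonneg _)
  have eK := Real.exp_log hK
  have eL := Real.exp_log hL
  rw [Real.norm_eq_abs, Real.norm_eq_abs]
  rcases Set.mem_uIoc.1 hx with ⟨h1, h2⟩ | ⟨h1, h2⟩
  · have := Real.exp_lt_exp.2 h1
    have := Real.exp_le_exp.2 h2
    rw [abs_of_nonneg, abs_of_nonneg] <;> linarith
  · have := Real.exp_lt_exp.2 h1
    have := Real.exp_le_exp.2 h2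
    rw [abs_of_nonpos, abs_of_nonpos] <;> linarith

lemma callPrice_hasDerivAt (hg : Integrable g) (heg : Integrable (fun x => Real.exp x * g x))
    {K : ℝ} (hK : 0 < K) :
    HasDerivAt (callPrice g) (-∫ x in Set.Ioi (Real.log K), g x) K := by
  rw [hasDerivAt_iff_isLittleO]
  have hN : Filter.Tendsto (fun L => ∫ x in (Real.log K)..(Real.log L), ‖g x‖) (nhds K)
      (nhds 0) := by
    have hc : Continuous (fun b => ∫ x in (Real.log K)..b, ‖g x‖) :=
      intervalIntegral.continuous_primitive (fun a b => hg.norm.intervalIntegrable) _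
    have h1 := (hc.tendsto (Real.log K)).comp (Real.continuousAt_log hK.ne').tendsto
    rw [intervalIntegral.integral_same] at h1
    exact h1
  have h2 : (fun L => (L - K) * ∫ x in (Real.log K)..(Real.log L), ‖g x‖)
      =o[nhds K] (fun L => L - K) := by
    have h3 := (Asymptotics.isBigO_refl (fun L : ℝ => L - K) (nhds K)).mul_isLittleO
      ((Asymptotics.isLittleO_one_iff ℝ).2 hN)
    simpa using h3
  refine Asymptotics.IsBigO.trans_isLittleO ?_ h2
  refine Asymptotics.IsBigO.of_bound 1 ?_
  filter_upwards [Ioi_mem_nhds hK] with L hL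
  rw [one_mul]
  refine le_trans (le_of_eq ?_) (callPrice_diff_bound hg heg hK hL)
  congr 1
  simp only [smul_eq_mul]; ring

lemma tendsto_intIoi_atTop (hg : Integrable g) :
    Filter.Tendsto (fun a => ∫ x in Set.Ioi a, g x) Filter.atTop (nhds 0) := by
  have h1 := intervalIntegral_tendsto_integral_Ioi (0 : ℝ) hg.integrableOn
    (Filter.tendsto_id (α := ℝ) (x := Filter.atTop))
  have h2 := h1.const_sub (∫ x in Set.Ioi (0 : ℝ), g x)
  simp only [sub_self, id] at h2
  refine h2.congr (fun a => ?_)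
  rw [← Ioi_sub_Ioi_gen hg]; ring

lemma tendsto_intIoi_atBot (hg : Integrable g) :
    Filter.Tendsto (fun a => ∫ x in Set.Ioi a, g x) Filter.atBot (nhds (∫ x, g x)) := by
  have h1 := intervalIntegral_tendsto_integral_Iic (0 : ℝ) hg.integrableOn
    (Filter.tendsto_id (α := ℝ) (x := Filter.atBot))
  have h2 := h1.add_const (∫ x in Set.Ioi (0 : ℝ), g x)
  have h3 : (∫ x in Set.Iic (0 : ℝ), g x) + (∫ x in Set.Ioi (0 : ℝ), g x) = ∫ x, g x :=
    intervalIntegral.integral_Iic_add_Ioi hg.integrableOn hg.integrableOn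
  rw [h3] at h2
  refine h2.congr (fun a => ?_)
  simp only [id]
  rw [← Ioi_sub_Ioi_gen hg]; ring

lemma callPrice_tendsto_atTop (hg : Integrable g)
    (heg : Integrable (fun x => Real.exp x * g x)) :
    Filter.Tendsto (callPrice g) Filter.atTop (nhds 0) := by
  have h1 := (tendsto_intIoi_atTop heg.norm).comp Real.tendsto_log_atTop
  refine squeeze_zero_norm' ?_ h1
  filter_upwards [Filter.eventually_gt_atTop (0 : ℝ)] with K hK
  unfold callPrice
  simp only [Function.comp]
  refine norm_integral_le_of_norm_le heg.norm.integrableOn ?_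
  refine (ae_restrict_iff' measurableSet_Ioi).2 (Filter.Eventually.of_forall fun x hx => ?_)
  rw [norm_mul, norm_mul]
  refine mul_le_mul_of_nonneg_right ?_ (norm_nonneg _)
  have := Real.exp_lt_exp.2 (Set.mem_Ioi.1 hx)
  rw [Real.exp_log hK] at this
  rw [Real.norm_of_nonneg, Real.norm_of_nonneg] <;> linarith

lemma callPrice_tendsto_zero (hg : Integrable g)
    (heg : Integrable (fun x => Real.exp x * g x)) (h0 : ∫ x, Real.exp x * g x = 0) :
    Filter.Tendsto (callPrice g) (nhdsWithin 0 (Set.Ioi 0)) (nhds 0) := by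
  have hl : Filter.Tendsto Real.log (nhdsWithin 0 (Set.Ioi 0)) Filter.atBot :=
    Real.tendsto_log_nhdsGT_zero
  have h1 := (tendsto_intIoi_atBot heg).comp hl
  have h2 := (tendsto_intIoi_atBot hg).comp hl
  have h3 : Filter.Tendsto (fun K : ℝ => K) (nhdsWithin 0 (Set.Ioi 0)) (nhds 0) :=
    Filter.Tendsto.mono_left Filter.tendsto_id nhdsWithin_le_nhds
  have h4 := h1.sub (h3.mul h2)
  rw [h0] at h4
  simp only [zero_mul, sub_zero] at h4
  exact h4.congr (fun K => (callPrice_eq hg heg K).symm)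

lemma exists_neg_of_lt (hg : Integrable g) {a b : ℝ} (hab : a < b)
    (h : (∫ x in Set.Ioi a, g x) < ∫ x in Set.Ioi b, g x) :
    ∃ x, a < x ∧ x ≤ b ∧ x ≠ 0 ∧ g x < 0 := by
  by_contra hcon
  push Not at hcon
  have h1 := Ioi_sub_Ioi_gen hg a b
  rw [intervalIntegral.integral_of_le hab.le] at h1
  have : 0 ≤ ∫ x in Set.Ioc a b, g x := by
    refine setIntegral_nonneg_of_ae_restrict ?_
    refine (ae_restrict_iff' measurableSet_Ioc).2 ?_
    filter_upwards [(Set.countable_singleton (0 : ℝ)).ae_notMem volume] with x hx hx2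
    exact hcon x hx2.1 hx2.2 (by simpa using hx)
  linarith

lemma exists_pos_of_lt (hg : Integrable g) {a b : ℝ} (hab : a < b)
    (h : (∫ x in Set.Ioi b, g x) < ∫ x in Set.Ioi a, g x) :
    ∃ x, a < x ∧ x ≤ b ∧ x ≠ 0 ∧ 0 < g x := by
  obtain ⟨x, h1, h2, h3, h4⟩ := exists_neg_of_lt (g := fun x => - g x) hg.neg hab (by
    rw [integral_neg, integral_neg]; linarith)
  exact ⟨x, h1, h2, h3, by linarith⟩

lemma callPrice_mvt (hg : Integrable g)
    (heg : Integrable (fun x => Real.exp x * g x)) {u v : ℝ} (hu : 0 < u) (huv : u < v) :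
    ∃ ξ, u < ξ ∧ ξ < v ∧
      -(∫ x in Set.Ioi (Real.log ξ), g x) * (v - u) = callPrice g v - callPrice g u := by
  obtain ⟨ξ, h1, h2⟩ := exists_hasDerivAt_eq_slope (callPrice g)
    (fun K => -∫ x in Set.Ioi (Real.log K), g x) huv
    (fun K hK => (callPrice_hasDerivAt hg heg (hu.trans_le hK.1)).continuousAt.continuousWithinAt)
    (fun K hK => callPrice_hasDerivAt hg heg (hu.trans hK.1))
  refine ⟨ξ, h1.1, h1.2, ?_⟩
  have : v - u ≠ 0 := by linarith
  rw [h2]; field_simp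

lemma callPrice_mvt_up (hg : Integrable g)
    (heg : Integrable (fun x => Real.exp x * g x)) {u v : ℝ} (hu : 0 < u) (huv : u < v)
    (h : callPrice g u < callPrice g v) :
    ∃ ξ, u < ξ ∧ ξ < v ∧ (∫ x in Set.Ioi (Real.log ξ), g x) < 0 := by
  obtain ⟨ξ, h1, h2, h3⟩ := callPrice_mvt hg heg hu huv
  refine ⟨ξ, h1, h2, ?_⟩
  by_contra hh
  push Not at hh
  have := mul_nonneg hh (sub_pos.2 huv).le
  linarith

lemma callPrice_mvt_down (hg : Integrable g)
    (heg : Integrable (fun x => Real.exp x * g x)) {u v : ℝ} (hu : 0 < u) (huv : u < v)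
    (h : callPrice g v < callPrice g u) :
    ∃ ξ, u < ξ ∧ ξ < v ∧ 0 < (∫ x in Set.Ioi (Real.log ξ), g x) := by
  obtain ⟨ξ, h1, h2, h3⟩ := callPrice_mvt hg heg hu huv
  refine ⟨ξ, h1, h2, ?_⟩
  by_contra hh
  push Not at hh
  have := mul_nonneg (neg_nonneg.2 hh) (sub_pos.2 huv).le
  linarith

/-- If the call price difference has the sign pattern `+,-,+,-,+`, the density difference has
three strictly negative points separated by positive points. -/
lemma pattern_of_callPrice (hg : Integrable g)
    (heg : Integrable (fun x => Real.exp x * g x)) (h0 : ∫ x, Real.exp x * g x = 0)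
    {K0 K1 K2 K3 K4 : ℝ} (hK0 : 0 < K0) (h01 : K0 < K1) (h12 : K1 < K2) (h23 : K2 < K3)
    (h34 : K3 < K4) (p0 : 0 < callPrice g K0) (p1 : callPrice g K1 < 0)
    (p2 : 0 < callPrice g K2) (p3 : callPrice g K3 < 0) (p4 : 0 < callPrice g K4) :
    ∃ x1 x2 x3 x4 x5 : ℝ, x1 < x2 ∧ x2 < x3 ∧ x3 < x4 ∧ x4 < x5 ∧ x3 ≠ 0 ∧
      g x1 < 0 ∧ 0 < g x2 ∧ g x3 < 0 ∧ 0 < g x4 ∧ g x5 < 0 := by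
  obtain ⟨u, hu0, huK, hu⟩ : ∃ u, 0 < u ∧ u < K0 ∧ callPrice g u < callPrice g K0 := by
    have e1 := (callPrice_tendsto_zero hg heg h0).eventually (gt_mem_nhds p0)
    have e2 : ∀ᶠ x in nhdsWithin (0 : ℝ) (Set.Ioi 0), x ∈ Set.Ioo 0 K0 := Ioo_mem_nhdsGT hK0
    obtain ⟨u, h1, h2⟩ := (e1.and e2).exists
    exact ⟨u, h2.1, h2.2, h1⟩
  obtain ⟨v, hKv, hv⟩ : ∃ v, K4 < v ∧ callPrice g v < callPrice g K4 := by
    have e1 := (callPrice_tendsto_atTop hg heg).eventually (gt_mem_nhds p4)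
    obtain ⟨v, h1, h2⟩ := (e1.and (Filter.eventually_gt_atTop K4)).exists
    exact ⟨v, h2, h1⟩
  obtain ⟨a, a1, a2, sa⟩ := callPrice_mvt_up hg heg hu0 huK hu
  obtain ⟨b, b1, b2, sb⟩ := callPrice_mvt_down hg heg (by linarith) h01 (by linarith)
  obtain ⟨c, c1, c2, sc⟩ := callPrice_mvt_up hg heg (by linarith) h12 (by linarith)
  obtain ⟨d, d1, d2, sd⟩ := callPrice_mvt_down hg heg (by linarith) h23 (by linarith)
  obtain ⟨e, e1, e2, se⟩ := callPrice_mvt_up hg heg (by linarith) h34 (by linarith)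
  obtain ⟨f, f1, f2, sf⟩ := callPrice_mvt_down hg heg (by linarith) hKv (by linarith)
  have lab := Real.log_lt_log (by linarith) (show a < b by linarith)
  have lbc := Real.log_lt_log (by linarith) (show b < c by linarith)
  have lcd := Real.log_lt_log (by linarith) (show c < d by linarith)
  have lde := Real.log_lt_log (by linarith) (show d < e by linarith)
  have lef := Real.log_lt_log (by linarith) (show e < f by linarith)
  obtain ⟨x1, q1, r1, -, s1⟩ := exists_neg_of_lt hg lab (by linarith)
  obtain ⟨x2, q2, r2, -, s2⟩ := exists_pos_of_lt hg lbc (by linarith)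
  obtain ⟨x3, q3, r3, n3, s3⟩ := exists_neg_of_lt hg lcd (by linarith)
  obtain ⟨x4, q4, r4, -, s4⟩ := exists_pos_of_lt hg lde (by linarith)
  obtain ⟨x5, q5, r5, -, s5⟩ := exists_neg_of_lt hg lef (by linarith)
  exact ⟨x1, x2, x3, x4, x5, by linarith, by linarith, by linarith, by linarith, n3,
    s1, s2, s3, s4, s5⟩

end General

/-- Log-price density of the Black–Scholes model. -/
noncomputable def bsDens (s x : ℝ) : ℝ :=
  (Real.sqrt (2 * Real.pi))⁻¹ * s⁻¹ * Real.exp (-((x + s ^ 2 / 2) / s) ^ 2 / 2)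

lemma gauss_integrable : Integrable (fun t : ℝ => Real.exp (-t ^ 2 / 2)) := by
  have := integrable_exp_neg_mul_sq (b := 1 / 2) (by norm_num)
  refine this.congr (Filter.Eventually.of_forall fun t => ?_)
  simp only; congr 1; ring

lemma gauss_integral : ∫ t : ℝ, Real.exp (-t ^ 2 / 2) = Real.sqrt (2 * Real.pi) := by
  have := integral_gaussian (1 / 2)
  rw [show Real.pi / (1 / 2) = 2 * Real.pi by ring] at this
  rw [← this]; congr 1; ext t; congr 1; ring

lemma gauss_Ioi {s : ℝ} (hs : 0 < s) (m k : ℝ) :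
    ∫ x in Set.Ioi k, Real.exp (-((x - m) / s) ^ 2 / 2)
      = s * ∫ t in Set.Iic ((m - k) / s), Real.exp (-t ^ 2 / 2) := by
  have h1 := (measurePreserving_sub_right volume m).setIntegral_preimage_emb
    (measurableEmbedding_subRight m) (fun y => Real.exp (-(y / s) ^ 2 / 2)) (Set.Ioi (k - m))
  have h2 : (fun x => x - m) ⁻¹' Set.Ioi (k - m) = Set.Ioi k := by
    ext x; simp
  rw [h2] at h1
  rw [h1]
  have h3 := integral_comp_mul_left_Ioi (fun y => Real.exp (-y ^ 2 / 2)) (k - m)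
    (inv_pos.2 hs)
  rw [inv_inv] at h3
  have h4 := integral_comp_neg_Iic ((m - k) / s) (fun y => Real.exp (-y ^ 2 / 2))
  have h5 : -((m - k) / s) = s⁻¹ * (k - m) := by field_simp; ring
  rw [h5] at h4
  simp only [neg_sq] at h4
  rw [h4, ← smul_eq_mul, ← h3]
  congr 1; ext y; congr 3; field_simp

lemma gauss_shift_integrable {s : ℝ} (hs : 0 < s) (m : ℝ) :
    Integrable (fun x : ℝ => Real.exp (-((x - m) / s) ^ 2 / 2)) :=
  (gauss_integrable.comp_div hs.ne').comp_sub_right m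

lemma gauss_shift_integral {s : ℝ} (hs : 0 < s) (m : ℝ) :
    ∫ x : ℝ, Real.exp (-((x - m) / s) ^ 2 / 2) = s * Real.sqrt (2 * Real.pi) := by
  rw [integral_sub_right_eq_self (fun x : ℝ => Real.exp (-(x / s) ^ 2 / 2)) m,
    Measure.integral_comp_div (fun x : ℝ => Real.exp (-x ^ 2 / 2)) s, gauss_integral,
    abs_of_pos hs, smul_eq_mul]

lemma bsDens_eq (s x : ℝ) : bsDens s x = ((Real.sqrt (2 * Real.pi))⁻¹ * s⁻¹) *
    Real.exp (-((x - (-(s ^ 2 / 2))) / s) ^ 2 / 2) := by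
  unfold bsDens; rw [sub_neg_eq_add]

lemma exp_mul_bsDens {s : ℝ} (hs : 0 < s) (x : ℝ) :
    Real.exp x * bsDens s x = ((Real.sqrt (2 * Real.pi))⁻¹ * s⁻¹) *
    Real.exp (-((x - s ^ 2 / 2) / s) ^ 2 / 2) := by
  unfold bsDens
  rw [mul_left_comm, ← Real.exp_add]
  congr 2; field_simp; ring

lemma bsDens_integrable {s : ℝ} (hs : 0 < s) : Integrable (bsDens s) := by
  rw [show bsDens s = _ from funext (bsDens_eq s)]
  exact (gauss_shift_integrable hs _).const_mul _

lemma exp_bsDens_integrable {s : ℝ} (hs : 0 < s) :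
    Integrable (fun x => Real.exp x * bsDens s x) := by
  simp_rw [exp_mul_bsDens hs]
  exact (gauss_shift_integrable hs _).const_mul _

lemma exp_bsDens_integral {s : ℝ} (hs : 0 < s) : ∫ x, Real.exp x * bsDens s x = 1 := by
  simp_rw [exp_mul_bsDens hs]
  rw [integral_const_mul, gauss_shift_integral hs]
  have : Real.sqrt (2 * Real.pi) ≠ 0 := by positivity
  field_simp

lemma bsDens_pos {s : ℝ} (hs : 0 < s) (x : ℝ) : 0 < bsDens s x := by
  unfold bsDens; positivity

lemma callPrice_bsDens {s : ℝ} (hs : 0 < s) (K : ℝ) :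
    callPrice (bsDens s) K = callBS K s := by
  rw [callPrice_eq (bsDens_integrable hs) (exp_bsDens_integrable hs)]
  simp_rw [exp_mul_bsDens hs, bsDens_eq]
  rw [integral_const_mul, integral_const_mul, gauss_Ioi hs, gauss_Ioi hs]
  unfold callBS stdNormalCDF
  rw [show (s ^ 2 / 2 - Real.log K) / s = -Real.log K / s + s / 2 by field_simp; ring,
    show (-(s ^ 2 / 2) - Real.log K) / s = -Real.log K / s - s / 2 by field_simp; ring]
  field_simp

lemma stdNormalCDF_hasDerivAt (x : ℝ) :
    HasDerivAt stdNormalCDF ((Real.sqrt (2 * Real.pi))⁻¹ * Real.exp (-x ^ 2 / 2)) x := by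
  have hc : Continuous (fun t : ℝ => Real.exp (-t ^ 2 / 2)) := by fun_prop
  have h1 := intervalIntegral.integral_hasDerivAt_right
    (gauss_integrable.intervalIntegrable (a := 0) (b := x))
    (hc.stronglyMeasurableAtFilter _ _) hc.continuousAt
  have h2 := (h1.const_add (∫ t in Set.Iic (0 : ℝ), Real.exp (-t ^ 2 / 2))).const_mul
    (Real.sqrt (2 * Real.pi))⁻¹
  refine h2.congr_of_eventuallyEq (Filter.Eventually.of_forall fun y => ?_)
  unfold stdNormalCDF
  simp only
  rw [← intervalIntegral.integral_Iic_sub_Iic gauss_integrable.integrableOn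
    gauss_integrable.integrableOn]
  ring

lemma callBS_hasDerivAt {K s : ℝ} (hK : 0 < K) (hs : 0 < s) :
    HasDerivAt (callBS K)
      ((Real.sqrt (2 * Real.pi))⁻¹ * Real.exp (-(-Real.log K / s + s / 2) ^ 2 / 2)) s := by
  have i1 : HasDerivAt (fun σ : ℝ => -Real.log K / σ) (Real.log K / s ^ 2) s := by
    have := (hasDerivAt_inv hs.ne').const_mul (-Real.log K)
    refine this.congr_deriv ?_
    ring
  have i2 : HasDerivAt (fun σ : ℝ => σ / 2) (1 / 2) s := (hasDerivAt_id s).div_const 2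
  have j1 := (stdNormalCDF_hasDerivAt (-Real.log K / s + s / 2)).comp s (i1.add i2)
  have j2 := ((stdNormalCDF_hasDerivAt (-Real.log K / s - s / 2)).comp s (i1.sub i2)).const_mul K
  have j3 := j1.sub j2
  have key : K * Real.exp (-(-Real.log K / s - s / 2) ^ 2 / 2)
      = Real.exp (-(-Real.log K / s + s / 2) ^ 2 / 2) := by
    nth_rewrite 1 [← Real.exp_log hK]
    rw [← Real.exp_add]
    congr 1; field_simp; ring
  refine HasDerivAt.congr_deriv (f := callBS K) j3 ?_
  rw [← key]; ring

lemma callBS_strictMono {K : ℝ} (hK : 0 < K) : StrictMonoOn (callBS K) (Set.Ioi 0) := by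
  refine strictMonoOn_of_deriv_pos (convex_Ioi 0)
    (fun s hs => (callBS_hasDerivAt hK hs).continuousAt.continuousWithinAt) (fun s hs => ?_)
  rw [interior_Ioi] at hs
  rw [(callBS_hasDerivAt hK hs).deriv]
  positivity

/-- Auxiliary two-sided gamma-type function. -/
noncomputable def twoGamma (A B p α β x : ℝ) : ℝ :=
  if x < 0 then A * (-x) ^ (p - 1) * Real.exp (α * x)
  else if 0 < x then B * x ^ (p - 1) * Real.exp (-β * x) else 0

lemma exp_mul_twoGamma (A B p α β x : ℝ) :
    Real.exp x * twoGamma A B p α β x = twoGamma A B p (α + 1) (β - 1) x := by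
  unfold twoGamma
  split_ifs
  · rw [mul_left_comm, ← Real.exp_add]; congr 2; ring
  · rw [mul_left_comm, ← Real.exp_add]; congr 2; ring
  · simp

lemma gammaPart_integrableOn {p r : ℝ} (hp : 0 < p) (hr : 0 < r) :
    IntegrableOn (fun x : ℝ => x ^ (p - 1) * Real.exp (-(r * x))) (Set.Ioi 0) := by
  have := integrableOn_rpow_mul_exp_neg_mul_rpow (p := 1) (s := p - 1) (b := r)
    (by linarith) one_pos hr
  simpa [Real.rpow_one] using this

lemma twoGamma_Ioi (A B p α β : ℝ) : Set.EqOn (fun x => B * (x ^ (p - 1) * Real.exp (-(β * x))))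
    (twoGamma A B p α β) (Set.Ioi 0) := by
  intro x hx
  have hx' : 0 < x := hx
  simp only [twoGamma, if_neg hx'.not_gt, if_pos hx', mul_assoc, neg_mul]

lemma twoGamma_Iio (A B p α β : ℝ) :
    Set.EqOn (fun x => A * ((-x) ^ (p - 1) * Real.exp (-(α * (-x)))))
    (twoGamma A B p α β) (Set.Iio 0) := by
  intro x hx
  have hx' : x < 0 := hx
  simp only [twoGamma, if_pos hx', mul_assoc, mul_neg, neg_neg]

lemma twoGamma_intOn_Ioi {A B p α β : ℝ} (hp : 0 < p) (hβ : 0 < β) :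
    IntegrableOn (twoGamma A B p α β) (Set.Ioi 0) :=
  IntegrableOn.congr_fun ((gammaPart_integrableOn hp hβ).const_mul B) (twoGamma_Ioi A B p α β)
    measurableSet_Ioi

lemma twoGamma_intOn_Iio {A B p α β : ℝ} (hp : 0 < p) (hα : 0 < α) :
    IntegrableOn (twoGamma A B p α β) (Set.Iio 0) := by
  have h := (gammaPart_integrableOn hp hα).comp_neg
  rw [Set.neg_Ioi, neg_zero] at h
  exact IntegrableOn.congr_fun (Integrable.const_mul h A) (twoGamma_Iio A B p α β)
    measurableSet_Iio

lemma twoGamma_integrable {A B p α β : ℝ} (hp : 0 < p) (hα : 0 < α) (hβ : 0 < β) :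
    Integrable (twoGamma A B p α β) := by
  have h1 := twoGamma_intOn_Ioi (A := A) (B := B) (α := α) hp hβ
  have h2 := twoGamma_intOn_Iio (A := A) (B := B) (β := β) hp hα
  rw [← integrableOn_univ, ← Set.Iic_union_Ioi (a := (0 : ℝ))]
  exact ((integrableOn_Iic_iff_integrableOn_Iio (by simp)).2 h2).union h1

lemma twoGamma_integral {A B p α β : ℝ} (hp : 0 < p) (hα : 0 < α) (hβ : 0 < β) :
    ∫ x, twoGamma A B p α β x
      = A * ((1 / α) ^ p * Real.Gamma p) + B * ((1 / β) ^ p * Real.Gamma p) := by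
  have h0 := twoGamma_integrable (A := A) (B := B) hp hα hβ
  rw [← intervalIntegral.integral_Iic_add_Ioi (b := 0) h0.integrableOn h0.integrableOn,
    ← setIntegral_congr_fun measurableSet_Ioi (twoGamma_Ioi A B p α β),
    integral_Iic_eq_integral_Iio,
    ← setIntegral_congr_fun measurableSet_Iio (twoGamma_Iio A B p α β),
    ← integral_Iic_eq_integral_Iio, integral_const_mul, integral_const_mul,
    integral_comp_neg_Iic 0 (fun x : ℝ => x ^ (p - 1) * Real.exp (-(α * x))), neg_zero,
    Real.integral_rpow_mul_exp_neg_mul_Ioi hp hα, Real.integral_rpow_mul_exp_neg_mul_Ioi hp hβ]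

lemma doubleGamma_eq_twoGamma (c lam mu T : ℝ) :
    doubleGamma c lam mu T = twoGamma
      ((mixA c lam mu T / (mixA c lam mu T + mixB c lam mu T)) *
        (lamMinus lam mu ^ (c * T) / Real.Gamma (c * T)))
      ((mixB c lam mu T / (mixA c lam mu T + mixB c lam mu T)) *
        (lamPlus lam mu ^ (c * T) / Real.Gamma (c * T)))
      (c * T) (lamMinus lam mu) (lamPlus lam mu) := by
  ext x; rfl

/-- Martingale normalisation of the double gamma density. -/
lemma exp_doubleGamma_integral {c lam mu T : ℝ}
    (hc : 0 < c) (hlam : 0 < lam) (hmu : 0 < mu) (hT : 0 < T) (hmu2lam : mu < 2 * lam) :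
    Integrable (fun x => Real.exp x * doubleGamma c lam mu T x) ∧
    ∫ x, Real.exp x * doubleGamma c lam mu T x = 1 := by
  have hp : 0 < c * T := mul_pos hc hT
  have hm : 0 < lamMinus lam mu := by
    unfold lamMinus
    rw [sub_pos, lt_div_iff₀ hmu]; linarith
  have hP : 0 < lamPlus lam mu := by unfold lamPlus; positivity
  have e1 : lamMinus lam mu + 1 = lamPlus lam mu := by unfold lamMinus lamPlus; ring
  have e2 : lamPlus lam mu - 1 = lamMinus lam mu := by unfold lamMinus lamPlus; ring
  have q1 : 0 < 1 + mu / (2 * lam) := by positivity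
  have q2 : 0 < 1 - mu / (2 * lam) := by
    rw [sub_pos, div_lt_one (by positivity)]; exact hmu2lam
  have eA : mixA c lam mu T = (mu / lam) ^ (c * T) * lamPlus lam mu ^ (c * T) := by
    rw [← Real.mul_rpow (by positivity) hP.le]
    unfold mixA lamPlus; congr 1; field_simp
  have eB : mixB c lam mu T = (mu / lam) ^ (c * T) * lamMinus lam mu ^ (c * T) := by
    rw [← Real.mul_rpow (by positivity) hm.le]
    unfold mixB lamMinus; congr 1; field_simp
  rw [doubleGamma_eq_twoGamma]
  simp_rw [exp_mul_twoGamma, e1, e2]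
  refine ⟨twoGamma_integrable hp hP hm, ?_⟩
  rw [twoGamma_integral hp hP hm, eA, eB, Real.div_rpow zero_le_one hP.le,
    Real.div_rpow zero_le_one hm.le, Real.one_rpow]
  have hG := Real.Gamma_pos_of_pos hp
  have r1 := Real.rpow_pos_of_pos hP (c * T)
  have r2 := Real.rpow_pos_of_pos hm (c * T)
  have r3 := Real.rpow_pos_of_pos (div_pos hmu hlam) (c * T)
  generalize lamPlus lam mu ^ (c * T) = X at *
  generalize lamMinus lam mu ^ (c * T) = Y at *
  generalize (mu / lam) ^ (c * T) = Z at *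
  generalize Real.Gamma (c * T) = W at *
  have : Z * X + Z * Y ≠ 0 := by positivity
  have : X + Y ≠ 0 := by positivity
  field_simp
  try ring

/-- Log-ratio on a half line is convex; hence sublevel sets are intervals. -/
lemma logratio_convex {S : Set ℝ} (hS : ConcaveOn ℝ S Real.log) {p : ℝ} (hp : p < 1)
    (C α s : ℝ) :
    ConvexOn ℝ S (fun x => C + (p - 1) * Real.log x + α * x + ((x + s ^ 2 / 2) / s) ^ 2 / 2) := by
  have h1 : ConvexOn ℝ S (fun x => (p - 1) * Real.log x) := by
    have := hS.neg.smul (show 0 ≤ 1 - p by linarith)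
    refine this.congr (fun x hx => ?_)
    simp only [Pi.smul_apply, Pi.neg_apply, smul_eq_mul]; ring
  have h2 : ConvexOn ℝ Set.univ (fun x : ℝ => ((x + s ^ 2 / 2) / s) ^ 2 / 2) := by
    refine ⟨convex_univ, fun x _ y _ a b ha hb hab => ?_⟩
    simp only [smul_eq_mul]
    have hb' : b = 1 - a := by linarith
    have e : a * (((x + s ^ 2 / 2) / s) ^ 2 / 2) + b * (((y + s ^ 2 / 2) / s) ^ 2 / 2)
      - ((a * x + b * y + s ^ 2 / 2) / s) ^ 2 / 2 = a * b * ((x - y) / s) ^ 2 / 2 := by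
      subst hb'; ring
    have : 0 ≤ a * b * ((x - y) / s) ^ 2 / 2 := by positivity
    linarith
  have h3 : ConvexOn ℝ Set.univ (fun x : ℝ => C + α * x) := by
    refine ⟨convex_univ, fun x _ y _ a b ha hb hab => ?_⟩
    have hb' : b = 1 - a := by linarith
    subst hb'
    simp only [smul_eq_mul]
    apply le_of_eq; ring
  have h4 := (h1.add (h3.subset (Set.subset_univ _) hS.1)).add
    (h2.subset (Set.subset_univ _) hS.1)
  refine h4.congr (fun x hx => ?_)
  simp only [Pi.add_apply]; ring

lemma bsDens_lt_iff {A p α s x : ℝ} (hA : 0 < A) (hs : 0 < s) (hx : x ≠ 0) :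
    A * |x| ^ (p - 1) * Real.exp (α * x) - bsDens s x < 0 ↔
    Real.log (A * (Real.sqrt (2 * Real.pi) * s)) + (p - 1) * Real.log x + α * x
      + ((x + s ^ 2 / 2) / s) ^ 2 / 2 < 0 := by
  have hx' : 0 < |x| := abs_pos.2 hx
  have hr : 0 < Real.sqrt (2 * Real.pi) := by positivity
  have hpos : 0 < A * |x| ^ (p - 1) * Real.exp (α * x) := by positivity
  rw [sub_neg, ← Real.log_lt_log_iff hpos (bsDens_pos hs x)]
  unfold bsDens
  rw [Real.log_mul (by positivity) (by positivity), Real.log_mul (by positivity) (by positivity),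
    Real.log_mul (by positivity) (by positivity), Real.log_mul (by positivity) (by positivity),
    Real.log_exp, Real.log_exp, Real.log_rpow hx', Real.log_abs, Real.log_mul hA.ne'
    (by positivity), Real.log_mul hr.ne' hs.ne', Real.log_inv, Real.log_inv]
  constructor <;> intro h <;> linarith

lemma no_three {S : Set ℝ} (hS : ConcaveOn ℝ S Real.log) (hS0 : ∀ x ∈ S, x ≠ 0) {A p α s : ℝ}
    (hA : 0 < A) (hs : 0 < s) (hp : p < 1) {x y z : ℝ} (hx : x ∈ S) (hy : y ∈ S)
    (hxz : x < z) (hzy : z < y)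
    (gx : A * |x| ^ (p - 1) * Real.exp (α * x) - bsDens s x < 0)
    (gy : A * |y| ^ (p - 1) * Real.exp (α * y) - bsDens s y < 0) :
    A * |z| ^ (p - 1) * Real.exp (α * z) - bsDens s z < 0 := by
  have hz : z ∈ S := hS.1.ordConnected.out hx hy ⟨hxz.le, hzy.le⟩
  rw [bsDens_lt_iff hA hs (hS0 _ hx)] at gx
  rw [bsDens_lt_iff hA hs (hS0 _ hy)] at gy
  rw [bsDens_lt_iff hA hs (hS0 _ hz)]
  have := (logratio_convex hS hp (Real.log (A * (Real.sqrt (2 * Real.pi) * s))) α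
    s).le_max_of_mem_Icc hx hy ⟨hxz.le, hzy.le⟩
  exact this.trans_lt (max_lt gx gy)

/-- **No W-shape for `cT < 1`:** the implied volatility curve of the double gamma model
cannot exhibit the sign pattern `+,−,+,−,+` around any level `σ_* > 0`. -/
theorem doubleGamma_no_W_shape_of_cT_lt_one
    (c lam mu T : ℝ)
    (hc : 0 < c) (hlam : 0 < lam) (hmu : 0 < mu) (hT : 0 < T)
    (hmu2lam : mu < 2 * lam) (hcT : c * T < 1)
    (σ0 : ℝ → ℝ)
    (hσ0_cont : ContinuousOn σ0 (Set.Ioi 0))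
    (hσ0_pos : ∀ K, 0 < K → 0 < σ0 K)
    (hIV : ∀ K, 0 < K → callPrice (doubleGamma c lam mu T) K = callBS K (σ0 K)) :
    ∀ σstar : ℝ, 0 < σstar →
      ¬∃ K0 K1 K2 K3 K4 : ℝ, 0 < K0 ∧ K0 < K1 ∧ K1 < K2 ∧ K2 < K3 ∧ K3 < K4 ∧
        σstar < σ0 K0 ∧ σ0 K1 < σstar ∧ σstar < σ0 K2 ∧ σ0 K3 < σstar ∧
        σstar < σ0 K4 := by
  rintro s hs ⟨K0, K1, K2, K3, K4, k0, k01, k12, k23, k34, v0, v1, v2, v3, v4⟩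
  have hp : 0 < c * T := mul_pos hc hT
  have hm : 0 < lamMinus lam mu := by
    unfold lamMinus
    rw [sub_pos, lt_div_iff₀ hmu]; linarith
  have hP : 0 < lamPlus lam mu := by unfold lamPlus; positivity
  have q2 : 0 < 1 - mu / (2 * lam) := by
    rw [sub_pos, div_lt_one (by positivity)]; exact hmu2lam
  have hmA : 0 < mixA c lam mu T := by unfold mixA; positivity
  have hmB : 0 < mixB c lam mu T := by unfold mixB; positivity
  have hG := Real.Gamma_pos_of_pos hp
  obtain ⟨i1, i2⟩ := exp_doubleGamma_integral hc hlam hmu hT hmu2lam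
  have i0 : Integrable (doubleGamma c lam mu T) := by
    rw [doubleGamma_eq_twoGamma]; exact twoGamma_integrable hp hm hP
  have hg : Integrable (fun x => doubleGamma c lam mu T x - bsDens s x) :=
    i0.sub (bsDens_integrable hs)
  have hegeq : (fun x => Real.exp x * (doubleGamma c lam mu T x - bsDens s x))
      = fun x => Real.exp x * doubleGamma c lam mu T x - Real.exp x * bsDens s x := by
    ext x; ring
  have heg : Integrable (fun x => Real.exp x * (doubleGamma c lam mu T x - bsDens s x)) := by
    rw [hegeq]; exact i1.sub (exp_bsDens_integrable hs)
  have h0 : ∫ x, Real.exp x * (doubleGamma c lam mu T x - bsDens s x) = 0 := by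
    rw [hegeq, integral_sub i1 (exp_bsDens_integrable hs), i2, exp_bsDens_integral hs, sub_self]
  have hD : ∀ K, 0 < K → callPrice (fun x => doubleGamma c lam mu T x - bsDens s x) K
      = callBS K (σ0 K) - callBS K s := by
    intro K hK
    rw [← hIV K hK, ← callPrice_bsDens hs, callPrice_eq hg heg, callPrice_eq i0 i1,
      callPrice_eq (bsDens_integrable hs) (exp_bsDens_integrable hs), hegeq,
      integral_sub i1.integrableOn (exp_bsDens_integrable hs).integrableOn,
      integral_sub i0.integrableOn (bsDens_integrable hs).integrableOn]
    ring
  have hup : ∀ K, 0 < K → s < σ0 K →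
      0 < callPrice (fun x => doubleGamma c lam mu T x - bsDens s x) K := by
    intro K hK h
    rw [hD K hK, sub_pos]
    exact callBS_strictMono hK hs (hσ0_pos K hK) h
  have hdn : ∀ K, 0 < K → σ0 K < s →
      callPrice (fun x => doubleGamma c lam mu T x - bsDens s x) K < 0 := by
    intro K hK h
    rw [hD K hK, sub_neg]
    exact callBS_strictMono hK (hσ0_pos K hK) hs h
  obtain ⟨x1, x2, x3, x4, x5, l12, l23, l34, l45, n3, g1, g2, g3, g4, g5⟩ :=
    pattern_of_callPrice hg heg h0 k0 k01 k12 k23 k34 (hup K0 (by linarith) v0)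
      (hdn K1 (by linarith) v1) (hup K2 (by linarith) v2) (hdn K3 (by linarith) v3)
      (hup K4 (by linarith) v4)
  rw [doubleGamma_eq_twoGamma] at g1 g2 g3 g4 g5
  set A := (mixA c lam mu T / (mixA c lam mu T + mixB c lam mu T)) *
        (lamMinus lam mu ^ (c * T) / Real.Gamma (c * T)) with hAdef
  set B := (mixB c lam mu T / (mixA c lam mu T + mixB c lam mu T)) *
        (lamPlus lam mu ^ (c * T) / Real.Gamma (c * T)) with hBdef
  have hA : 0 < A := by positivity
  have hB : 0 < B := by positivity
  have eneg : ∀ x, x < 0 → twoGamma A B (c * T) (lamMinus lam mu) (lamPlus lam mu) x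
      = A * |x| ^ (c * T - 1) * Real.exp (lamMinus lam mu * x) := by
    intro x hx
    rw [twoGamma, if_pos hx, abs_of_neg hx]
  have epos : ∀ x, 0 < x → twoGamma A B (c * T) (lamMinus lam mu) (lamPlus lam mu) x
      = B * |x| ^ (c * T - 1) * Real.exp (-lamPlus lam mu * x) := by
    intro x hx
    rw [twoGamma, if_neg hx.not_gt, if_pos hx, abs_of_pos hx]
  rcases lt_or_gt_of_ne n3 with h | h
  · have a1 : x1 < 0 := by linarith
    have a2 : x2 < 0 := by linarith
    simp only [eneg _ a1, eneg _ a2, eneg _ h] at g1 g2 g3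
    have := no_three strictConcaveOn_log_Iio.concaveOn (fun x hx => ne_of_lt hx) hA hs hcT
      a1 h l12 l23 g1 g3
    linarith
  · have a4 : 0 < x4 := by linarith
    have a5 : 0 < x5 := by linarith
    simp only [epos _ a4, epos _ a5, epos _ h] at g3 g4 g5
    have := no_three strictConcaveOn_log_Ioi.concaveOn (fun x hx => ne_of_gt hx) hB hs hcT
      h a5 l34 l45 g3 g5
    linarith
end
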